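/- arXiv:1711.00180 — 4 statements merged into one kernel-verified Lean document; each statement's English description precedes it below -/
import Mathlib

section
/- For all positive integers x, y, z, m, n with x > y, 1 ≤ z ≤ x − y and gcd(m, n) = 1, if φ(z·(x^m − y^m)/(x − y)) = z·(x^n − y^n)/(x − y), then z = 1, m = 1 and n = 1. -/
/-!
Write `x = d * a` and `y = d * b` with `a`, `b` coprime, let `G k = (a ^ k - b ^ k) / (a - b)` and
put `N = z * d * G m`. If `m > 1`, then `n < m`, and comparing the powers of `d` in the equation
gives `φ N ∣ z * G n` and `d * a * φ N < N`. The second relation says that `N / φ N` is large.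

If `G n` is odd, then `2 ^ (ω N - 1)`, which divides `φ N`, also divides `z < d * a`, whereas
`N / φ N ≤ ω N + 1`.

Otherwise `a`, `b`, `m` are odd and `n` is even. For a prime `q ∣ m`, let `k` be the number of
primes `p ∣ G m` such that `q` divides the order of `a / b` modulo `p`. They are all `1` modulo
`2 * q`, so they contribute at most `harmonic k / (2 * q)` to `log (N / φ N)`. Since
`q ^ k ∣ φ N ∣ z * G n` and `q ∤ n`, the number `k` is bounded in terms of `d * a`, while
Zsigmondy's theorem gives `2 ^ ω m ≤ 2 * k`. As `w * harmonic k` is at most linear in `k` when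
`2 ^ w ≤ 2 * k`, summing over `q` keeps `log (N / φ N)` below `log (d * a)`.
-/

open Finset Polynomial

section GeometricSum

variable {R : Type*} [CommSemiring R]

/-- The homogeneous geometric sum `∑ x ^ i * y ^ (n - 1 - i)` over `i < n`, which stands for
`(x ^ n - y ^ n) / (x - y)` without dividing. -/
def geomSum₂ (x y : R) (n : ℕ) : R := ∑ i ∈ range n, x ^ i * y ^ (n - 1 - i)

@[simp]
lemma geomSum₂_zero (x y : R) : geomSum₂ x y 0 = 0 := by simp [geomSum₂]

@[simp]
lemma geomSum₂_one (x y : R) : geomSum₂ x y 1 = 1 := by simp [geomSum₂]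

lemma geomSum₂_two (x y : R) : geomSum₂ x y 2 = x + y := by
  simp [geomSum₂, sum_range_succ, add_comm]

lemma geomSum₂_add (x y : R) (m n : ℕ) :
    geomSum₂ x y (m + n) = y ^ n * geomSum₂ x y m + x ^ m * geomSum₂ x y n := by
  simp only [geomSum₂, sum_range_add, mul_sum]
  congr 1
  · refine sum_congr rfl fun i hi ↦ ?_
    rw [show m + n - 1 - i = n + (m - 1 - i) by have := mem_range.mp hi; omega]
    ring
  · refine sum_congr rfl fun i _ ↦ ?_
    rw [show m + n - 1 - (m + i) = n - 1 - i by omega]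
    ring

lemma geomSum₂_mul_exponent (x y : R) (n k : ℕ) :
    geomSum₂ x y (n * k) = geomSum₂ x y n * geomSum₂ (x ^ n) (y ^ n) k := by
  induction k with
  | zero => simp
  | succ k ih =>
    rw [mul_add_one, geomSum₂_add, ih, geomSum₂_add, geomSum₂_one]
    ring

lemma geomSum₂_mul_mul (c x y : R) (n : ℕ) :
    geomSum₂ (c * x) (c * y) n = c ^ (n - 1) * geomSum₂ x y n := by
  simp only [geomSum₂, mul_sum]
  refine sum_congr rfl fun i hi ↦ ?_
  rw [show n - 1 = i + (n - 1 - i) by have := mem_range.mp hi; omega, Nat.add_sub_cancel_left]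
  ring

lemma geomSum₂_mul_sub {S : Type*} [CommRing S] (x y : S) (n : ℕ) :
    geomSum₂ x y n * (x - y) = x ^ n - y ^ n :=
  geom_sum₂_mul x y n

lemma map_geomSum₂ {S : Type*} [CommSemiring S] (f : R →+* S) (x y : R) (n : ℕ) :
    f (geomSum₂ x y n) = geomSum₂ (f x) (f y) n :=
  f.map_geom_sum₂ x y n

end GeometricSum

section NatGeometricSum

variable {x y : ℕ}

lemma natCast_geomSum₂ {S : Type*} [CommSemiring S] (n : ℕ) :
    ((geomSum₂ x y n : ℕ) : S) = geomSum₂ (x : S) (y : S) n :=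
  map_geomSum₂ (Nat.castRingHom S) x y n

lemma geomSum₂_pos (hx : 0 < x) (hy : 0 < y) {n : ℕ} (hn : 0 < n) : 0 < geomSum₂ x y n :=
  sum_pos (fun _ _ ↦ by positivity) (by simpa using hn.ne')

lemma sub_mul_geomSum₂ (hyx : y ≤ x) (n : ℕ) : (x - y) * geomSum₂ x y n = x ^ n - y ^ n := by
  rw [mul_comm]
  exact geom_sum₂_mul_of_ge hyx n

lemma pow_sub_pow_div_sub (hyx : y < x) (n : ℕ) : (x ^ n - y ^ n) / (x - y) = geomSum₂ x y n := by
  rw [← sub_mul_geomSum₂ hyx.le, Nat.mul_div_cancel_left _ (Nat.sub_pos_of_lt hyx)]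

lemma mul_geomSum₂_lt_geomSum₂ (hx : 0 < x) (hy : 0 < y) {m n : ℕ} (hnm : n < m) :
    x * geomSum₂ x y n < geomSum₂ x y m := by
  obtain ⟨k, rfl⟩ := Nat.exists_eq_add_of_lt hnm
  rw [show n + k + 1 = (k + 1) + n by omega, geomSum₂_add]
  have := geomSum₂_pos hx hy k.succ_pos
  have : x * geomSum₂ x y n ≤ x ^ (k + 1) * geomSum₂ x y n := by
    gcongr
    exact Nat.le_self_pow k.succ_ne_zero x
  have : 0 < y ^ n * geomSum₂ x y (k + 1) := by positivity
  omega

lemma natCast_dvd_pow_sub_pow {p n : ℕ} (h : p ∣ geomSum₂ x y n) : (p : ℤ) ∣ x ^ n - y ^ n := by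
  rw [← geomSum₂_mul_sub, ← natCast_geomSum₂]
  exact Dvd.dvd.mul_right (mod_cast h) _

lemma dvd_geomSum₂_iff_of_dvd_sub {p : ℕ} (h : (p : ℤ) ∣ x - y) (n : ℕ) :
    p ∣ geomSum₂ x y n ↔ p ∣ n * x ^ (n - 1) := by
  have := dvd_geom_sum₂_iff_of_dvd_sub' (n := n) h
  rw [← geomSum₂, ← natCast_geomSum₂] at this
  exact_mod_cast this

end NatGeometricSum

section RatioOrder

/-- The multiplicative order of `x / y` modulo `p`, meaningful for `p` prime to `y`. -/
noncomputable def ratioOrder (x y p : ℕ) : ℕ := orderOf ((x : ZMod p) * (y : ZMod p)⁻¹)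

variable {x y p : ℕ}

lemma ratioOrder_dvd_iff (hp : p.Prime) (hy : ¬p ∣ y) (k : ℕ) :
    ratioOrder x y p ∣ k ↔ (p : ℤ) ∣ x ^ k - y ^ k := by
  have := Fact.mk hp
  rw [← ZMod.natCast_eq_zero_iff] at hy
  rw [ratioOrder, orderOf_dvd_iff_pow_eq_one, mul_pow, inv_pow,
    mul_inv_eq_one₀ (pow_ne_zero _ hy), ← sub_eq_zero, ← ZMod.intCast_zmod_eq_zero_iff_dvd]
  push_cast
  rfl

lemma ratioOrder_dvd_sub_one (hp : p.Prime) (hx : ¬p ∣ x) (hy : ¬p ∣ y) :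
    ratioOrder x y p ∣ p - 1 := by
  have := Fact.mk hp
  rw [← ZMod.natCast_eq_zero_iff] at hx hy
  exact orderOf_dvd_of_pow_eq_one
    (ZMod.pow_card_sub_one_eq_one (mul_ne_zero hx (inv_ne_zero hy)))

lemma not_dvd_of_dvd_pow_sub_pow (hp : p.Prime) (hxy : x.Coprime y) {k : ℕ} (hk : k ≠ 0)
    (h : (p : ℤ) ∣ x ^ k - y ^ k) : ¬p ∣ x ∧ ¬p ∣ y := by
  have hiff : p ∣ x ↔ p ∣ y := by
    rw [← hp.prime.dvd_pow_iff_dvd hk, ← hp.prime.dvd_pow_iff_dvd (a := y) hk]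
    exact_mod_cast dvd_iff_dvd_of_dvd_sub h
  have hnot : ¬(p ∣ x ∧ p ∣ y) :=
    fun ⟨hpx, hpy⟩ ↦ Nat.not_coprime_of_dvd_of_dvd hp.one_lt hpx hpy hxy
  tauto

end RatioOrder

section HomogeneousCyclotomic

/-- The homogeneous cyclotomic form `y ^ φ(e) * Φₑ(x / y)`, whose primitive prime divisors are the
primes modulo which `x / y` has order `e`. -/
noncomputable def homogCyclotomic {R : Type*} [CommRing R] (e : ℕ) (x y : R) : R :=
  MvPolynomial.eval ![x, y] ((cyclotomic e R).homogenize e.totient)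

lemma map_homogCyclotomic {R S : Type*} [CommRing R] [CommRing S] (f : R →+* S) (e : ℕ) (x y : R) :
    f (homogCyclotomic e x y) = homogCyclotomic e (f x) (f y) := by
  have hvec : f ∘ ![x, y] = ![f x, f y] := by ext i; fin_cases i <;> rfl
  rw [homogCyclotomic, homogCyclotomic, ← map_cyclotomic e f, homogenize_map,
    MvPolynomial.eval_map, MvPolynomial.eval₂_comp, hvec]

lemma homogCyclotomic_eq_eval_div {K : Type*} [Field K] (e : ℕ) (x : K) {y : K} (hy : y ≠ 0) :
    homogCyclotomic e x y = (cyclotomic e K).eval (x / y) * y ^ e.totient := by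
  simpa [homogCyclotomic] using
    eval_homogenize (p := cyclotomic e K) (natDegree_cyclotomic e K).le ![x, y] hy

lemma sub_pow_totient_lt_homogCyclotomic {e : ℕ} (he : 2 ≤ e) {x y : ℝ} (hy : 0 < y) (hxy : y < x) :
    (x - y) ^ e.totient < homogCyclotomic e x y := by
  have h := sub_one_pow_totient_lt_cyclotomic_eval he ((one_lt_div hy).mpr hxy)
  rw [homogCyclotomic_eq_eval_div e x hy.ne']
  calc (x - y) ^ e.totient = (x / y - 1) ^ e.totient * y ^ e.totient := by
        rw [← mul_pow, sub_mul, div_mul_cancel₀ _ hy.ne', one_mul]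
    _ < _ := by gcongr

lemma pow_sub_pow_mul_homogCyclotomic_dvd {R : Type*} [CommRing R] [IsDomain R] {d e : ℕ}
    (hd : d ∈ e.properDivisors) (x y : R) :
    (x ^ d - y ^ d) * homogCyclotomic e x y ∣ x ^ e - y ^ e := by
  have hX (k : ℕ) : (X ^ k - 1 : R[X]).natDegree = k := by
    simpa using natDegree_X_pow_sub_C (R := R) (n := k) (r := 1)
  have h := homogenize_dvd (X_pow_sub_one_mul_cyclotomic_dvd_X_pow_sub_one_of_dvd R hd)
  have he : 0 < e := by rw [Nat.mem_properDivisors] at hd; omega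
  have hmonic (k : ℕ) (hk : 0 < k) : (X ^ k - 1 : R[X]).Monic := by
    simpa using monic_X_pow_sub_C (1 : R) hk.ne'
  have hform (k : ℕ) : (X ^ k - 1 : R[X]).homogenize k =
      MvPolynomial.X 0 ^ k - MvPolynomial.X 1 ^ k := by
    simp [sub_eq_add_neg, homogenize_X_pow le_rfl]
  rw [natDegree_mul (hmonic d (Nat.pos_of_mem_properDivisors hd)).ne_zero (cyclotomic_ne_zero e R),
    hX, hX, natDegree_cyclotomic,
    homogenize_mul _ _ (hX d).le (natDegree_cyclotomic e R).le, hform, hform] at h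
  simpa [homogCyclotomic] using _root_.map_dvd (MvPolynomial.eval ![x, y]) h

lemma homogCyclotomic_mul_dvd_geomSum₂ {R : Type*} [CommRing R] [IsDomain R] {d k : ℕ}
    (hd : 0 < d) (hk : 1 < k) {x y : R} (hxy : x ^ d ≠ y ^ d) :
    homogCyclotomic (d * k) x y ∣ geomSum₂ (x ^ d) (y ^ d) k := by
  have hdk : d ∈ (d * k).properDivisors :=
    Nat.mem_properDivisors.mpr ⟨dvd_mul_right d k, lt_mul_of_one_lt_right hd hk⟩
  have h := pow_sub_pow_mul_homogCyclotomic_dvd hdk x y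
  rw [pow_mul, pow_mul, ← geomSum₂_mul_sub (x ^ d), mul_comm] at h
  exact (mul_dvd_mul_iff_right (sub_ne_zero.mpr hxy)).mp h

section Integers

variable {x y e p : ℕ}

lemma natCast_dvd_pow_sub_pow_of_dvd_homogCyclotomic (he : 1 < e) {a : ℤ}
    (h : a ∣ homogCyclotomic e (x : ℤ) y) : a ∣ x ^ e - y ^ e :=
  h.trans <| (dvd_mul_left _ _).trans <| pow_sub_pow_mul_homogCyclotomic_dvd
    (Nat.one_mem_properDivisors_iff_one_lt.mpr he) _ _

lemma ratioOrder_eq_of_dvd_homogCyclotomic (hp : p.Prime) (hpe : ¬p ∣ e) (hy : ¬p ∣ y)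
    (h : (p : ℤ) ∣ homogCyclotomic e (x : ℤ) y) : ratioOrder x y p = e := by
  have := Fact.mk hp
  have : NeZero (e : ZMod p) := ⟨by rwa [Ne, ZMod.natCast_eq_zero_iff]⟩
  rw [← ZMod.natCast_eq_zero_iff] at hy
  have hroot : (cyclotomic e (ZMod p)).eval (x / y : ZMod p) = 0 := by
    rw [← ZMod.intCast_zmod_eq_zero_iff_dvd, ← eq_intCast (Int.castRingHom (ZMod p)),
      map_homogCyclotomic] at h
    simpa [homogCyclotomic_eq_eval_div, hy] using h
  exact (isRoot_cyclotomic_iff.mp hroot).eq_orderOf.symm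

lemma not_sq_dvd_homogCyclotomic (hp : p.Prime) (hp2 : Odd p) (hpe : p ∣ e) (he : 0 < e)
    (hxy : x ≠ y) (hpx : ¬p ∣ x) : ¬(p : ℤ) ^ 2 ∣ homogCyclotomic e (x : ℤ) y := by
  have := Fact.mk hp
  have hp' := Nat.prime_iff_prime_int.mp hp
  obtain ⟨d, rfl⟩ := hpe
  rw [mul_comm]
  have hd : 0 < d := Nat.pos_of_mul_pos_left he
  intro hsq
  have hfrob : (p : ℤ) ∣ (x : ℤ) ^ d - y ^ d := by
    have h := natCast_dvd_pow_sub_pow_of_dvd_homogCyclotomic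
      (hp.one_lt.trans_le (Nat.le_mul_of_pos_left p hd)) ((dvd_pow_self _ two_ne_zero).trans hsq)
    rw [← ZMod.intCast_zmod_eq_zero_iff_dvd] at h ⊢
    simpa [pow_mul] using h
  have hne : (x : ℤ) ^ d ≠ y ^ d := by
    exact_mod_cast (Nat.pow_left_injective hd.ne').ne hxy
  have hmul := emultiplicity_geom_sum₂_eq_one hp' hp2 hfrob
    (by rw [hp'.dvd_pow_iff_dvd hd.ne']; exact_mod_cast hpx)
  have := le_emultiplicity_of_pow_dvd
    (hsq.trans (homogCyclotomic_mul_dvd_geomSum₂ hd hp.one_lt hne))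
  rw [geomSum₂, hmul] at this
  exact absurd this (by decide)

lemma lt_two_pow_totient (he : Odd e) (h1 : 1 < e) : e < 2 ^ e.totient := by
  have hdvd : e ∣ 2 ^ e.totient - 1 :=
    (Nat.modEq_iff_dvd' Nat.one_le_two_pow).mp
      (Nat.ModEq.pow_totient (Nat.coprime_two_left.mpr he)).symm
  have hlt : 1 < 2 ^ e.totient := Nat.one_lt_two_pow (by simp; omega)
  have := Nat.le_of_dvd (by omega) hdvd
  omega

lemma lt_homogCyclotomic (he : Odd e) (h1 : 1 < e) (hy : 0 < y) (hxy : y + 2 ≤ x) :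
    (e : ℤ) < homogCyclotomic e (x : ℤ) y := by
  have hreal := sub_pow_totient_lt_homogCyclotomic (x := x) (y := y) h1 (mod_cast hy)
    (mod_cast (by omega))
  have hcast : homogCyclotomic e (x : ℝ) y = (homogCyclotomic e (x : ℤ) y : ℤ) := by
    simpa using (map_homogCyclotomic (Int.castRingHom ℝ) e (x : ℤ) y).symm
  rw [hcast] at hreal
  calc (e : ℤ) < 2 ^ e.totient := mod_cast lt_two_pow_totient he h1
    _ ≤ (x - y) ^ e.totient := by gcongr; omega
    _ < _ := mod_cast hreal

theorem exists_prime_ratioOrder_eq (he : Odd e) (h1 : 1 < e) (hy : 0 < y) (hxy : y + 2 ≤ x)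
    (hco : x.Coprime y) : ∃ p, p.Prime ∧ ¬p ∣ x ∧ ¬p ∣ y ∧ ratioOrder x y p = e := by
  by_contra! hnone
  obtain ⟨H, hH⟩ := Int.eq_ofNat_of_zero_le
    ((Nat.cast_nonneg e).trans (lt_homogCyclotomic he h1 hy hxy).le)
  have hlt : e < H := by exact_mod_cast hH ▸ lt_homogCyclotomic he h1 hy hxy
  have hnot_dvd (p : ℕ) (hp : p.Prime) (hpH : p ∣ H) : ¬p ∣ x ∧ ¬p ∣ y :=
    not_dvd_of_dvd_pow_sub_pow hp hco (by omega)
      (natCast_dvd_pow_sub_pow_of_dvd_homogCyclotomic h1 (hH ▸ mod_cast hpH))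
  have hdvd_e (p : ℕ) (hp : p.Prime) (hpH : p ∣ H) : p ∣ e := by
    obtain ⟨hpx, hpy⟩ := hnot_dvd p hp hpH
    by_contra hpe
    exact hnone p hp hpx hpy
      (ratioOrder_eq_of_dvd_homogCyclotomic hp hpe hpy (hH ▸ mod_cast hpH))
  have hsqf : Squarefree H := by
    refine Nat.squarefree_iff_prime_squarefree.mpr fun p hp hpp ↦ ?_
    have hpH := dvd_of_mul_left_dvd hpp
    refine not_sq_dvd_homogCyclotomic (x := x) (y := y) hp (he.of_dvd_nat (hdvd_e p hp hpH))
      (hdvd_e p hp hpH) (by omega) (by omega) (hnot_dvd p hp hpH).1 ?_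
    rw [hH, sq]
    exact_mod_cast hpp
  have hHe : H ∣ e := by
    rw [← Nat.prod_primeFactors_of_squarefree hsqf]
    refine (prod_dvd_prod_of_subset _ _ _ fun p hp ↦ ?_).trans (Nat.prod_primeFactors_dvd e)
    obtain ⟨hp, hpH, -⟩ := Nat.mem_primeFactors.mp hp
    exact Nat.mem_primeFactors.mpr ⟨hp, hdvd_e p hp hpH, by omega⟩
  exact hlt.not_ge (Nat.le_of_dvd (by omega) hHe)

end Integers

end HomogeneousCyclotomic

section SumOverNaturals

lemma sum_le_sum_range_card {f : ℕ → ℝ} {a : ℕ} (hf : AntitoneOn f (Set.Ici a)) (U : Finset ℕ)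
    (hU : ∀ u ∈ U, a ≤ u) : ∑ u ∈ U, f u ≤ ∑ i ∈ range #U, f (a + i) := by
  induction U using Finset.induction_on_max with
  | empty => simp
  | insert u s hs ih =>
    have hus : u ∉ s := fun h ↦ lt_irrefl _ (hs u h)
    have hcard : a + #s ≤ u := by
      have := card_le_card fun v hv ↦ mem_Ico.mpr ⟨hU v (mem_insert_of_mem hv), hs v hv⟩
      have := hU u (mem_insert_self _ _)
      rw [Nat.card_Ico] at *
      omega
    rw [sum_insert hus, card_insert_of_notMem hus, sum_range_succ, add_comm]
    exact add_le_add (ih fun v hv ↦ hU v (mem_insert_of_mem hv))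
      (hf (Nat.le_add_right a _) ((Nat.le_add_right a _).trans hcard) hcard)

lemma sum_inv_le_harmonic_card (U : Finset ℕ) (hU : ∀ u ∈ U, 1 ≤ u) :
    ∑ u ∈ U, (u : ℝ)⁻¹ ≤ harmonic #U := by
  refine (sum_le_sum_range_card (a := 1) ?_ U hU).trans_eq ?_
  · intro u hu v _ huv
    exact inv_anti₀ (mod_cast hu) (mod_cast huv)
  · simp [harmonic, add_comm]

lemma sum_inv_sub_one_le_harmonic_card_div {T : Finset ℕ} {r : ℕ}
    (hT : ∀ p ∈ T, 1 < p ∧ r ∣ p - 1) :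
    ∑ p ∈ T, ((p : ℝ) - 1)⁻¹ ≤ harmonic #T / r := by
  have hquot (p : ℕ) (hp : p ∈ T) : r * ((p - 1) / r) = p - 1 := Nat.mul_div_cancel' (hT p hp).2
  have hinj : Set.InjOn (fun p ↦ (p - 1) / r) T := by
    intro p hp p' hp' h
    have h1 := hquot p hp
    have h2 := hquot p' hp'
    have := (hT p hp).1
    have := (hT p' hp').1
    simp only at h
    rw [h] at h1
    omega
  have hpos : ∀ u ∈ T.image fun p ↦ (p - 1) / r, 1 ≤ u := by
    refine forall_mem_image.mpr fun p hp ↦ Nat.pos_of_ne_zero fun h ↦ ?_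
    have h1 := hquot p hp
    have := (hT p hp).1
    rw [h] at h1
    omega
  have h := sum_inv_le_harmonic_card _ hpos
  rw [sum_image hinj, card_image_of_injOn hinj] at h
  calc ∑ p ∈ T, ((p : ℝ) - 1)⁻¹ = (∑ p ∈ T, (((p - 1) / r : ℕ) : ℝ)⁻¹) / r := by
        rw [sum_div]
        refine sum_congr rfl fun p hp ↦ ?_
        rw [← Nat.cast_pred (zero_lt_one.trans (hT p hp).1), ← hquot p hp]
        push_cast
        rw [mul_inv, mul_comm, div_eq_mul_inv, hquot p hp]
    _ ≤ _ := by gcongr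

end SumOverNaturals

section Totient

lemma pow_card_dvd_totient {n q : ℕ} {S : Finset ℕ} (hS : S ⊆ n.primeFactors)
    (hq : ∀ p ∈ S, q ∣ p - 1) : q ^ #S ∣ n.totient := by
  calc q ^ #S = ∏ _p ∈ S, q := by simp
    _ ∣ ∏ p ∈ S, (p - 1) := prod_dvd_prod_of_dvd _ _ hq
    _ ∣ ∏ p ∈ n.primeFactors, (p - 1) := prod_dvd_prod_of_subset _ _ _ hS
    _ ∣ n.totient := by
      rw [Nat.totient_eq_div_primeFactors_mul]
      exact dvd_mul_left _ _

lemma totient_mul_of_dvd {c n : ℕ} (h : c ∣ n) (hn : 0 < n) :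
    (c * n).totient = c * n.totient := by
  have hc := Nat.totient_gcd_mul_totient_mul c n
  rw [Nat.gcd_eq_left h] at hc
  refine Nat.eq_of_mul_eq_mul_left (Nat.totient_pos.mpr (Nat.pos_of_dvd_of_pos h hn)) (hc.trans ?_)
  ring

lemma log_div_totient {n : ℕ} (hn : n ≠ 0) :
    Real.log (n / n.totient) = ∑ p ∈ n.primeFactors, Real.log (p / (p - 1)) := by
  have hp1 (p : ℕ) (hp : p ∈ n.primeFactors) : (p : ℝ) / (p - 1) = (1 - (p : ℝ)⁻¹)⁻¹ := by
    have := (Nat.prime_of_mem_primeFactors hp).pos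
    field_simp
  have htot : (n.totient : ℝ) = n * ∏ p ∈ n.primeFactors, (1 - (p : ℝ)⁻¹) := by
    have h := congrArg ((↑) : ℚ → ℝ) (Nat.totient_eq_mul_prod_factors n)
    push_cast at h
    exact h
  rw [← Real.log_prod, prod_congr rfl hp1, prod_inv_distrib, htot]
  · congr 1
    have : (n : ℝ) ≠ 0 := mod_cast hn
    field_simp
  · intro p hp
    have : (1 : ℝ) < p := mod_cast (Nat.prime_of_mem_primeFactors hp).one_lt
    have : (p : ℝ) - 1 > 0 := by linarith
    positivity

lemma log_div_sub_one_nonneg {p : ℝ} (hp : 1 < p) : 0 ≤ Real.log (p / (p - 1)) :=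
  Real.log_nonneg ((one_le_div (by linarith)).mpr (by linarith))

lemma log_div_sub_one_le {p : ℝ} (hp : 1 < p) : Real.log (p / (p - 1)) ≤ (p - 1)⁻¹ := by
  have hp' : 0 < p - 1 := by linarith
  refine (Real.log_le_sub_one_of_pos (by positivity)).trans_eq ?_
  field_simp
  ring

lemma le_card_primeFactors_add_one_mul_totient (n : ℕ) :
    n ≤ (#n.primeFactors + 1) * n.totient := by
  rcases eq_or_ne n 0 with rfl | hn
  · simp
  have hanti : AntitoneOn (fun p : ℕ ↦ Real.log (p / (p - 1))) (Set.Ici 2) := by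
    intro p hp p' _ hpp'
    have hp1 : (1 : ℝ) < p := mod_cast hp
    have hle : (p : ℝ) ≤ p' := mod_cast hpp'
    refine Real.log_le_log (div_pos (by linarith) (by linarith)) ?_
    rw [div_le_div_iff₀ (by linarith) (by linarith)]
    linarith
  have hlog : Real.log (n / n.totient) ≤ Real.log (#n.primeFactors + 1) := by
    rw [log_div_totient hn]
    refine (sum_le_sum_range_card hanti _
      fun p hp ↦ (Nat.prime_of_mem_primeFactors hp).two_le).trans_eq ?_
    have hterm (i : ℕ) : Real.log ((2 + i : ℕ) / ((2 + i : ℕ) - 1)) =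
        Real.log ((i + 1 : ℕ) + 1) - Real.log (i + 1) := by
      rw [← Real.log_div (by positivity) (by positivity)]
      push_cast
      ring_nf
    simp only [hterm]
    rw [sum_range_sub fun i : ℕ ↦ Real.log (i + 1)]
    simp
  have : 0 < (n.totient : ℝ) := mod_cast Nat.totient_pos.mpr (Nat.pos_of_ne_zero hn)
  have := (Real.log_le_log_iff (by positivity) (by positivity)).mp hlog
  rw [div_le_iff₀ ‹_›] at this
  exact_mod_cast this

lemma five_mul_log_div_sub_one_le_log {p : ℝ} (hp : 5 ≤ p) :
    5 * Real.log (p / (p - 1)) ≤ Real.log p := by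
  have hp1 : 0 < p - 1 := by linarith
  have hratio : p / (p - 1) ≤ 5 / 4 := by rw [div_le_div_iff₀ hp1 (by norm_num)]; linarith
  calc 5 * Real.log (p / (p - 1)) = Real.log ((p / (p - 1)) ^ 5) := by simp
    _ ≤ Real.log ((5 / 4) ^ 5) := by gcongr
    _ ≤ Real.log p := Real.log_le_log (by norm_num) (by linarith)

lemma sum_primeFactors_log_le {n : ℕ} (hn : n ≠ 0) :
    ∑ p ∈ n.primeFactors, Real.log p ≤ Real.log n := by
  have hpos : 0 < ∏ p ∈ n.primeFactors, p :=
    prod_pos fun p hp ↦ (Nat.prime_of_mem_primeFactors hp).pos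
  rw [← Real.log_prod fun p hp ↦ mod_cast (Nat.prime_of_mem_primeFactors hp).ne_zero,
    ← Nat.cast_prod]
  exact Real.log_le_log (mod_cast hpos)
    (mod_cast Nat.le_of_dvd (Nat.pos_of_ne_zero hn) (Nat.prod_primeFactors_dvd n))

-- `81 / 2` collects the only two primes, `2` and `3`, for which `5 * log (p / (p - 1)) > log p`.
lemma five_mul_log_div_totient_le {n : ℕ} (hn : n ≠ 0) :
    5 * Real.log (n / n.totient) ≤ Real.log (81 / 2 * n) := by
  set g : ℕ → ℝ := fun p ↦ 5 * Real.log (p / (p - 1)) - Real.log p with hg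
  have h2 : g 2 = Real.log 16 := by
    rw [hg, show (16 : ℝ) = 2 ^ 5 / 2 by norm_num, Real.log_div (by norm_num) (by norm_num),
      Real.log_pow]
    norm_num
  have h3 : g 3 = Real.log (81 / 32) := by
    rw [hg, show (81 / 32 : ℝ) = (3 / 2) ^ 5 / 3 by norm_num,
      Real.log_div (by norm_num) (by norm_num),
      Real.log_pow]
    norm_num
  have hsmall : ∑ p ∈ n.primeFactors with p < 5, g p ≤ Real.log (81 / 2) := by
    have hsub : n.primeFactors.filter (· < 5) ⊆ {2, 3} := by
      intro p hp
      obtain ⟨hp, hp5⟩ := mem_filter.mp hp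
      have := Nat.prime_of_mem_primeFactors hp
      interval_cases p <;> revert this <;> decide
    refine (sum_le_sum_of_subset_of_nonneg hsub ?_).trans_eq ?_
    · rintro p hp -
      obtain rfl | rfl : p = 2 ∨ p = 3 := by simpa using hp
      · exact h2 ▸ Real.log_nonneg (by norm_num)
      · exact h3 ▸ Real.log_nonneg (by norm_num)
    · rw [sum_pair (by norm_num), h2, h3, ← Real.log_mul (by norm_num) (by norm_num)]
      norm_num
  have hlarge : ∑ p ∈ n.primeFactors with ¬p < 5, g p ≤ 0 := by
    refine sum_nonpos fun p hp ↦ sub_nonpos.mpr (five_mul_log_div_sub_one_le_log ?_)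
    exact_mod_cast not_lt.mp (mem_filter.mp hp).2
  have hsplit : 5 * Real.log (n / n.totient) =
      ∑ p ∈ n.primeFactors, g p + ∑ p ∈ n.primeFactors, Real.log p := by
    rw [log_div_totient hn, mul_sum, ← sum_add_distrib]
    simp [hg]
  rw [Real.log_mul (by norm_num) (mod_cast hn), hsplit,
    ← sum_filter_add_sum_filter_not n.primeFactors (· < 5)]
  linarith [sum_primeFactors_log_le hn]

end Totient

section Harmonic

lemma harmonic_le_harmonic_add {n m : ℕ} (hnm : n ≤ m) :
    harmonic m ≤ harmonic n + (m - n) / (n + 1) := by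
  induction m, hnm using Nat.le_induction with
  | base => simp
  | succ m hnm ih =>
    have hinv : ((m + 1 : ℕ) : ℚ)⁻¹ ≤ (n + 1 : ℚ)⁻¹ := by
      refine inv_anti₀ (by positivity) ?_
      exact_mod_cast Nat.succ_le_succ hnm
    rw [harmonic_succ]
    calc harmonic m + ((m + 1 : ℕ) : ℚ)⁻¹ ≤ harmonic n + (m - n) / (n + 1) + (n + 1 : ℚ)⁻¹ :=
          add_le_add ih hinv
      _ = _ := by push_cast; ring

lemma harmonic_two_pow_le {j : ℕ} (hj : 3 ≤ j) : harmonic (2 ^ j) ≤ j := by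
  induction j, hj using Nat.le_induction with
  | base => norm_num [harmonic, sum_range_succ]
  | succ j _ ih =>
    have hdouble := harmonic_le_harmonic_add (Nat.pow_le_pow_right two_pos j.le_succ)
    have hle : ((2 ^ (j + 1) : ℕ) - (2 ^ j : ℕ) : ℚ) / ((2 ^ j : ℕ) + 1) ≤ 1 := by
      rw [div_le_one (by positivity)]
      push_cast
      rw [pow_succ]
      linarith
    push_cast
    linarith

lemma succ_mul_harmonic_two_pow_le {j : ℕ} (hj : 1 ≤ j) :
    (j + 1) * harmonic (2 ^ j) ≤ (6 * 2 ^ j + 1) / 4 := by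
  obtain rfl | rfl | hj3 : j = 1 ∨ j = 2 ∨ 3 ≤ j := by omega
  · norm_num [harmonic, sum_range_succ]
  · norm_num [harmonic, sum_range_succ]
  · have hexp : 4 * (j * (j + 1)) ≤ 6 * 2 ^ j := by
      induction j, hj3 using Nat.le_induction with
      | base => norm_num
      | succ j hj3 ih => rw [pow_succ]; nlinarith [ih (by omega)]
    have hexp' : (4 : ℚ) * (j * (j + 1)) ≤ 6 * 2 ^ j := mod_cast hexp
    calc (j + 1) * harmonic (2 ^ j) ≤ (j + 1) * j := by gcongr; exact harmonic_two_pow_le hj3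
      _ ≤ _ := by linarith

lemma mul_harmonic_le {k w : ℕ} (hk : 2 ≤ k) (hw : 2 ^ w ≤ 2 * k) :
    w * harmonic k ≤ (6 * k + 1) / 4 := by
  set j := Nat.log 2 k
  have hjk : 2 ^ j ≤ k := Nat.pow_log_le_self 2 (by omega)
  have hj : 1 ≤ j := Nat.log_pos one_lt_two hk
  have hwj : w ≤ j + 1 := by
    have hkj : k < 2 ^ (j + 1) := Nat.lt_pow_succ_log_self one_lt_two k
    have : 2 ^ w < 2 ^ (j + 2) := by rw [pow_succ]; omega
    have := (Nat.pow_lt_pow_iff_right one_lt_two).mp this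
    omega
  have hpow : (j + 1 : ℚ) ≤ 2 ^ j + 1 := mod_cast Nat.succ_le_succ Nat.lt_two_pow_self.le
  have hstep : (j + 1) * ((k - 2 ^ j) / (2 ^ j + 1)) ≤ (k - 2 ^ j : ℚ) := by
    have : (0 : ℚ) ≤ k - 2 ^ j := sub_nonneg.mpr (mod_cast hjk)
    rw [mul_div_assoc', div_le_iff₀ (by positivity), mul_comm]
    gcongr
  calc w * harmonic k ≤ (j + 1) * (harmonic (2 ^ j) + (k - 2 ^ j) / (2 ^ j + 1)) := by
        have := harmonic_pos (n := k) (by omega)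
        gcongr
        · exact_mod_cast hwj
        · exact_mod_cast harmonic_le_harmonic_add hjk
    _ ≤ (6 * 2 ^ j + 1) / 4 + (k - 2 ^ j) := by
        rw [mul_add]
        exact add_le_add (succ_mul_harmonic_two_pow_le hj) hstep
    _ ≤ (6 * k + 1) / 4 := by
        have : (2 ^ j : ℚ) ≤ k := mod_cast hjk
        linarith

end Harmonic

section NumericalBound

lemma mul_log_le_mul_log {a b i j : ℕ} (ha : 0 < a) (h : a ^ i ≤ b ^ j) :
    i * Real.log a ≤ j * Real.log b := by
  rw [← Real.log_pow, ← Real.log_pow]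
  exact Real.log_le_log (by positivity) (mod_cast h)

variable {X q k w : ℕ}

lemma cast_mul_cast_harmonic_le (hk : 2 ≤ k) (hw : 2 ^ w ≤ 2 * k) :
    w * (harmonic k : ℝ) ≤ (6 * k + 1) / 4 := by
  simpa only [Rat.cast_mul, Rat.cast_natCast, Rat.cast_div, Rat.cast_add, Rat.cast_ofNat,
    Rat.cast_one] using (Rat.cast_le (K := ℝ)).mpr (mul_harmonic_le hk hw)

lemma log_two_add_mul_log_le (hq : Odd q) (h : 2 * q ^ k ≤ X ^ ((q + 1) / 2)) :
    Real.log 2 + k * Real.log q ≤ (q + 1) / 2 * Real.log X := by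
  have hq0 : (0 : ℝ) < q := mod_cast hq.pos
  have hexp : (q + 1 : ℝ) / 2 = ((q + 1) / 2 : ℕ) := by
    rw [Nat.cast_div hq.add_one.two_dvd two_ne_zero]
    push_cast
    rfl
  rw [hexp, ← Real.log_pow, ← Real.log_pow, ← Real.log_mul two_ne_zero (by positivity)]
  exact Real.log_le_log (by positivity) (mod_cast h)

lemma six_mul_add_one_div_four_le_of_three (hk : 4 ≤ k)
    (h : Real.log 2 + k * Real.log 3 ≤ 2 * Real.log X) :
    (6 * k + 1 : ℝ) / 4 ≤ 2 * 3 * ((3 * Real.log X - 2 * Real.log 3) / 5) := by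
  have h2 := Real.log_two_gt_d9
  have h3 := mul_log_le_mul_log (a := 2) (b := 3) (i := 19) (j := 12) (by norm_num) (by norm_num)
  have hk' : (4 : ℝ) ≤ k := mod_cast hk
  norm_num at h3
  nlinarith

lemma six_mul_add_one_div_four_le_of_five_le (hq : q.Prime) (hq5 : 5 ≤ q) (hk : 2 ≤ k) (hX : 3 ≤ X)
    (h : Real.log 2 + k * Real.log q ≤ (q + 1) / 2 * Real.log X) :
    (6 * k + 1 : ℝ) / 4 ≤ 2 * q * ((3 * Real.log X - 2 * Real.log 3) / 5) := by
  have h2 := Real.log_two_gt_d9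
  have h2' := Real.log_two_lt_d9
  have h3 := mul_log_le_mul_log (a := 2) (b := 3) (i := 19) (j := 12) (by norm_num) (by norm_num)
  have h3' := mul_log_le_mul_log (a := 3) (b := 2) (i := 17) (j := 27) (by norm_num) (by norm_num)
  have h5 := mul_log_le_mul_log (a := 2) (b := 5) (i := 23) (j := 10) (by norm_num) (by norm_num)
  have h7 := mul_log_le_mul_log (a := 2) (b := 7) (i := 14) (j := 5) (by norm_num) (by norm_num)
  have h11 := mul_log_le_mul_log (a := 2) (b := 11) (i := 17) (j := 5) (by norm_num) (by norm_num)
  norm_num at h3 h3' h5 h7 h11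
  have hk' : (2 : ℝ) ≤ k := mod_cast hk
  obtain rfl | rfl | hq11 : q = 5 ∨ q = 7 ∨ 11 ≤ q := by
    by_contra hq'
    push Not at hq'
    obtain ⟨h5, h7, h11⟩ := hq'
    interval_cases q <;> contradiction
  · push_cast at *
    nlinarith
  · push_cast at *
    nlinarith
  · have hq' : (11 : ℝ) ≤ q := mod_cast hq11
    have hL : Real.log 3 ≤ Real.log X := Real.log_le_log (by norm_num) (mod_cast hX)
    have hlogq : (9 / 4 : ℝ) ≤ Real.log q := by
      linarith [Real.log_le_log (by norm_num) hq']
    have hkL : (k : ℝ) ≤ 8 / 33 * (q * Real.log X) := by nlinarith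
    have hqL : q * Real.log 3 ≤ q * Real.log X := by gcongr
    nlinarith

lemma mul_harmonic_le_of_three (hX : 3 ≤ X) (hk : 2 ≤ k) (hw : 2 ^ w ≤ 2 * k)
    (h : 2 * 3 ^ k ≤ X ^ 2) :
    w * (harmonic k : ℝ) ≤ 2 * 3 * ((3 * Real.log X - 2 * Real.log 3) / 5) := by
  have hsize : Real.log 2 + k * Real.log 3 ≤ 2 * Real.log X := by
    have := log_two_add_mul_log_le (q := 3) (by decide) h
    norm_num at this
    exact this
  have h2 := Real.log_two_gt_d9
  have h3 := mul_log_le_mul_log (a := 2) (b := 3) (i := 19) (j := 12) (by norm_num) (by norm_num)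
  norm_num at h3
  obtain hk4 | hk4 := le_or_gt 4 k
  · have := six_mul_add_one_div_four_le_of_three hk4 hsize
    linarith [cast_mul_cast_harmonic_le hk hw]
  have hw2 : (w : ℝ) ≤ 2 := by
    have : 2 ^ w < 2 ^ 3 := by omega
    exact_mod_cast Nat.le_of_lt_succ ((Nat.pow_lt_pow_iff_right one_lt_two).mp this)
  interval_cases k
  · have h3' := mul_log_le_mul_log (a := 3) (b := 2) (i := 17) (j := 27) (by norm_num) (by norm_num)
    have h5 := mul_log_le_mul_log (a := 2) (b := 5) (i := 23) (j := 10) (by norm_num) (by norm_num)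
    have hX5 : Real.log 5 ≤ Real.log X := by
      refine Real.log_le_log (by norm_num) (mod_cast ?_)
      by_contra! hX5
      interval_cases X <;> omega
    norm_num [harmonic, sum_range_succ] at h3' h5 ⊢
    linarith
  · norm_num [harmonic, sum_range_succ] at hsize ⊢
    linarith

lemma mul_harmonic_div_two_mul_le (hX : 3 ≤ X) (hq : q.Prime) (hq2 : q ≠ 2) (hk : 1 ≤ k)
    (hw : 2 ^ w ≤ 2 * k) (h : 2 * q ^ k ≤ X ^ ((q + 1) / 2)) :
    w * (harmonic k / (2 * q) : ℝ) ≤ (3 * Real.log X - 2 * Real.log 3) / 5 := by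
  have hq3 : 3 ≤ q := by have := hq.two_le; omega
  rw [mul_div_assoc', div_le_iff₀ (by positivity), mul_comm _ (2 * _)]
  obtain rfl | hk2 : k = 1 ∨ 2 ≤ k := by omega
  · have hw1 : (w : ℝ) ≤ 1 := mod_cast (Nat.pow_le_pow_iff_right one_lt_two).mp hw
    have h2 := Real.log_two_gt_d9
    have h3 := mul_log_le_mul_log (a := 2) (b := 3) (i := 19) (j := 12) (by norm_num) (by norm_num)
    norm_num at h3
    have hL : Real.log 3 ≤ Real.log X := Real.log_le_log (by norm_num) (mod_cast hX)
    have hq' : (3 : ℝ) ≤ q := mod_cast hq3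
    norm_num [harmonic]
    nlinarith
  obtain rfl | hq5 : q = 3 ∨ 5 ≤ q := by
    by_contra! hq'
    obtain rfl : q = 4 := by omega
    exact absurd hq (by norm_num)
  · exact_mod_cast mul_harmonic_le_of_three hX hk2 hw h
  · exact (cast_mul_cast_harmonic_le hk2 hw).trans <|
      six_mul_add_one_div_four_le_of_five_le hq hq5 hk2 hX
        (log_two_add_mul_log_le (hq.odd_of_ne_two hq2) h)

end NumericalBound

section PrimePowerDivisors

variable {x y n h q b : ℕ}

lemma pow_dvd_geomSum₂_gcd_sub_one (hq : q.Prime) (hco : x.Coprime y) (hqn : ¬q ∣ n)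
    (hb : q ^ b ∣ geomSum₂ x y n) : q ^ b ∣ geomSum₂ x y (n.gcd (q - 1)) := by
  obtain rfl | hb0 := eq_or_ne b 0
  · simp
  have hn0 : n ≠ 0 := fun hn ↦ hqn (hn ▸ dvd_zero q)
  have hqxy := natCast_dvd_pow_sub_pow ((dvd_pow_self q hb0).trans hb)
  obtain ⟨hqx, hqy⟩ := not_dvd_of_dvd_pow_sub_pow hq hco hn0 hqxy
  obtain ⟨k, hk⟩ := Nat.gcd_dvd_left n (q - 1)
  set g := n.gcd (q - 1)
  have hqg : (q : ℤ) ∣ (x ^ g : ℕ) - (y ^ g : ℕ) := by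
    push_cast
    rw [← ratioOrder_dvd_iff hq hqy]
    exact Nat.dvd_gcd ((ratioOrder_dvd_iff hq hqy n).mpr hqxy) (ratioOrder_dvd_sub_one hq hqx hqy)
  have hcop : (q ^ b).Coprime (geomSum₂ (x ^ g) (y ^ g) k) := by
    refine Nat.Coprime.pow_left b (hq.coprime_iff_not_dvd.mpr ?_)
    rw [dvd_geomSum₂_iff_of_dvd_sub hqg, hq.dvd_mul, not_or]
    exact ⟨fun hqk ↦ hqn (hk ▸ hqk.mul_left g),
      fun hqx' ↦ hqx (hq.dvd_of_dvd_pow (hq.dvd_of_dvd_pow hqx'))⟩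
  rw [hk, geomSum₂_mul_exponent] at hb
  exact hcop.dvd_of_dvd_mul_right hb

lemma pow_dvd_geomSum₂_or_pow_dvd_pow_add_pow (hq : q.Prime) (hq2 : q ≠ 2) (hco : x.Coprime y)
    (hb : q ^ b ∣ geomSum₂ x y (2 * h)) : q ^ b ∣ geomSum₂ x y h ∨ q ^ b ∣ x ^ h + y ^ h := by
  obtain rfl | hh := eq_or_ne h 0
  · simp
  rw [mul_comm, geomSum₂_mul_exponent, geomSum₂_two] at hb
  by_cases hqh : q ∣ geomSum₂ x y h
  · have hadd : ¬q ∣ x ^ h + y ^ h := by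
      intro hadd
      have hsub := natCast_dvd_pow_sub_pow hqh
      obtain ⟨hqx, -⟩ := not_dvd_of_dvd_pow_sub_pow hq hco hh hsub
      have htwo : (q : ℤ) ∣ (2 * x ^ h : ℕ) := by
        rw [show ((2 * x ^ h : ℕ) : ℤ) = (x ^ h - y ^ h) + (x ^ h + y ^ h) by push_cast; ring]
        exact dvd_add hsub (mod_cast hadd)
      obtain hq2' | hqx' := hq.dvd_mul.mp (Int.natCast_dvd_natCast.mp htwo)
      · exact hq2 ((Nat.prime_dvd_prime_iff_eq hq Nat.prime_two).mp hq2')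
      · exact hqx (hq.dvd_of_dvd_pow hqx')
    exact .inl (((hq.coprime_iff_not_dvd.mpr hadd).pow_left b).dvd_of_dvd_mul_right hb)
  · exact .inr (((hq.coprime_iff_not_dvd.mpr hqh).pow_left b).dvd_of_dvd_mul_left hb)

lemma sub_mul_pow_add_pow_le (hyx : y ≤ x) (hn : n ≠ 0) :
    (x - y) * (x ^ n + y ^ n) ≤ x ^ (n + 1) := by
  have hmix : x * y ^ n ≤ y * x ^ n := by
    obtain ⟨j, rfl⟩ := Nat.exists_eq_succ_of_ne_zero hn
    calc x * y ^ (j + 1) = x * y * y ^ j := by ring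
      _ ≤ x * y * x ^ j := by gcongr
      _ = y * x ^ (j + 1) := by ring
  zify [hyx] at hmix ⊢
  have : (0 : ℤ) ≤ y * y ^ n := by positivity
  linear_combination hmix + this

lemma sub_mul_two_mul_pow_le (hy : Odd y) (hx : Odd x) (hyx : y < x) (hco : x.Coprime y)
    (hq : q.Prime) (hq2 : q ≠ 2) (hh : h ≠ 0) (hb : q ^ b ∣ geomSum₂ x y (2 * h)) :
    (x - y) * (2 * q ^ b) ≤ x ^ (h + 1) := by
  have hx2 : 2 ≤ x := by have := hy.pos; omega
  obtain hdvd | hdvd := pow_dvd_geomSum₂_or_pow_dvd_pow_add_pow hq hq2 hco hb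
  · calc (x - y) * (2 * q ^ b) = 2 * ((x - y) * q ^ b) := by ring
      _ ≤ x * x ^ h := by
        gcongr
        calc (x - y) * q ^ b ≤ (x - y) * geomSum₂ x y h := by
              gcongr
              exact Nat.le_of_dvd (geomSum₂_pos hx.pos hy.pos hh.bot_lt) hdvd
          _ = x ^ h - y ^ h := sub_mul_geomSum₂ hyx.le h
          _ ≤ x ^ h := Nat.sub_le ..
      _ = x ^ (h + 1) := (pow_succ' x h).symm
  · have htwo : 2 ∣ x ^ h + y ^ h := (hx.pow.add_odd hy.pow).two_dvd
    have hcop : Nat.Coprime 2 (q ^ b) := (hq.odd_of_ne_two hq2).pow.coprime_two_left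
    calc (x - y) * (2 * q ^ b) ≤ (x - y) * (x ^ h + y ^ h) := by
          gcongr
          exact Nat.le_of_dvd (by positivity) (hcop.mul_dvd_of_dvd_of_dvd htwo hdvd)
      _ ≤ x ^ (h + 1) := sub_mul_pow_add_pow_le hyx.le hh

lemma two_mul_pow_le_of_pow_dvd_mul_geomSum₂ {d z k : ℕ} (hy : Odd y) (hx : Odd x) (hyx : y < x)
    (hco : x.Coprime y) (hz : 0 < z) (hzd : z ≤ d * (x - y)) (hq : q.Prime) (hq2 : q ≠ 2)
    (hn : Even n) (hqn : ¬q ∣ n) (hk : q ^ k ∣ z * geomSum₂ x y n) :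
    2 * q ^ k ≤ (d * x) ^ ((q + 1) / 2) := by
  have hd : 0 < d := Nat.pos_of_mul_pos_right (hz.trans_le hzd)
  obtain ⟨u, v, hu, hv, huv⟩ := Nat.dvd_mul.mp hk
  obtain ⟨b, -, rfl⟩ := (Nat.dvd_prime_pow hq).mp (Dvd.intro_left u huv)
  have hq_odd := hq.odd_of_ne_two hq2
  have hn0 : n ≠ 0 := fun hn ↦ hqn (hn ▸ dvd_zero q)
  obtain ⟨h, hh⟩ : 2 ∣ n.gcd (q - 1) := Nat.dvd_gcd hn.two_dvd (hq_odd.tsub_odd odd_one).two_dvd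
  have hgpos : 0 < n.gcd (q - 1) := Nat.gcd_pos_of_pos_left _ hn0.bot_lt
  have hgle : n.gcd (q - 1) ≤ q - 1 :=
    Nat.le_of_dvd (Nat.sub_pos_of_lt hq.one_lt) (Nat.gcd_dvd_right _ _)
  have hb : q ^ b ∣ geomSum₂ x y (2 * h) := hh ▸ pow_dvd_geomSum₂_gcd_sub_one hq hco hqn hv
  calc 2 * q ^ k = u * (2 * q ^ b) := by rw [← huv]; ring
    _ ≤ d * (x - y) * (2 * q ^ b) := by
      gcongr
      exact (Nat.le_of_dvd hz hu).trans hzd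
    _ = d * ((x - y) * (2 * q ^ b)) := by ring
    _ ≤ d ^ (h + 1) * x ^ (h + 1) := by
      gcongr
      · exact Nat.le_self_pow (Nat.succ_ne_zero h) d
      · exact sub_mul_two_mul_pow_le hy hx hyx hco hq hq2 (by omega) hb
    _ = (d * x) ^ (h + 1) := (mul_pow ..).symm
    _ ≤ (d * x) ^ ((q + 1) / 2) :=
      Nat.pow_le_pow_right (Nat.mul_pos hd hx.pos) (by omega)

end PrimePowerDivisors

section SumUnion

variable {ι κ M : Type*} [AddCommMonoid M] [PartialOrder M] [IsOrderedAddMonoid M]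
  [DecidableEq κ] {f : κ → M}

lemma sum_union_le_sum_add_sum {s t : Finset κ} (hf : ∀ a ∈ s ∩ t, 0 ≤ f a) :
    ∑ a ∈ s ∪ t, f a ≤ ∑ a ∈ s, f a + ∑ a ∈ t, f a := by
  rw [← sum_union_inter]
  exact le_add_of_nonneg_right (sum_nonneg hf)

lemma sum_biUnion_le_sum_sum {I : Finset ι} {T : ι → Finset κ}
    (hf : ∀ i ∈ I, ∀ a ∈ T i, 0 ≤ f a) :
    ∑ a ∈ I.biUnion T, f a ≤ ∑ i ∈ I, ∑ a ∈ T i, f a := by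
  classical
  induction I using Finset.induction_on with
  | empty => simp
  | insert j I hj ih =>
    rw [biUnion_insert, sum_insert hj]
    refine (sum_union_le_sum_add_sum fun a ha ↦ ?_).trans
      (add_le_add_right (ih fun i hi ↦ hf i (mem_insert_of_mem hi)) _)
    exact hf j (mem_insert_self j I) a (mem_of_mem_inter_left ha)

end SumUnion

section OrderPrimes

/-- The primes dividing `geomSum₂ x y m` modulo which the order of `x / y` is a multiple of `q`.
When `q` runs over the prime factors of `m`, they account for all prime divisors of `geomSum₂ x y m`
at which `x / y` is not `1`. -/
noncomputable def orderPrimes (x y m q : ℕ) : Finset ℕ :=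
  {p ∈ (geomSum₂ x y m).primeFactors | q ∣ ratioOrder x y p}

variable {x y z d m n p q N : ℕ}

lemma orderPrimes_subset_primeFactors (hN : N ≠ 0) (hmN : geomSum₂ x y m ∣ N) (q : ℕ) :
    orderPrimes x y m q ⊆ N.primeFactors :=
  (filter_subset _ _).trans (Nat.primeFactors_mono hmN hN)

lemma prime_of_mem_orderPrimes (hp : p ∈ orderPrimes x y m q) : p.Prime :=
  Nat.prime_of_mem_primeFactors (mem_filter.mp hp).1

lemma dvd_sub_one_of_mem_orderPrimes (hco : x.Coprime y) (hm : m ≠ 0)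
    (hp : p ∈ orderPrimes x y m q) : q ∣ p - 1 := by
  obtain ⟨hpG, hqp⟩ := mem_filter.mp hp
  have hpp := Nat.prime_of_mem_primeFactors hpG
  obtain ⟨hpx, hpy⟩ := not_dvd_of_dvd_pow_sub_pow hpp hco hm
    (natCast_dvd_pow_sub_pow (Nat.dvd_of_mem_primeFactors hpG))
  exact hqp.trans (ratioOrder_dvd_sub_one hpp hpx hpy)

lemma odd_geomSum₂_of_odd (hx : Odd x) (hy : Odd y) (hm : Odd m) : Odd (geomSum₂ x y m) := by
  have h2 : ((2 : ℕ) : ℤ) ∣ x - y := by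
    obtain ⟨a, rfl⟩ := hx
    obtain ⟨b, rfl⟩ := hy
    exact ⟨a - b, by push_cast; ring⟩
  rw [← Nat.not_even_iff_odd, even_iff_two_dvd, dvd_geomSum₂_iff_of_dvd_sub h2,
    ← even_iff_two_dvd, Nat.not_even_iff_odd]
  exact hm.mul hx.pow

lemma two_mul_dvd_sub_one_of_mem_orderPrimes (hx : Odd x) (hy : Odd y) (hco : x.Coprime y)
    (hm : Odd m) (hq : Odd q) (hp : p ∈ orderPrimes x y m q) : 2 * q ∣ p - 1 := by
  have hpodd : Odd p := (odd_geomSum₂_of_odd hx hy hm).of_dvd_nat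
    (Nat.dvd_of_mem_primeFactors (mem_filter.mp hp).1)
  exact hq.coprime_two_left.mul_dvd_of_dvd_of_dvd (hpodd.tsub_odd odd_one).two_dvd
    (dvd_sub_one_of_mem_orderPrimes hco hm.pos.ne' hp)

lemma pow_card_orderPrimes_dvd_totient (hco : x.Coprime y) (hm : m ≠ 0) (hN : N ≠ 0)
    (hmN : geomSum₂ x y m ∣ N) (q : ℕ) : q ^ #(orderPrimes x y m q) ∣ N.totient :=
  pow_card_dvd_totient (orderPrimes_subset_primeFactors hN hmN q)
    fun _ hp ↦ dvd_sub_one_of_mem_orderPrimes hco hm hp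

lemma exists_mem_orderPrimes_ratioOrder_eq {e : ℕ} (hy : 0 < y) (hxy : y + 2 ≤ x)
    (hco : x.Coprime y) (hm : Odd m) (hem : e ∣ m) (he : 1 < e) (hqe : q ∣ e) :
    ∃ p ∈ orderPrimes x y m q, ratioOrder x y p = e := by
  obtain ⟨p, hp, -, hpy, hpe⟩ := exists_prime_ratioOrder_eq (hm.of_dvd_nat hem) he hy hxy hco
  refine ⟨p, mem_filter.mpr ⟨Nat.mem_primeFactors.mpr ⟨hp, ?_, ?_⟩, hpe ▸ hqe⟩, hpe⟩
  · have hdvd : (p : ℤ) ∣ x ^ m - y ^ m := (ratioOrder_dvd_iff hp hpy m).mp (hpe ▸ hem)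
    have hndvd : ¬(p : ℤ) ∣ x - y := by
      have h1 := ratioOrder_dvd_iff (x := x) hp hpy 1
      rw [pow_one, pow_one, hpe, Nat.dvd_one] at h1
      exact fun h ↦ he.ne' (h1.mpr h)
    rw [← geomSum₂_mul_sub, ← natCast_geomSum₂] at hdvd
    exact_mod_cast ((Nat.prime_iff_prime_int.mp hp).dvd_or_dvd hdvd).resolve_right hndvd
  · exact (geomSum₂_pos (by omega) hy hm.pos).ne'

/-- By Zsigmondy, every squarefree divisor of `m` that is a multiple of `q` is the order of `x / y`
modulo some prime. -/
lemma two_pow_card_primeFactors_le_two_mul_card_orderPrimes (hy : 0 < y) (hxy : y + 2 ≤ x)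
    (hco : x.Coprime y) (hm : Odd m) (hq : q ∈ m.primeFactors) :
    2 ^ #m.primeFactors ≤ 2 * #(orderPrimes x y m q) := by
  have hsurj : Set.SurjOn (fun p ↦ (ratioOrder x y p).primeFactors.erase q)
      (orderPrimes x y m q) (m.primeFactors.erase q).powerset := by
    intro s hs
    rw [mem_coe, mem_powerset] at hs
    have hqs : q ∉ s := fun h ↦ notMem_erase q _ (hs h)
    have hsub : insert q s ⊆ m.primeFactors :=
      insert_subset hq (hs.trans (erase_subset q _))
    set e := ∏ p ∈ insert q s, p
    have hem : e ∣ m := (prod_dvd_prod_of_subset _ _ _ hsub).trans (Nat.prod_primeFactors_dvd m)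
    have hqe : q ∣ e := dvd_prod_of_mem _ (mem_insert_self q s)
    have he : 1 < e := (Nat.prime_of_mem_primeFactors hq).one_lt.trans_le
      (Nat.le_of_dvd (Nat.pos_of_dvd_of_pos hem hm.pos) hqe)
    obtain ⟨p, hp, hpe⟩ := exists_mem_orderPrimes_ratioOrder_eq hy hxy hco hm hem he hqe
    refine ⟨p, hp, ?_⟩
    simp only [hpe, e, Nat.primeFactors_prod fun _ hp ↦ Nat.prime_of_mem_primeFactors (hsub hp)]
    exact erase_insert hqs
  calc 2 ^ #m.primeFactors = 2 * 2 ^ #(m.primeFactors.erase q) := by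
        rw [← pow_succ', card_erase_add_one hq]
    _ = 2 * #(m.primeFactors.erase q).powerset := by rw [card_powerset]
    _ ≤ 2 * #(orderPrimes x y m q) := by
        gcongr
        exact card_le_card_of_surjOn _ hsurj

lemma mem_biUnion_orderPrimes (hm : m ≠ 0) (hp : p ∈ (geomSum₂ x y m).primeFactors)
    (hco : x.Coprime y) (hord : ratioOrder x y p ≠ 1) :
    p ∈ m.primeFactors.biUnion (orderPrimes x y m) := by
  have hpp := Nat.prime_of_mem_primeFactors hp
  have hpow := natCast_dvd_pow_sub_pow (Nat.dvd_of_mem_primeFactors hp)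
  obtain ⟨-, hpy⟩ := not_dvd_of_dvd_pow_sub_pow hpp hco hm hpow
  obtain ⟨q, hq, hqo⟩ := Nat.exists_prime_and_dvd hord
  have hqm : q ∣ m := hqo.trans ((ratioOrder_dvd_iff hpp hpy m).mpr hpow)
  exact mem_biUnion.mpr ⟨q, Nat.mem_primeFactors.mpr ⟨hq, hqm, hm⟩, mem_filter.mpr ⟨hp, hqo⟩⟩

end OrderPrimes

section OddCase

variable {x y z d m n q : ℕ}

lemma dvd_of_prime_dvd_geomSum₂_of_ratioOrder_eq_one {p : ℕ} (hp : p.Prime) (hxy : y + 2 ≤ x)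
    (hy : 0 < y) (hco : x.Coprime y) (hm : Odd m) (hmn : m.Coprime n) (hzd : z * d ≠ 0)
    (hdvd : (z * d * geomSum₂ x y m).totient ∣ z * geomSum₂ x y n)
    (hpm : p ∣ geomSum₂ x y m) (hord : ratioOrder x y p = 1) : p ∣ z := by
  have hG : 0 < geomSum₂ x y m := geomSum₂_pos (by omega) hy hm.pos
  obtain ⟨hpx, hpy⟩ := not_dvd_of_dvd_pow_sub_pow hp hco hm.pos.ne' (natCast_dvd_pow_sub_pow hpm)
  have hpxy : (p : ℤ) ∣ x - y := by
    simpa only [pow_one] using (ratioOrder_dvd_iff hp hpy 1).mp hord.dvd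
  have dvd_exponent {k : ℕ} (hk : p ∣ geomSum₂ x y k) : p ∣ k :=
    (hp.dvd_mul.mp ((dvd_geomSum₂_iff_of_dvd_sub hpxy k).mp hk)).resolve_right
      fun h ↦ hpx (hp.dvd_of_dvd_pow h)
  have hpm' : p ∈ m.primeFactors := Nat.mem_primeFactors.mpr ⟨hp, dvd_exponent hpm, hm.pos.ne'⟩
  have hcard : #(orderPrimes x y m p) ≠ 0 := by
    have := two_pow_card_primeFactors_le_two_mul_card_orderPrimes hy hxy hco hm hpm'
    have := Nat.two_pow_pos #m.primeFactors
    omega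
  have hpz : p ∣ z * geomSum₂ x y n := (dvd_pow_self p hcard).trans
    ((pow_card_orderPrimes_dvd_totient hco hm.pos.ne' (mul_ne_zero hzd hG.ne')
      (dvd_mul_left _ _) p).trans hdvd)
  refine (hp.dvd_mul.mp hpz).resolve_right fun hpn ↦ ?_
  exact Nat.not_coprime_of_dvd_of_dvd hp.one_lt (dvd_exponent hpm) (dvd_exponent hpn) hmn

lemma primeFactors_subset_union_biUnion_orderPrimes (hxy : y + 2 ≤ x) (hy : 0 < y)
    (hco : x.Coprime y) (hm : Odd m) (hmn : m.Coprime n) (hzd : z * d ≠ 0)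
    (hdvd : (z * d * geomSum₂ x y m).totient ∣ z * geomSum₂ x y n) :
    (z * d * geomSum₂ x y m).primeFactors ⊆
      (z * d).primeFactors ∪ m.primeFactors.biUnion (orderPrimes x y m) := by
  have hG : 0 < geomSum₂ x y m := geomSum₂_pos (by omega) hy hm.pos
  rw [Nat.primeFactors_mul hzd hG.ne']
  refine union_subset subset_union_left fun p hp ↦ ?_
  by_cases hord : ratioOrder x y p = 1
  · have hpp := Nat.prime_of_mem_primeFactors hp
    have hpz := dvd_of_prime_dvd_geomSum₂_of_ratioOrder_eq_one hpp hxy hy hco hm hmn hzd hdvd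
      (Nat.dvd_of_mem_primeFactors hp) hord
    exact mem_union_left _ (Nat.mem_primeFactors.mpr ⟨hpp, hpz.mul_right d, hzd⟩)
  · exact mem_union_right _ (mem_biUnion_orderPrimes hm.pos.ne' hp hco hord)

lemma card_mul_sum_orderPrimes_log_le (hx : Odd x) (hy : Odd y) (hyx : y < x) (hco : x.Coprime y)
    (hz : 0 < z) (hzd : z ≤ d * (x - y)) (hm : Odd m) (hn : Even n) (hmn : m.Coprime n)
    (hdvd : (z * d * geomSum₂ x y m).totient ∣ z * geomSum₂ x y n) (hq : q ∈ m.primeFactors) :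
    #m.primeFactors * ∑ p ∈ orderPrimes x y m q, Real.log (p / (p - 1)) ≤
      (3 * Real.log (d * x : ℕ) - 2 * Real.log 3) / 5 := by
  have hqp := Nat.prime_of_mem_primeFactors hq
  have hqm := Nat.dvd_of_mem_primeFactors hq
  have hqodd : Odd q := hm.of_dvd_nat hqm
  have hq2 : q ≠ 2 := by rintro rfl; exact absurd hqodd (by decide)
  have hd : 0 < d := Nat.pos_of_mul_pos_right (hz.trans_le hzd)
  have hxy : y + 2 ≤ x := by obtain ⟨a, rfl⟩ := hx; obtain ⟨b, rfl⟩ := hy; omega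
  have hN : z * d * geomSum₂ x y m ≠ 0 :=
    mul_ne_zero (Nat.mul_pos hz hd).ne' (geomSum₂_pos hx.pos hy.pos hm.pos).ne'
  have hX : 3 ≤ d * x := by have := hy.pos; nlinarith
  have hT (p : ℕ) (hp : p ∈ orderPrimes x y m q) : 1 < p ∧ 2 * q ∣ p - 1 :=
    ⟨(prime_of_mem_orderPrimes hp).one_lt,
      two_mul_dvd_sub_one_of_mem_orderPrimes hx hy hco hm hqodd hp⟩
  have hcard := two_pow_card_primeFactors_le_two_mul_card_orderPrimes hy.pos hxy hco hm hq
  have hpow := two_mul_pow_le_of_pow_dvd_mul_geomSum₂ hy hx hyx hco hz hzd hqp hq2 hn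
    (fun hqn ↦ Nat.not_coprime_of_dvd_of_dvd hqp.one_lt hqm hqn hmn)
    ((pow_card_orderPrimes_dvd_totient hco hm.pos.ne' hN (dvd_mul_left _ _) q).trans hdvd)
  calc #m.primeFactors * ∑ p ∈ orderPrimes x y m q, Real.log (p / (p - 1))
      ≤ #m.primeFactors * ∑ p ∈ orderPrimes x y m q, ((p : ℝ) - 1)⁻¹ := by
        gcongr with p hp
        exact log_div_sub_one_le (mod_cast (hT p hp).1)
    _ ≤ #m.primeFactors * (harmonic #(orderPrimes x y m q) / (2 * q)) := by
        gcongr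
        exact_mod_cast sum_inv_sub_one_le_harmonic_card_div hT
    _ ≤ (3 * Real.log (d * x : ℕ) - 2 * Real.log 3) / 5 := by
        have := Nat.two_pow_pos #m.primeFactors
        exact mul_harmonic_div_two_mul_le hX hqp hq2 (by omega) hcard hpow

lemma sum_sum_orderPrimes_log_le (hx : Odd x) (hy : Odd y) (hyx : y < x) (hco : x.Coprime y)
    (hz : 0 < z) (hzd : z ≤ d * (x - y)) (hm : Odd m) (hn : Even n) (hmn : m.Coprime n)
    (hdvd : (z * d * geomSum₂ x y m).totient ∣ z * geomSum₂ x y n) :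
    ∑ q ∈ m.primeFactors, ∑ p ∈ orderPrimes x y m q, Real.log (p / (p - 1)) ≤
      (3 * Real.log (d * x : ℕ) - 2 * Real.log 3) / 5 := by
  obtain hm1 | hne := m.primeFactors.eq_empty_or_nonempty
  · have hd : 0 < d := Nat.pos_of_mul_pos_right (hz.trans_le hzd)
    have hx3 : 3 ≤ x := by obtain ⟨a, rfl⟩ := hx; obtain ⟨b, rfl⟩ := hy; omega
    have hX : 3 ≤ d * x := hx3.trans (Nat.le_mul_of_pos_left x hd)
    have : Real.log 3 ≤ Real.log (d * x : ℕ) := Real.log_le_log three_pos (mod_cast hX)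
    have : 0 ≤ Real.log 3 := Real.log_nonneg (by norm_num)
    rw [hm1, sum_empty]
    linarith
  · have hcard : (0 : ℝ) < #m.primeFactors := mod_cast hne.card_pos
    rw [← mul_le_mul_iff_right₀ hcard, mul_sum]
    exact (sum_le_card_nsmul _ _ _ fun q hq ↦ card_mul_sum_orderPrimes_log_le hx hy hyx hco hz hzd
      hm hn hmn hdvd hq).trans_eq (nsmul_eq_mul ..)

lemma log_div_totient_le_log_div_totient_add_sum_sum {N M : ℕ} {I : Finset ℕ}
    {T : ℕ → Finset ℕ} (hN : N ≠ 0) (hM : M ≠ 0) (hT : ∀ q ∈ I, ∀ p ∈ T q, 1 < p)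
    (hsub : N.primeFactors ⊆ M.primeFactors ∪ I.biUnion T) :
    Real.log (N / N.totient) ≤
      Real.log (M / M.totient) + ∑ q ∈ I, ∑ p ∈ T q, Real.log (p / (p - 1)) := by
  have hM1 (p : ℕ) (hp : p ∈ M.primeFactors) : 0 ≤ Real.log (p / (p - 1)) :=
    log_div_sub_one_nonneg (mod_cast (Nat.prime_of_mem_primeFactors hp).one_lt)
  have hT1 (q : ℕ) (hq : q ∈ I) (p : ℕ) (hp : p ∈ T q) : 0 ≤ Real.log (p / (p - 1)) :=
    log_div_sub_one_nonneg (mod_cast hT q hq p hp)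
  rw [log_div_totient hN, log_div_totient hM]
  calc ∑ p ∈ N.primeFactors, Real.log (p / (p - 1))
      ≤ ∑ p ∈ M.primeFactors ∪ I.biUnion T, Real.log (p / (p - 1)) := by
        refine sum_le_sum_of_subset_of_nonneg hsub fun p hp _ ↦ ?_
        obtain hp | hp := mem_union.mp hp
        · exact hM1 p hp
        · obtain ⟨q, hq, hp⟩ := mem_biUnion.mp hp
          exact hT1 q hq p hp
    _ ≤ ∑ p ∈ M.primeFactors, Real.log (p / (p - 1)) +
          ∑ p ∈ I.biUnion T, Real.log (p / (p - 1)) :=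
        sum_union_le_sum_add_sum fun p hp ↦ hM1 p (mem_inter.mp hp).1
    _ ≤ _ := by gcongr; exact sum_biUnion_le_sum_sum hT1

lemma log_mul_le_two_mul_log_add (hz : 0 < z) (hy : 0 < y) (hxy : y + 2 ≤ x)
    (hzd : z ≤ d * (x - y)) :
    Real.log (81 / 2 * (z * d : ℕ)) ≤ 2 * Real.log 3 + 2 * Real.log (d * x : ℕ) := by
  have hd : 0 < d := Nat.pos_of_mul_pos_right (hz.trans_le hzd)
  have hx : 0 < x := by omega
  have hbound : 9 * (z * d) ≤ 2 * (d * x) ^ 2 := by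
    obtain ⟨t, rfl⟩ : ∃ t, x = t + 3 := ⟨x - 3, by omega⟩
    calc 9 * (z * d) ≤ 9 * (d * (t + 2) * d) := by
          gcongr
          exact hzd.trans (by gcongr; omega)
      _ ≤ 2 * (d * (t + 3)) ^ 2 := by
          nlinarith [Nat.zero_le (d ^ 2 * t), Nat.zero_le (d ^ 2 * t ^ 2)]
  calc Real.log (81 / 2 * (z * d : ℕ)) ≤ Real.log (3 ^ 2 * (d * x : ℕ) ^ 2) := by
        refine Real.log_le_log (by positivity) ?_
        have : (9 * (z * d : ℕ) : ℝ) ≤ 2 * (d * x : ℕ) ^ 2 := mod_cast hbound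
        linarith
    _ = 2 * Real.log 3 + 2 * Real.log (d * x : ℕ) := by
        rw [Real.log_mul (by norm_num) (by positivity), Real.log_pow, Real.log_pow]
        norm_num

lemma le_mul_totient_of_odd_of_even (hx : Odd x) (hy : Odd y) (hyx : y < x) (hco : x.Coprime y)
    (hz : 0 < z) (hzd : z ≤ d * (x - y)) (hm : Odd m) (hn : Even n) (hmn : m.Coprime n)
    (hdvd : (z * d * geomSum₂ x y m).totient ∣ z * geomSum₂ x y n) :
    z * d * geomSum₂ x y m ≤ d * x * (z * d * geomSum₂ x y m).totient := by
  have hxy : y + 2 ≤ x := by obtain ⟨a, rfl⟩ := hx; obtain ⟨b, rfl⟩ := hy; omega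
  have hd : 0 < d := Nat.pos_of_mul_pos_right (hz.trans_le hzd)
  have hzd0 : z * d ≠ 0 := (Nat.mul_pos hz hd).ne'
  have hN : 0 < z * d * geomSum₂ x y m :=
    Nat.mul_pos (Nat.mul_pos hz hd) (geomSum₂_pos hx.pos hy.pos hm.pos)
  have hsub := primeFactors_subset_union_biUnion_orderPrimes hxy hy.pos hco hm hmn hzd0 hdvd
  set N := z * d * geomSum₂ x y m
  have hlog : Real.log (N / N.totient) ≤ Real.log (d * x : ℕ) := by
    have hsplit := log_div_totient_le_log_div_totient_add_sum_sum hN.ne' hzd0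
      (fun _ _ _ hp ↦ (prime_of_mem_orderPrimes hp).one_lt) hsub
    have horder := sum_sum_orderPrimes_log_le hx hy hyx hco hz hzd hm hn hmn hdvd
    have hcofactor := five_mul_log_div_totient_le hzd0
    have hsize := log_mul_le_two_mul_log_add hz hy.pos hxy hzd
    linarith
  have hφ : (0 : ℝ) < N.totient := mod_cast Nat.totient_pos.mpr hN
  rw [Real.log_le_log_iff (by positivity) (mod_cast Nat.mul_pos hd hx.pos), div_le_iff₀ hφ] at hlog
  exact_mod_cast hlog

end OddCase

section Reduction

variable {x y z d m n : ℕ}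

lemma le_mul_totient_of_totient_dvd_mul_odd {g N X : ℕ} (hz : 0 < z) (hzX : z < X) (hg : Odd g)
    (hdvd : N.totient ∣ z * g) : N ≤ X * N.totient := by
  have hpow : 2 ^ #(N.primeFactors.erase 2) ∣ N.totient := by
    refine pow_card_dvd_totient (erase_subset 2 _) fun p hp ↦ ?_
    obtain ⟨hp2, hp⟩ := mem_erase.mp hp
    exact (((Nat.prime_of_mem_primeFactors hp).odd_of_ne_two hp2).tsub_odd odd_one).two_dvd
  have hpowz : 2 ^ #(N.primeFactors.erase 2) ≤ z :=
    Nat.le_of_dvd hz ((hg.coprime_two_left.pow_left _).dvd_of_dvd_mul_right (hpow.trans hdvd))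
  have hcard : #N.primeFactors + 1 ≤ X := by
    have := (Nat.lt_two_pow_self (n := #(N.primeFactors.erase 2))).trans_le hpowz
    have := pred_card_le_card_erase (s := N.primeFactors) (a := 2)
    omega
  exact (le_card_primeFactors_add_one_mul_totient N).trans (by gcongr)

lemma even_and_odd_and_odd_of_even_geomSum₂ (hco : x.Coprime y) (hn : n ≠ 0)
    (h : Even (geomSum₂ x y n)) : Even n ∧ Odd x ∧ Odd y := by
  obtain ⟨hx, hy⟩ := not_dvd_of_dvd_pow_sub_pow Nat.prime_two hco hn
    (natCast_dvd_pow_sub_pow h.two_dvd)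
  rw [← even_iff_two_dvd, Nat.not_even_iff_odd] at hx hy
  refine ⟨?_, hx, hy⟩
  by_contra hnodd
  exact Nat.not_odd_iff_even.mpr h (odd_geomSum₂_of_odd hx hy (Nat.not_even_iff_odd.mp hnodd))

lemma le_mul_totient_of_totient_dvd_mul_geomSum₂ (hy : 0 < y) (hyx : y < x) (hco : x.Coprime y)
    (hz : 0 < z) (hzd : z ≤ d * (x - y)) (hn : 0 < n) (hmn : m.Coprime n)
    (hdvd : (z * d * geomSum₂ x y m).totient ∣ z * geomSum₂ x y n) :
    z * d * geomSum₂ x y m ≤ d * x * (z * d * geomSum₂ x y m).totient := by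
  obtain hG | hG := (geomSum₂ x y n).even_or_odd
  · obtain ⟨hn2, hxodd, hyodd⟩ := even_and_odd_and_odd_of_even_geomSum₂ hco hn.ne' hG
    have hm : Odd m := by
      rw [← Nat.not_even_iff_odd]
      exact fun hm ↦ Nat.not_coprime_of_dvd_of_dvd one_lt_two hm.two_dvd hn2.two_dvd hmn
    exact le_mul_totient_of_odd_of_even hxodd hyodd hyx hco hz hzd hm hn2 hmn hdvd
  · have hd : 0 < d := Nat.pos_of_mul_pos_right (hz.trans_le hzd)
    have hzX : z < d * x := hzd.trans_lt (by gcongr; omega)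
    exact le_mul_totient_of_totient_dvd_mul_odd hz hzX hG hdvd

lemma totient_pow_mul_of_dvd {c N : ℕ} (h : c ∣ N) (hN : 0 < N) (k : ℕ) :
    (c ^ k * N).totient = c ^ k * N.totient := by
  induction k with
  | zero => simp
  | succ k ih =>
    have hc : 0 < c := Nat.pos_of_dvd_of_pos h hN
    rw [pow_succ', mul_assoc, totient_mul_of_dvd (h.mul_left _) (by positivity), ih, mul_assoc]

lemma lt_of_totient_mul_geomSum₂_eq (hx : 0 < x) (hy : 0 < y) (hz : 0 < z) (hm : 1 < m)
    (h : (z * geomSum₂ x y m).totient = z * geomSum₂ x y n) : n < m := by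
  have hG : 1 < geomSum₂ x y m := by
    have := mul_geomSum₂_lt_geomSum₂ hx hy hm
    rw [geomSum₂_one] at this
    omega
  have hlt : z * geomSum₂ x y n < z * geomSum₂ x y m :=
    h ▸ Nat.totient_lt _ (hG.trans_le (Nat.le_mul_of_pos_left _ hz))
  have hGlt : geomSum₂ x y n < geomSum₂ x y m := Nat.lt_of_mul_lt_mul_left hlt
  by_contra! hmn
  obtain rfl | hmn := hmn.eq_or_lt
  · exact hGlt.false
  · have := mul_geomSum₂_lt_geomSum₂ hx hy hmn
    nlinarith

lemma totient_dvd_and_mul_totient_lt (hd : 0 < d) (hy : 0 < y) (hx : 0 < x) (hz : 0 < z)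
    (hn : 0 < n) (hnm : n < m)
    (h : (z * geomSum₂ (d * x) (d * y) m).totient = z * geomSum₂ (d * x) (d * y) n) :
    (z * d * geomSum₂ x y m).totient ∣ z * geomSum₂ x y n ∧
      d * x * (z * d * geomSum₂ x y m).totient < z * d * geomSum₂ x y m := by
  have hGm : 0 < geomSum₂ x y m := geomSum₂_pos hx hy (by omega)
  obtain ⟨j, rfl⟩ : ∃ j, n = j + 1 := ⟨n - 1, by omega⟩
  obtain ⟨k, rfl⟩ : ∃ k, m = j + k + 2 := ⟨m - j - 2, by omega⟩
  set N := z * d * geomSum₂ x y (j + k + 2) with hN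
  have hscale : z * geomSum₂ (d * x) (d * y) (j + k + 2) = d ^ (j + k) * N := by
    rw [geomSum₂_mul_mul, hN, show j + k + 2 - 1 = j + k + 1 by omega]
    ring
  have htot : d ^ (j + k) * N.totient = z * geomSum₂ (d * x) (d * y) (j + 1) := by
    rw [← totient_pow_mul_of_dvd ((dvd_mul_left d z).mul_right _) (by positivity), ← hscale, h]
  constructor
  · refine ⟨d ^ k, Nat.eq_of_mul_eq_mul_left (pow_pos hd j) ?_⟩
    rw [geomSum₂_mul_mul, Nat.add_sub_cancel] at htot
    linear_combination -htot
  · refine Nat.lt_of_mul_lt_mul_left (a := d ^ (j + k)) ?_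
    calc d ^ (j + k) * (d * x * N.totient)
        = z * (d * x * geomSum₂ (d * x) (d * y) (j + 1)) := by linear_combination d * x * htot
      _ < z * geomSum₂ (d * x) (d * y) (j + k + 2) := by
        gcongr
        exact mul_geomSum₂_lt_geomSum₂ (by positivity) (by positivity) (by omega)
      _ = d ^ (j + k) * N := hscale

lemma eq_one_of_totient_eq_mul_geomSum₂ (hx : 0 < x) (hy : 0 < y) (hz : 0 < z) (hn : 0 < n)
    (h : z.totient = z * geomSum₂ x y n) : z = 1 ∧ n = 1 := by
  have hn1 : n = 1 := by
    by_contra hn1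
    have hlt := mul_geomSum₂_lt_geomSum₂ hx hy (by omega : 1 < n)
    rw [geomSum₂_one] at hlt
    have := Nat.totient_le z
    nlinarith
  rw [hn1, geomSum₂_one, mul_one] at h
  refine ⟨?_, hn1⟩
  by_contra hz1
  exact (Nat.totient_lt z (by omega)).ne h

end Reduction

theorem phi_eq_general_coprime (x y z m n : ℕ) (hx : 0 < x) (hy : 0 < y) (hz : 0 < z)
    (hm : 0 < m) (hn : 0 < n) (hxy : y < x) (hzxy : z ≤ x - y)
    (hgcd : Nat.gcd m n = 1)
    (heq : Nat.totient (z * ((x ^ m - y ^ m) / (x - y))) =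
      z * ((x ^ n - y ^ n) / (x - y))) :
    z = 1 ∧ m = 1 ∧ n = 1 := by
  rw [pow_sub_pow_div_sub hxy, pow_sub_pow_div_sub hxy] at heq
  obtain rfl | hm1 : m = 1 ∨ 1 < m := by omega
  · rw [geomSum₂_one, mul_one] at heq
    obtain ⟨hz1, hn1⟩ := eq_one_of_totient_eq_mul_geomSum₂ hx hy hz hn heq
    exact ⟨hz1, rfl, hn1⟩
  have hnm : n < m := lt_of_totient_mul_geomSum₂_eq hx hy hz hm1 heq
  obtain ⟨d, a, b, hd, hco, rfl, rfl⟩ := Nat.exists_coprime' (Nat.gcd_pos_of_pos_left y hx)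
  rw [mul_comm a d, mul_comm b d] at *
  have ha : 0 < a := Nat.pos_of_mul_pos_left hx
  have hb : 0 < b := Nat.pos_of_mul_pos_left hy
  have hba : b < a := Nat.lt_of_mul_lt_mul_left hxy
  have hzd : z ≤ d * (a - b) := by rwa [Nat.mul_sub]
  obtain ⟨hdvd, hlt⟩ := totient_dvd_and_mul_totient_lt hd hb ha hz hn hnm heq
  exact absurd (le_mul_totient_of_totient_dvd_mul_geomSum₂ hb hba hco hz hzd hn hgcd hdvd)
    hlt.not_ge
end

section
/- Let x, y, z, m, n be positive integers with x > y and m > n such that the 2-adic valuations of x and y differ, i.e. ν₂(x) ≠ ν₂(y). Then φ(z·(x^m − y^m)/(x − y)) = z·(x^n − y^n)/(x − y) holds if and only if x = 2, y = 1, m is a prime q with 2^q − 1 prime, n = q − 1, and z = 2^β·(2^q − 1)^u for some integers β ≥ 1 and u ≥ 0. -/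
/-!
Write `U k = (x ^ k - y ^ k) / (x - y)` and `N = z * U m`, so that `φ N = z * U n`. If `x` and `y`
have different 2-adic valuations, then `ν₂ (U k) = (k - 1) * min (ν₂ x) (ν₂ y)`, whence
`ν₂ (U n) ≤ ν₂ (U m)` and so `ν₂ (φ N) ≤ ν₂ N`. Every odd prime factor of `N` contributes a factor
two to `φ N`, and the power of two in `N` loses only one, so `N = 2 ^ e * p ^ k` with `e ≥ 1` and
at most one odd prime `p`. Consequently `N ≤ 3 * φ N`, that is `U m ≤ 3 * U n`. But
`x ^ (m - n) * U n < U m`, which forces `x = 2`, `y = 1`, `m = n + 1`; comparing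
`φ N / N = (p - 1) / (2 * p)` with `U n / U m` then identifies `p` with `U m = 2 ^ m - 1`.
-/

open scoped Nat

/-- The quotient `(x ^ n - y ^ n) / (x - y)` of the theorem. Subtraction and division are those of
`ℕ`: both are exact when `y < x`, and the value is `0` when `x ≤ y`. -/
def powDiffQuot (x y n : ℕ) : ℕ := (x ^ n - y ^ n) / (x - y)

theorem powDiffQuot_mul_sub (x y n : ℕ) :
    powDiffQuot x y n * (x - y) = x ^ n - y ^ n :=
  Nat.div_mul_cancel (Nat.sub_dvd_pow_sub_pow x y n)

theorem powDiffQuot_succ {x y : ℕ} (hxy : y < x) (n : ℕ) :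
    powDiffQuot x y (n + 1) = x * powDiffQuot x y n + y ^ n := by
  have hd : 0 < x - y := Nat.sub_pos_of_lt hxy
  apply Nat.eq_of_mul_eq_mul_right hd
  have hpow : ∀ k, y ^ k ≤ x ^ k := Nat.pow_le_pow_left hxy.le
  rw [powDiffQuot_mul_sub, add_mul, mul_assoc, powDiffQuot_mul_sub]
  zify [hpow, hxy.le]
  ring

theorem powDiffQuot_two_one (n : ℕ) : powDiffQuot 2 1 n = 2 ^ n - 1 := by
  simp [powDiffQuot]

theorem pow_mul_powDiffQuot_lt {x y m n : ℕ} (hy : 0 < y) (hxy : y < x) (hmn : n < m) :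
    x ^ (m - n) * powDiffQuot x y n < powDiffQuot x y m := by
  induction m, hmn using Nat.le_induction with
  | base =>
    rw [Nat.succ_eq_add_one, Nat.add_sub_cancel_left, pow_one, powDiffQuot_succ hxy]
    exact Nat.lt_add_of_pos_right (Nat.pow_pos hy)
  | succ m hmn ih =>
    calc x ^ (m + 1 - n) * powDiffQuot x y n
        = x * (x ^ (m - n) * powDiffQuot x y n) := by
          rw [Nat.sub_add_comm (Nat.le_of_succ_le hmn), pow_succ', mul_assoc]
      _ ≤ x * powDiffQuot x y m := Nat.mul_le_mul_left x ih.le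
      _ < powDiffQuot x y (m + 1) := by
          rw [powDiffQuot_succ hxy]
          exact Nat.lt_add_of_pos_right (Nat.pow_pos hy)

theorem two_mul_powDiffQuot_lt {x y m n : ℕ} (hy : 0 < y) (hxy : y < x) (hmn : n < m) :
    2 * powDiffQuot x y n < powDiffQuot x y m := by
  have hx : 2 ≤ x ^ (m - n) :=
    (Nat.lt_of_le_of_lt hy hxy : 1 < x).trans_le (Nat.le_self_pow (Nat.sub_ne_zero_of_lt hmn) x)
  exact (Nat.mul_le_mul_right _ hx).trans_lt (pow_mul_powDiffQuot_lt hy hxy hmn)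

theorem eq_two_and_eq_one_of_powDiffQuot_le {x y m n : ℕ} (hy : 0 < y) (hxy : y < x)
    (hmn : n < m) (h : powDiffQuot x y m ≤ 3 * powDiffQuot x y n) :
    x = 2 ∧ y = 1 ∧ m = n + 1 := by
  have hpow : x ^ (m - n) < 3 :=
    lt_of_mul_lt_mul_right ((pow_mul_powDiffQuot_lt hy hxy hmn).trans_le h) (Nat.zero_le _)
  have hx : x = 2 := by
    have := Nat.le_self_pow (Nat.sub_ne_zero_of_lt hmn) x
    omega
  subst hx
  have hexp : m - n < 2 := (Nat.pow_lt_pow_iff_right one_lt_two).1 (hpow.trans (by norm_num))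
  omega

section Valuation

variable {p x y : ℕ} [Fact p.Prime]

theorem padicValNat_sub_eq_min (hy : y ≠ 0) (hxy : y < x)
    (hval : padicValNat p x ≠ padicValNat p y) :
    padicValNat p (x - y) = min (padicValNat p x) (padicValNat p y) := by
  have hxy' : (x : ℚ) + -y ≠ 0 := by
    rw [← sub_eq_add_neg, sub_ne_zero]
    exact_mod_cast hxy.ne'
  have hx : (x : ℚ) ≠ 0 := by exact_mod_cast (Nat.zero_lt_of_lt hxy).ne'
  have hy' : -(y : ℚ) ≠ 0 := neg_ne_zero.2 (Nat.cast_ne_zero.2 hy)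
  have key := padicValRat.add_eq_min (p := p) hxy' hx hy' (by simpa using hval)
  rw [← sub_eq_add_neg, ← Nat.cast_sub hxy.le, padicValRat.neg] at key
  exact_mod_cast key

theorem padicValNat_powDiffQuot {n : ℕ} (hy : y ≠ 0) (hxy : y < x) (hn : n ≠ 0)
    (hval : padicValNat p x ≠ padicValNat p y) :
    padicValNat p (powDiffQuot x y n) = (n - 1) * min (padicValNat p x) (padicValNat p y) := by
  have hpow : padicValNat p (x ^ n) ≠ padicValNat p (y ^ n) := by
    simpa [padicValNat.pow, hn] using hval
  rw [powDiffQuot, padicValNat.div_of_dvd (Nat.sub_dvd_pow_sub_pow x y n),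
    padicValNat_sub_eq_min hy hxy hval,
    padicValNat_sub_eq_min (pow_ne_zero n hy) (Nat.pow_lt_pow_left hxy hn) hpow,
    padicValNat.pow, padicValNat.pow, Nat.mul_min_mul_left, Nat.sub_one_mul]

end Valuation

section Totient

theorem isPrimePow_of_not_four_dvd_totient {M : ℕ} (hM : Odd M) (hM1 : M ≠ 1)
    (h : ¬ 4 ∣ φ M) : IsPrimePow M := by
  induction M using Nat.recOnPosPrimePosCoprime with
  | prime_pow p k hp hk => exact hp.isPrimePow.pow hk.ne'
  | zero => exact absurd hM Nat.not_odd_zero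
  | one => exact absurd rfl hM1
  | coprime a b ha hb hab =>
    obtain ⟨ha_odd, hb_odd⟩ := Nat.odd_mul.1 hM
    have two_dvd_totient {c : ℕ} (hc : 1 < c) (hc_odd : Odd c) : 2 ∣ φ c :=
      (Nat.totient_even (by obtain ⟨d, rfl⟩ := hc_odd; omega)).two_dvd
    rw [Nat.totient_mul hab] at h
    exact absurd (mul_dvd_mul (two_dvd_totient ha ha_odd) (two_dvd_totient hb hb_odd)) h

theorem isPrimePow_of_not_two_pow_dvd_totient {e M : ℕ} (hM : Odd M) (hM1 : M ≠ 1)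
    (h : ¬ 2 ^ (e + 1) ∣ φ (2 ^ e * M)) : e ≠ 0 ∧ IsPrimePow M := by
  rw [Nat.totient_mul ((Nat.coprime_two_left.2 hM).pow_left e)] at h
  cases e with
  | zero =>
    have hM2 : 2 < M := by obtain ⟨d, rfl⟩ := hM; omega
    exact absurd (by simpa using (Nat.totient_even hM2).two_dvd) h
  | succ e =>
    rw [Nat.totient_prime_pow_succ Nat.prime_two, show 2 - 1 = 1 from rfl, mul_one,
      add_assoc, pow_add, Nat.mul_dvd_mul_iff_left (by positivity)] at h
    exact ⟨e.succ_ne_zero, isPrimePow_of_not_four_dvd_totient hM hM1 h⟩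

theorem totient_prime_pow_mul_prime_pow_mul {p q i j : ℕ} (hp : p.Prime) (hq : q.Prime)
    (hpq : p ≠ q) (hi : i ≠ 0) (hj : j ≠ 0) :
    φ (p ^ i * q ^ j) * (p * q) = p ^ i * q ^ j * ((p - 1) * (q - 1)) := by
  have h := Nat.totient_mul_prod_primeFactors (p ^ i * q ^ j)
  rwa [Nat.primeFactors_mul (pow_ne_zero i hp.ne_zero) (pow_ne_zero j hq.ne_zero),
    Nat.primeFactors_prime_pow hi hp, Nat.primeFactors_prime_pow hj hq,
    Finset.singleton_union, Finset.prod_pair hpq, Finset.prod_pair hpq] at h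

theorem le_two_mul_totient_two_pow (e : ℕ) : 2 ^ e ≤ 2 * φ (2 ^ e) := by
  cases e with
  | zero => simp
  | succ e =>
    rw [Nat.totient_prime_pow_succ Nat.prime_two, show 2 - 1 = 1 from rfl, mul_one, pow_succ']

theorem two_mul_prime_mul_eq_of_totient_mul_eq {p e k z a b : ℕ} (hp : p.Prime) (hp2 : p ≠ 2)
    (he : e ≠ 0) (hk : k ≠ 0) (hz : 0 < z) (hN : z * b = 2 ^ e * p ^ k)
    (h : φ (z * b) = z * a) : 2 * p * a = (p - 1) * b := by
  have key := totient_prime_pow_mul_prime_pow_mul Nat.prime_two hp hp2.symm he hk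
  rw [← hN, h] at key
  apply Nat.eq_of_mul_eq_mul_left hz
  linarith

theorem exists_prime_of_totient_mul_eq {z a b : ℕ} (hz : 0 < z) (hab : 2 * a < b)
    (hval : padicValNat 2 a ≤ padicValNat 2 b) (h : φ (z * b) = z * a) :
    ∃ p e k : ℕ, p.Prime ∧ p ≠ 2 ∧ e ≠ 0 ∧ k ≠ 0 ∧ z * b = 2 ^ e * p ^ k := by
  have hN : z * b ≠ 0 := (Nat.mul_pos hz (Nat.zero_lt_of_lt hab)).ne'
  have hφ : z * a ≠ 0 := h ▸ (Nat.totient_pos.2 (Nat.pos_of_ne_zero hN)).ne'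
  obtain ⟨e, M, hM, hNM⟩ := Nat.exists_eq_two_pow_mul_odd hN
  have hM1 : M ≠ 1 := by
    rintro rfl
    have hle := le_two_mul_totient_two_pow e
    rw [← mul_one (2 ^ e), ← hNM, h] at hle
    nlinarith
  have hval_N : padicValNat 2 (z * b) = e := by
    rw [hNM, padicValNat.mul (by positivity) hM.pos.ne', padicValNat.prime_pow,
      padicValNat.eq_zero_of_not_dvd hM.not_two_dvd_nat, add_zero]
  have hnd : ¬ 2 ^ (e + 1) ∣ φ (2 ^ e * M) := by
    rw [← hNM, h, padicValNat_dvd_iff_le hφ, not_le, Nat.lt_succ_iff, ← hval_N,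
      padicValNat.mul hz.ne' (right_ne_zero_of_mul hφ),
      padicValNat.mul hz.ne' (right_ne_zero_of_mul hN)]
    exact Nat.add_le_add_left hval _
  obtain ⟨he, hpow⟩ := isPrimePow_of_not_two_pow_dvd_totient hM hM1 hnd
  obtain ⟨p, k, hp, hk, rfl⟩ := (isPrimePow_nat_iff M).1 hpow
  refine ⟨p, e, k, hp, ?_, he, hk.ne', hNM⟩
  rintro rfl
  exact Nat.not_even_iff_odd.2 hM (even_two.pow_of_ne_zero hk.ne')

end Totient

theorem totient_two_pow_mul_mersenne_pow {m β u : ℕ} (hp : (2 ^ m - 1).Prime) (hβ : β ≠ 0) :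
    φ (2 ^ β * (2 ^ m - 1) ^ u * (2 ^ m - 1)) =
      2 ^ β * (2 ^ m - 1) ^ u * (2 ^ (m - 1) - 1) := by
  obtain ⟨n, rfl⟩ : ∃ n, m = n + 1 :=
    Nat.exists_eq_succ_of_ne_zero (by rintro rfl; exact Nat.not_prime_zero hp)
  obtain ⟨r, hr⟩ : ∃ r, 2 ^ n = r + 1 := Nat.exists_eq_succ_of_ne_zero (by positivity)
  have hp_eq : 2 ^ (n + 1) - 1 = 2 * r + 1 := by omega
  rw [hp_eq] at hp ⊢
  have key := totient_prime_pow_mul_prime_pow_mul Nat.prime_two hp (by omega) hβ u.succ_ne_zero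
  rw [Nat.add_sub_cancel, hr, mul_assoc, ← pow_succ]
  apply Nat.eq_of_mul_eq_mul_right (show 0 < 2 * (2 * r + 1) by positivity)
  rw [key]
  simp only [Nat.add_sub_cancel, Nat.succ_eq_add_one]
  ring

theorem eq_two_pow_mul_mersenne_pow_of_totient {x y z m n : ℕ} (hz : 0 < z) (hy : 0 < y)
    (hxy : y < x) (hmn : n < m)
    (hval : padicValNat 2 (powDiffQuot x y n) ≤ padicValNat 2 (powDiffQuot x y m))
    (h : φ (z * powDiffQuot x y m) = z * powDiffQuot x y n) :
    x = 2 ∧ y = 1 ∧ m = n + 1 ∧ (2 ^ m - 1).Prime ∧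
      ∃ β u : ℕ, 1 ≤ β ∧ z = 2 ^ β * (2 ^ m - 1) ^ u := by
  obtain ⟨p, e, k, hp, hp2, he, hk, hN⟩ :=
    exists_prime_of_totient_mul_eq hz (two_mul_powDiffQuot_lt hy hxy hmn) hval h
  have hratio := two_mul_prime_mul_eq_of_totient_mul_eq hp hp2 he hk hz hN h
  obtain ⟨q, rfl⟩ : ∃ q, p = q + 3 := Nat.exists_eq_add_of_le' (hp.two_le.lt_of_ne' hp2)
  have hle : powDiffQuot x y m ≤ 3 * powDiffQuot x y n := by
    rw [show q + 3 - 1 = q + 2 from rfl] at hratio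
    nlinarith
  obtain ⟨rfl, rfl, rfl⟩ := eq_two_and_eq_one_of_powDiffQuot_le hy hxy hmn hle
  have hsucc : powDiffQuot 2 1 (n + 1) = 2 * powDiffQuot 2 1 n + 1 := by
    simpa using powDiffQuot_succ one_lt_two n
  have hp_eq : 2 ^ (n + 1) - 1 = q + 3 := by
    rw [← powDiffQuot_two_one, hsucc]
    rw [hsucc, show q + 3 - 1 = q + 2 from rfl] at hratio
    linarith
  obtain ⟨u, rfl⟩ := Nat.exists_eq_succ_of_ne_zero hk
  refine ⟨rfl, rfl, rfl, hp_eq ▸ hp, e, u, Nat.one_le_iff_ne_zero.2 he, ?_⟩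
  rw [powDiffQuot_two_one, hp_eq, pow_succ, ← mul_assoc] at hN
  rw [hp_eq]
  exact Nat.eq_of_mul_eq_mul_right hp.pos hN

theorem phi_eq_two_adic_valuations_differ_general {x y z m n : ℕ} (hz : 0 < z) (hy : 0 < y)
    (hxy : y < x) (hmn : n < m)
    (hval : padicValNat 2 (powDiffQuot x y n) ≤ padicValNat 2 (powDiffQuot x y m)) :
    φ (z * powDiffQuot x y m) = z * powDiffQuot x y n ↔
      (x = 2 ∧ y = 1 ∧ m.Prime ∧ (2 ^ m - 1).Prime ∧ n = m - 1 ∧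
        ∃ β u : ℕ, 1 ≤ β ∧ z = 2 ^ β * (2 ^ m - 1) ^ u) := by
  constructor
  · intro h
    obtain ⟨hx, hy, hm, hp, hz⟩ := eq_two_pow_mul_mersenne_pow_of_totient hz hy hxy hmn hval h
    exact ⟨hx, hy, .of_mersenne hp, hp, Nat.eq_sub_of_add_eq hm.symm, hz⟩
  · rintro ⟨rfl, rfl, -, hp, rfl, β, u, hβ, rfl⟩
    rw [powDiffQuot_two_one, powDiffQuot_two_one]
    exact totient_two_pow_mul_mersenne_pow hp (Nat.one_le_iff_ne_zero.1 hβ)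

theorem phi_eq_two_adic_valuations_differ (x y z m n : ℕ)
    (hx : 0 < x) (hy : 0 < y) (hz : 0 < z) (hm : 0 < m) (hn : 0 < n)
    (hxy : y < x) (hmn : n < m)
    (hval : padicValNat 2 x ≠ padicValNat 2 y) :
    Nat.totient (z * ((x ^ m - y ^ m) / (x - y))) =
      z * ((x ^ n - y ^ n) / (x - y)) ↔
    (x = 2 ∧ y = 1 ∧ Nat.Prime m ∧ Nat.Prime (2 ^ m - 1) ∧ n = m - 1 ∧
      ∃ β u : ℕ, 1 ≤ β ∧ z = 2 ^ β * (2 ^ m - 1) ^ u) := by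
  apply phi_eq_two_adic_valuations_differ_general hz hy hxy hmn
  rw [padicValNat_powDiffQuot hy.ne' hxy hn.ne' hval,
    padicValNat_powDiffQuot hy.ne' hxy hm.ne' hval]
  exact Nat.mul_le_mul_right _ (Nat.sub_le_sub_right hmn.le 1)
end

section
/- Under the standing assumptions, let d be a divisor of m with d ≥ 40, and let S_d = Σ_{p} 1/p, where the sum (taken in the real numbers) runs over the odd primes p with p ∤ x₁·y₁ and ℓ_p = d. Then S_d < 1/(4d) + 1/(d·log(d+1)) + 2·log log d / φ(d) + 2·log log x / (φ(d)·log d). -/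
/-- `ellp a b p` is the least positive integer `ℓ` such that `p ∣ a ^ ℓ - b ^ ℓ`
(and `0` if no such integer exists). -/
noncomputable def ellp (a b p : ℕ) : ℕ := sInf {ℓ : ℕ | 0 < ℓ ∧ p ∣ a ^ ℓ - b ^ ℓ}

/-!
A prime `p` with `ℓ_p = d` satisfies `p ≡ 1 [MOD d]` and divides `x₁ ^ d - y₁ ^ d`, whose logarithm
is at most `K = d * log x`. At most `K / log (d + 1)` such primes exist, so those above `d * K`
contribute at most `1 / (d * log (d + 1))`. The others are of the form `k * d + 1` with `k ≤ K`, so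
it remains to bound the sum of `1 / k` over the `k ≤ K` for which `k * d + 1` is prime by
`d / φ d * (2 * log (log K))`. Small `k` are handled by discarding the residue classes modulo `210`
in which `k * d + 1` is divisible by `2`, `3`, `5` or `7`. For larger `k`, Selberg's sieve bounds
the contribution of the range `[exp a, exp (a + 2)]` by a quantity of order `1 / a`, and these
bounds are summed along `a ↦ a + 2`.
-/

section HarmonicSums

open Finset Real

lemma intervalIntegrable_affine_div_sq {A B : ℝ} (hA : 0 < A) (hAB : A ≤ B) (δ κ : ℝ) :
    IntervalIntegrable (fun t ↦ (δ * t + κ) / t ^ 2) MeasureTheory.volume A B :=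
  ContinuousOn.intervalIntegrable fun t ht ↦ by
    have := hA.trans_le (Set.uIcc_of_le hAB ▸ ht).1
    fun_prop (disch := positivity)

lemma integral_affine_div_sq {A B : ℝ} (hA : 0 < A) (hAB : A ≤ B) (δ κ : ℝ) :
    ∫ t in A..B, (δ * t + κ) / t ^ 2 = δ * log (B / A) + κ * (1 / A - 1 / B) := by
  have hB := hA.trans_le hAB
  have hne (t : ℝ) (ht : t ∈ Set.uIcc A B) : t ≠ 0 :=
    (hA.trans_le (Set.uIcc_of_le hAB ▸ ht).1).ne'
  rw [intervalIntegral.integral_eq_sub_of_hasDerivAt (f := fun t ↦ δ * log t - κ * t⁻¹)]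
  · rw [log_div hB.ne' hA.ne']
    ring
  · intro t ht
    refine (((hasDerivAt_log (hne t ht)).const_mul δ).fun_sub
      ((hasDerivAt_inv (hne t ht)).const_mul κ)).congr_deriv ?_
    have := hne t ht
    field_simp
    ring
  · exact intervalIntegrable_affine_div_sq hA hAB δ κ

lemma intervalIntegrable_sum_Icc_div_sq {A B : ℝ} (hA : 0 < A) (hAB : A ≤ B) (c : ℕ → ℝ) :
    IntervalIntegrable (fun t ↦ (∑ k ∈ Icc 0 ⌊t⌋₊, c k) / t ^ 2) MeasureTheory.volume A B := by
  rw [intervalIntegrable_iff_integrableOn_Icc_of_le hAB]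
  have hinv : MeasureTheory.IntegrableOn (fun t : ℝ ↦ (t ^ 2)⁻¹) (Set.Icc A B) :=
    ContinuousOn.integrableOn_Icc fun t ht ↦ by
      have := hA.trans_le ht.1
      fun_prop (disch := positivity)
  simpa only [div_eq_inv_mul] using integrableOn_mul_sum_Icc c hA.le hinv

lemma sum_div_eq_sub_add_integral {A B : ℝ} (hA : 0 < A) (hAB : A ≤ B) (c : ℕ → ℝ) :
    ∑ k ∈ Ioc ⌊A⌋₊ ⌊B⌋₊, c k / k = (∑ k ∈ Icc 0 ⌊B⌋₊, c k) / B - (∑ k ∈ Icc 0 ⌊A⌋₊, c k) / A +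
      ∫ t in A..B, (∑ k ∈ Icc 0 ⌊t⌋₊, c k) / t ^ 2 := by
  have hderiv : MeasureTheory.IntegrableOn (deriv fun t : ℝ ↦ t⁻¹) (Set.Icc A B) := by
    rw [deriv_inv']
    exact ContinuousOn.integrableOn_Icc fun t ht ↦ by
      have := hA.trans_le ht.1
      fun_prop (disch := positivity)
  have habel := sum_mul_eq_sub_sub_integral_mul c hA.le hAB
    (fun t ht ↦ (hasDerivAt_inv (hA.trans_le ht.1).ne').differentiableAt) hderiv
  simpa only [deriv_inv', neg_mul, ← div_eq_inv_mul, MeasureTheory.integral_neg, sub_neg_eq_add,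
    intervalIntegral.integral_of_le hAB] using habel

/-- Abel summation, with `∑ k ≤ t, c k = δ * t + κ + θ t` for some `0 ≤ θ t ≤ 1`: the affine part
contributes exactly `δ * log (B / A)`. -/
lemma abs_sum_div_sub_mul_log_le {c : ℕ → ℝ} {δ κ : ℝ}
    (hlower : ∀ t : ℝ, 0 ≤ t → δ * t + κ ≤ ∑ k ∈ Icc 0 ⌊t⌋₊, c k)
    (hupper : ∀ t : ℝ, 0 ≤ t → ∑ k ∈ Icc 0 ⌊t⌋₊, c k ≤ δ * t + κ + 1)
    {A B : ℝ} (hA : 0 < A) (hAB : A ≤ B) :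
    |∑ k ∈ Ioc ⌊A⌋₊ ⌊B⌋₊, c k / k - δ * log (B / A)| ≤ 1 / A := by
  have hB := hA.trans_le hAB
  have hint := intervalIntegrable_sum_Icc_div_sq hA hAB c
  have hlow : ∫ t in A..B, (δ * t + κ) / t ^ 2 ≤ ∫ t in A..B, (∑ k ∈ Icc 0 ⌊t⌋₊, c k) / t ^ 2 :=
    intervalIntegral.integral_mono_on hAB
      (intervalIntegrable_affine_div_sq hA hAB δ κ) hint fun t ht ↦ by
      gcongr
      exact hlower t (hA.le.trans ht.1)
  have hupp : ∫ t in A..B, (∑ k ∈ Icc 0 ⌊t⌋₊, c k) / t ^ 2 ≤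
      ∫ t in A..B, (δ * t + (κ + 1)) / t ^ 2 :=
    intervalIntegral.integral_mono_on hAB hint
      (intervalIntegrable_affine_div_sq hA hAB δ (κ + 1)) fun t ht ↦ by
      gcongr
      linarith only [hupper t (hA.le.trans ht.1)]
  rw [integral_affine_div_sq hA hAB] at hlow hupp
  have hend (t : ℝ) (ht : 0 < t) : δ + κ * (1 / t) ≤ (∑ k ∈ Icc 0 ⌊t⌋₊, c k) / t ∧
      (∑ k ∈ Icc 0 ⌊t⌋₊, c k) / t ≤ δ + (κ + 1) * (1 / t) := by
    rw [le_div_iff₀ ht, div_le_iff₀ ht, add_mul, add_mul, mul_assoc, mul_assoc,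
      one_div_mul_cancel ht.ne', mul_one, mul_one, ← add_assoc]
    exact ⟨hlower t ht.le, hupper t ht.le⟩
  rw [sum_div_eq_sub_add_integral hA hAB, abs_le]
  constructor <;> linarith [hend A hA, hend B hB]

lemma card_filter_modEq_bounds {q : ℕ} (hq : 0 < q) (r N : ℕ) :
    N + 1 ≤ q * #{k ∈ Icc 0 N | k ≡ r [MOD q]} + r % q ∧
      q * #{k ∈ Icc 0 N | k ≡ r [MOD q]} + r % q ≤ N + q := by
  rw [← Nat.range_succ_eq_Icc_zero, ← Nat.count_eq_card_filter_range]
  have hcount := Nat.count_modEq_card_eq_ceil (N + 1) hq r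
  have hq' : (0 : ℚ) < q := mod_cast hq
  have hlower := Int.le_ceil (((N + 1 : ℕ) - (r % q : ℕ) : ℚ) / q)
  have hupper := Int.ceil_lt_add_one (((N + 1 : ℕ) - (r % q : ℕ) : ℚ) / q)
  rw [← hcount, Int.cast_natCast] at hlower hupper
  rw [div_le_iff₀ hq', sub_le_iff_le_add] at hlower
  rw [div_add_one hq'.ne', lt_div_iff₀ hq', sub_add_eq_add_sub, lt_sub_iff_add_lt] at hupper
  norm_cast at hlower hupper
  rw [mul_comm]
  omega

lemma abs_sum_inv_modEq_sub_le {q : ℕ} (hq : 0 < q) (r : ℕ) {A B : ℝ} (hA : 0 < A)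
    (hAB : A ≤ B) :
    |∑ k ∈ Ioc ⌊A⌋₊ ⌊B⌋₊ with k ≡ r [MOD q], (1 : ℝ) / k - log (B / A) / q| ≤ 1 / A := by
  have hq' : (0 : ℝ) < q := mod_cast hq
  have hcount (t : ℝ) : ∑ k ∈ Icc 0 ⌊t⌋₊, (if k ≡ r [MOD q] then (1 : ℝ) else 0) =
      #{k ∈ Icc 0 ⌊t⌋₊ | k ≡ r [MOD q]} := sum_boole _ _
  have h := abs_sum_div_sub_mul_log_le (c := fun k ↦ if k ≡ r [MOD q] then (1 : ℝ) else 0)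
    (δ := 1 / q) (κ := -((r % q : ℕ) : ℝ) / q) ?_ ?_ hA hAB
  · simpa only [ite_div, zero_div, ← sum_filter, one_div_mul_eq_div] using h
  · intro t _
    have hlower : ((⌊t⌋₊ + 1 : ℕ) : ℝ) ≤ (q * _ + r % q : ℕ) :=
      Nat.cast_le.mpr (card_filter_modEq_bounds hq r ⌊t⌋₊).1
    push_cast at hlower
    rw [hcount, one_div_mul_eq_div, ← add_div, div_le_iff₀' hq']
    linarith only [hlower, Nat.lt_floor_add_one t]
  · intro t ht
    have hupper : ((q * _ + r % q : ℕ) : ℝ) ≤ (⌊t⌋₊ + q : ℕ) :=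
      Nat.cast_le.mpr (card_filter_modEq_bounds hq r ⌊t⌋₊).2
    push_cast at hupper
    rw [hcount, one_div_mul_eq_div, ← add_div, ← sub_le_iff_le_add, le_div_iff₀' hq']
    linarith only [hupper, Nat.floor_le ht]

end HarmonicSums

section SelbergSieve

open Finset BoundingSieve
open scoped ArithmeticFunction.Moebius

lemma sum_moebius_divisors (n : ℕ) : ∑ d ∈ n.divisors, (μ d : ℝ) = if n = 1 then 1 else 0 := by
  rw [← ArithmeticFunction.one_apply, ← ArithmeticFunction.coe_moebius_mul_coe_zeta,
    ArithmeticFunction.coe_mul_zeta_apply]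
  rfl

lemma sum_moebius_divisors_filter_dvd {k n : ℕ} (hn : Squarefree n) (hkn : k ∣ n) :
    ∑ d ∈ n.divisors with k ∣ d, (μ d : ℝ) = if n = k then (μ k : ℝ) else 0 := by
  obtain ⟨t, rfl⟩ := hkn
  have hk : k ≠ 0 := left_ne_zero_of_mul hn.ne_zero
  have ht : t ≠ 0 := right_ne_zero_of_mul hn.ne_zero
  have hmultiples : {d ∈ (k * t).divisors | k ∣ d} = t.divisors.image (k * ·) := by
    ext d
    simp only [mem_filter, Nat.mem_divisors, mem_image]
    constructor
    · rintro ⟨⟨hdvd, -⟩, e, rfl⟩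
      exact ⟨e, ⟨Nat.dvd_of_mul_dvd_mul_left (Nat.pos_of_ne_zero hk) hdvd, ht⟩, rfl⟩
    · rintro ⟨e, ⟨hdvd, -⟩, rfl⟩
      exact ⟨⟨Nat.mul_dvd_mul_left k hdvd, hn.ne_zero⟩, dvd_mul_right k e⟩
  have hcoprime : k.Coprime t := Nat.coprime_of_squarefree_mul hn
  have hμ : ∀ e ∈ t.divisors, (μ (k * e) : ℝ) = μ k * μ e := fun e he ↦ by
    exact_mod_cast ArithmeticFunction.isMultiplicative_moebius.map_mul_of_coprime
      (hcoprime.coprime_dvd_right (Nat.dvd_of_mem_divisors he))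
  rw [hmultiples, sum_image fun _ _ _ _ h ↦ mul_left_cancel₀ hk h, sum_congr rfl hμ, ← mul_sum,
    sum_moebius_divisors]
  simp only [mul_ite, mul_one, mul_zero, mul_eq_left₀ hk]

variable (s : SelbergSieve)

/-- The moduli carrying a weight in Selberg's sieve: the divisors `l` of the product of the sifting
primes with `l ^ 2 ≤ level`. -/
noncomputable def selbergSupport : Finset ℕ :=
  {l ∈ s.prodPrimes.divisors | (l : ℝ) ^ 2 ≤ s.level}

/-- The sum of the Selberg terms over the support of the weights. Its inverse is the minimum of the
quadratic form `mainSum ∘ lambdaSquared` over weights with `w 1 = 1`. -/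
noncomputable def selbergMass : ℝ := ∑ l ∈ selbergSupport s, s.selbergTerms l

/-- Selberg's weights, which attain the minimum `(selbergMass s)⁻¹`. They vanish off
`selbergSupport s`, because that set is closed under taking divisors. -/
noncomputable def selbergWeight (d : ℕ) : ℝ :=
  μ d / (s.nu d * selbergMass s) * ∑ l ∈ selbergSupport s with d ∣ l, s.selbergTerms l

variable {s}

lemma dvd_prodPrimes_of_mem_selbergSupport {l : ℕ} (hl : l ∈ selbergSupport s) :
    l ∣ s.prodPrimes :=
  Nat.dvd_of_mem_divisors (mem_filter.mp hl).1

lemma mem_selbergSupport_of_dvd {k l : ℕ} (hl : l ∈ selbergSupport s) (hkl : k ∣ l) :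
    k ∈ selbergSupport s := by
  obtain ⟨hlP, hlevel⟩ := mem_filter.mp hl
  have hkle : k ≤ l := Nat.le_of_dvd (Nat.pos_of_mem_divisors hlP) hkl
  refine mem_filter.mpr ⟨Nat.mem_divisors.mpr
    ⟨hkl.trans (Nat.dvd_of_mem_divisors hlP), prodPrimes_ne_zero⟩, le_trans ?_ hlevel⟩
  gcongr

variable (s) in
lemma one_mem_selbergSupport : 1 ∈ selbergSupport s := by
  simp [selbergSupport, prodPrimes_ne_zero, s.one_le_level]

variable (s) in
lemma selbergMass_pos : 0 < selbergMass s :=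
  sum_pos (fun _ hl ↦ selbergTerms_pos (dvd_prodPrimes_of_mem_selbergSupport hl))
    ⟨1, one_mem_selbergSupport s⟩

variable (s) in
lemma selbergWeight_one : selbergWeight s 1 = 1 := by
  simp only [selbergWeight, ArithmeticFunction.moebius_apply_one, Int.cast_one, s.nu_mult.map_one,
    one_mul, one_dvd, filter_true]
  exact one_div_mul_cancel (selbergMass_pos s).ne'

lemma selbergWeight_eq_zero {d : ℕ} (hd : d ∉ selbergSupport s) : selbergWeight s d = 0 := by
  have hempty : {l ∈ selbergSupport s | d ∣ l} = ∅ :=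
    filter_eq_empty_iff.mpr fun _ hl hdl ↦ hd (mem_selbergSupport_of_dvd hl hdl)
  rw [selbergWeight, hempty, sum_empty, mul_zero]

lemma coprime_of_mul_mem_selbergSupport {d m : ℕ} (h : d * m ∈ selbergSupport s) :
    d.Coprime m :=
  Nat.coprime_of_squarefree_mul
    (squarefree_of_dvd_prodPrimes (dvd_prodPrimes_of_mem_selbergSupport h))

lemma inv_nu_mul_selbergTerms_mul {d m : ℕ} (h : d * m ∈ selbergSupport s) :
    (s.nu d)⁻¹ * s.selbergTerms (d * m) = ∑ k ∈ d.divisors, s.selbergTerms (k * m) := by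
  have hcoprime := coprime_of_mul_mem_selbergSupport h
  have hd : d ∣ s.prodPrimes := (dvd_mul_right d m).trans (dvd_prodPrimes_of_mem_selbergSupport h)
  rw [selbergTerms_isMultiplicative.map_mul_of_coprime hcoprime, ← mul_assoc,
    mul_comm _ (s.selbergTerms d), ← sum_divisors_selbergTerms_eq_selbergTerms_mul_nu_inv hd,
    ← sum_filter, Nat.divisors_filter_dvd_of_dvd prodPrimes_ne_zero hd, sum_mul]
  exact sum_congr rfl fun k hk ↦ (selbergTerms_isMultiplicative.map_mul_of_coprime
    (hcoprime.coprime_dvd_left (Nat.dvd_of_mem_divisors hk))).symm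

/-- Writing `l = d * m`, the pairs `(k, l)` with `k ∣ d ∣ l` inject into the support by
`(k, l) ↦ k * m`, since `k = gcd (k * m) d`. -/
lemma inv_nu_mul_sum_selbergTerms_le_selbergMass {d : ℕ} (hd : 0 < d) :
    (s.nu d)⁻¹ * ∑ l ∈ selbergSupport s with d ∣ l, s.selbergTerms l ≤ selbergMass s := by
  have hfactor : ∀ l ∈ {l ∈ selbergSupport s | d ∣ l}, (s.nu d)⁻¹ * s.selbergTerms l =
      ∑ k ∈ d.divisors, s.selbergTerms (k * (l / d)) := by
    simp only [mem_filter]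
    rintro _ ⟨hl, m, rfl⟩
    rw [Nat.mul_div_cancel_left m hd, inv_nu_mul_selbergTerms_mul hl]
  rw [mul_sum, sum_congr rfl hfactor, ← sum_product', selbergMass]
  have hgcd : ∀ q ∈ {l ∈ selbergSupport s | d ∣ l} ×ˢ d.divisors,
      (q.2 * (q.1 / d)).gcd d = q.2 := by
    simp only [mem_product, mem_filter, Nat.mem_divisors]
    rintro ⟨_, k⟩ ⟨⟨hl, m, rfl⟩, hk, -⟩
    rw [Nat.mul_div_cancel_left m hd,
      (coprime_of_mul_mem_selbergSupport hl).symm.gcd_mul_right_cancel, Nat.gcd_eq_left hk]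
  have hinj : Set.InjOn (fun q : ℕ × ℕ ↦ q.2 * (q.1 / d))
      ({l ∈ selbergSupport s | d ∣ l} ×ˢ d.divisors : Finset (ℕ × ℕ)) := by
    intro q hq r hr (h : q.2 * (q.1 / d) = r.2 * (r.1 / d))
    have hsnd : q.2 = r.2 := by rw [← hgcd q hq, ← hgcd r hr, h]
    obtain ⟨hq₁, hq₂⟩ := mem_product.mp hq
    have hfst : q.1 / d = r.1 / d :=
      Nat.eq_of_mul_eq_mul_left (Nat.pos_of_mem_divisors hq₂) (h.trans (by rw [hsnd]))
    rw [Nat.div_eq_iff_eq_mul_left hd (mem_filter.mp hq₁).2,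
      Nat.div_mul_cancel (mem_filter.mp (mem_product.mp hr).1).2] at hfst
    exact Prod.ext hfst hsnd
  rw [← sum_image (f := s.selbergTerms) hinj]
  refine sum_le_sum_of_subset_of_nonneg (image_subset_iff.mpr ?_)
    fun l hl _ ↦ (selbergTerms_pos (dvd_prodPrimes_of_mem_selbergSupport hl)).le
  simp only [mem_product, mem_filter, Nat.mem_divisors]
  rintro ⟨l, k⟩ ⟨⟨hl, hdl⟩, hk, -⟩
  refine mem_selbergSupport_of_dvd hl ?_
  simpa only [Nat.mul_div_cancel' hdl] using mul_dvd_mul_right hk (l / d)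

lemma abs_selbergWeight_le_one (d : ℕ) : |selbergWeight s d| ≤ 1 := by
  by_cases hd : d ∈ selbergSupport s
  · have hdP := dvd_prodPrimes_of_mem_selbergSupport hd
    have hν : 0 < s.nu d := nu_pos_of_dvd_prodPrimes hdP
    have hS := selbergMass_pos s
    have hμ : |(μ d : ℝ)| ≤ 1 := by exact_mod_cast ArithmeticFunction.abs_moebius_le_one
    have hsum : 0 ≤ ∑ l ∈ selbergSupport s with d ∣ l, s.selbergTerms l := sum_nonneg fun l hl ↦
      (selbergTerms_pos (dvd_prodPrimes_of_mem_selbergSupport (mem_filter.mp hl).1)).le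
    calc |selbergWeight s d|
        = |(μ d : ℝ)| * ((s.nu d)⁻¹ * ∑ l ∈ selbergSupport s with d ∣ l, s.selbergTerms l) /
            selbergMass s := by
          rw [selbergWeight, abs_mul, abs_div, abs_of_pos (mul_pos hν hS), abs_of_nonneg hsum]
          field_simp
      _ ≤ 1 * selbergMass s / selbergMass s := by
          gcongr
          exact inv_nu_mul_sum_selbergTerms_le_selbergMass
            (Nat.pos_of_ne_zero (squarefree_of_dvd_prodPrimes hdP).ne_zero)
      _ = 1 := by rw [one_mul, div_self hS.ne']
  · simp [selbergWeight_eq_zero hd]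

lemma sum_nu_mul_selbergWeight (l : ℕ) :
    (∑ d ∈ s.prodPrimes.divisors, if l ∣ d then s.nu d * selbergWeight s d else 0) =
      if l ∈ selbergSupport s then μ l * s.selbergTerms l / selbergMass s else 0 := by
  have hweight : ∀ d ∈ s.prodPrimes.divisors, s.nu d * selbergWeight s d =
      ∑ e ∈ selbergSupport s, if d ∣ e then μ d * s.selbergTerms e / selbergMass s else 0 := by
    intro d hd
    have hν := nu_ne_zero (Nat.dvd_of_mem_divisors hd)
    have hS := (selbergMass_pos s).ne'
    rw [← sum_filter, selbergWeight, mul_sum, mul_sum]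
    refine sum_congr rfl fun e _ ↦ ?_
    field_simp
  have hcollapse : ∀ e ∈ selbergSupport s,
      ∑ d ∈ s.prodPrimes.divisors with l ∣ d,
        (if d ∣ e then μ d * s.selbergTerms e / selbergMass s else 0) =
      if e = l then μ l * s.selbergTerms l / selbergMass s else 0 := by
    intro e he
    have heP := dvd_prodPrimes_of_mem_selbergSupport he
    rw [← sum_filter, filter_comm, Nat.divisors_filter_dvd_of_dvd prodPrimes_ne_zero heP,
      ← sum_div, ← sum_mul]
    by_cases hle : l ∣ e
    · rw [sum_moebius_divisors_filter_dvd (squarefree_of_dvd_prodPrimes heP) hle]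
      split_ifs with hel
      · rw [hel]
      · simp only [zero_mul, zero_div]
    · have hempty : {d ∈ e.divisors | l ∣ d} = ∅ := filter_eq_empty_iff.mpr fun d hd hld ↦
        hle (hld.trans (Nat.dvd_of_mem_divisors hd))
      rw [hempty, if_neg (by rintro rfl; exact hle dvd_rfl), sum_empty, zero_mul, zero_div]
  rw [← sum_filter, sum_congr rfl fun d hd ↦ hweight d (mem_filter.mp hd).1, sum_comm,
    sum_congr rfl hcollapse, sum_ite_eq']

variable (s) in
lemma mainSum_lambdaSquared_selbergWeight :
    s.mainSum (lambdaSquared (selbergWeight s)) = (selbergMass s)⁻¹ := by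
  have hterm : ∀ l ∈ s.prodPrimes.divisors, (s.selbergTerms l)⁻¹ *
      (if l ∈ selbergSupport s then μ l * s.selbergTerms l / selbergMass s else 0) ^ 2 =
      if l ∈ selbergSupport s then s.selbergTerms l / selbergMass s ^ 2 else 0 := by
    intro l hl
    have hlP := Nat.dvd_of_mem_divisors hl
    have hg := (selbergTerms_pos hlP).ne'
    have hμ : (μ l : ℝ) ^ 2 = 1 := by
      exact_mod_cast ArithmeticFunction.moebius_sq_eq_one_of_squarefree
        (squarefree_of_dvd_prodPrimes hlP)
    split_ifs
    · rw [div_pow, mul_pow, hμ]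
      field_simp
    · simp only [ne_eq, OfNat.ofNat_ne_zero, not_false_eq_true, zero_pow, mul_zero]
  have hsub : {l ∈ s.prodPrimes.divisors | l ∈ selbergSupport s} = selbergSupport s :=
    (filter_mem_eq_inter).trans (inter_eq_right.mpr (filter_subset _ _))
  rw [mainSum_lambdaSquared_eq_sum_mul_sum_sq]
  simp only [sum_nu_mul_selbergWeight]
  rw [sum_congr rfl hterm, ← sum_filter, hsub, ← sum_div, ← selbergMass]
  have hS := (selbergMass_pos s).ne'
  field_simp

lemma sum_abs_selbergWeight_le :
    ∑ d ∈ s.prodPrimes.divisors, |selbergWeight s d| ≤ #(selbergSupport s) := by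
  calc ∑ d ∈ s.prodPrimes.divisors, |selbergWeight s d|
      = ∑ d ∈ selbergSupport s, |selbergWeight s d| :=
        (sum_subset (filter_subset _ _) fun d _ hd ↦ by
          rw [selbergWeight_eq_zero hd, abs_zero]).symm
    _ ≤ #(selbergSupport s) := by
        simpa only [nsmul_eq_mul, mul_one] using
          sum_le_card_nsmul _ _ 1 fun d _ ↦ abs_selbergWeight_le_one d

lemma sum_abs_lambdaSquared_le (w : ℕ → ℝ) {P : ℕ} (hP : P ≠ 0) :
    ∑ d ∈ P.divisors, |lambdaSquared w d| ≤ (∑ d ∈ P.divisors, |w d|) ^ 2 := by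
  calc ∑ d ∈ P.divisors, |lambdaSquared w d|
      ≤ ∑ d ∈ P.divisors, ∑ d₁ ∈ P.divisors, ∑ d₂ ∈ P.divisors,
          if d = d₁.lcm d₂ then |w d₁| * |w d₂| else 0 := by
        refine sum_le_sum fun d hd ↦ ?_
        have hsub := Nat.divisors_subset_of_dvd hP (Nat.dvd_of_mem_divisors hd)
        calc |lambdaSquared w d|
            ≤ ∑ d₁ ∈ d.divisors, ∑ d₂ ∈ d.divisors,
                |if d = d₁.lcm d₂ then w d₁ * w d₂ else 0| :=
              (abs_sum_le_sum_abs _ _).trans (sum_le_sum fun _ _ ↦ abs_sum_le_sum_abs _ _)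
          _ ≤ ∑ d₁ ∈ P.divisors, ∑ d₂ ∈ P.divisors,
                |if d = d₁.lcm d₂ then w d₁ * w d₂ else 0| :=
              (sum_le_sum fun _ _ ↦ sum_le_sum_of_subset_of_nonneg hsub
                fun _ _ _ ↦ abs_nonneg _).trans (sum_le_sum_of_subset_of_nonneg hsub
                fun _ _ _ ↦ sum_nonneg fun _ _ ↦ abs_nonneg _)
          _ = _ := by simp only [apply_ite abs, abs_mul, abs_zero]
    _ = ∑ d₁ ∈ P.divisors, ∑ d₂ ∈ P.divisors, |w d₁| * |w d₂| := by
        rw [sum_comm]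
        refine sum_congr rfl fun d₁ hd₁ ↦ ?_
        rw [sum_comm]
        refine sum_congr rfl fun d₂ hd₂ ↦ ?_
        rw [sum_ite_eq', if_pos]
        exact Nat.mem_divisors.mpr ⟨Nat.lcm_dvd (Nat.dvd_of_mem_divisors hd₁)
          (Nat.dvd_of_mem_divisors hd₂), hP⟩
    _ = (∑ d ∈ P.divisors, |w d|) ^ 2 := by rw [sq, sum_mul_sum]

theorem siftedSum_le_totalMass_div_selbergMass {C : ℝ}
    (hC : ∀ d, d ∣ s.prodPrimes → |s.rem d| ≤ C) :
    s.siftedSum ≤ s.totalMass / selbergMass s + C * #(selbergSupport s) ^ 2 := by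
  have hC0 : 0 ≤ C := (abs_nonneg _).trans (hC 1 (one_dvd _))
  have herr : s.errSum (lambdaSquared (selbergWeight s)) ≤ C * #(selbergSupport s) ^ 2 := by
    calc s.errSum (lambdaSquared (selbergWeight s))
        ≤ ∑ d ∈ s.prodPrimes.divisors, |lambdaSquared (selbergWeight s) d| * C :=
          sum_le_sum fun d hd ↦
            mul_le_mul_of_nonneg_left (hC d (Nat.dvd_of_mem_divisors hd)) (abs_nonneg _)
      _ = C * ∑ d ∈ s.prodPrimes.divisors, |lambdaSquared (selbergWeight s) d| := by
          rw [← sum_mul, mul_comm]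
      _ ≤ C * #(selbergSupport s) ^ 2 := by
          grw [sum_abs_lambdaSquared_le _ prodPrimes_ne_zero, sum_abs_selbergWeight_le]
  calc s.siftedSum
      ≤ s.totalMass * s.mainSum (lambdaSquared (selbergWeight s)) +
          s.errSum (lambdaSquared (selbergWeight s)) :=
        siftedSum_le_mainSum_errSum_of_upperMoebius _
          (upperMoebius_lambdaSquared _ (selbergWeight_one s))
    _ ≤ s.totalMass / selbergMass s + C * #(selbergSupport s) ^ 2 := by
        rw [mainSum_lambdaSquared_selbergWeight, ← div_eq_mul_inv]
        gcongr

end SelbergSieve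

section TotientSums

open Finset
open scoped Nat

lemma div_totient_eq_prod {n : ℕ} (hn : n ≠ 0) :
    (n : ℝ) / φ n = ∏ p ∈ n.primeFactors, (1 - (p : ℝ)⁻¹)⁻¹ := by
  have htotient : (φ n : ℝ) = n * ∏ p ∈ n.primeFactors, (1 - (p : ℝ)⁻¹) := by
    simpa using congrArg (Rat.cast : ℚ → ℝ) (Nat.totient_eq_mul_prod_factors n)
  rw [htotient, prod_inv_distrib, div_mul_cancel_left₀ (Nat.cast_ne_zero.mpr hn)]

lemma div_totient_le_of_dvd {m n : ℕ} (hmn : m ∣ n) (hn : n ≠ 0) :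
    (m : ℝ) / φ m ≤ n / φ n := by
  rw [div_totient_eq_prod (ne_zero_of_dvd_ne_zero hn hmn), div_totient_eq_prod hn]
  have hfactor (p : ℕ) (hp : p.Prime) : 1 ≤ (1 - (p : ℝ)⁻¹)⁻¹ := by
    have hp' : (1 : ℝ) < p := mod_cast hp.one_lt
    exact (one_le_inv₀ (sub_pos.mpr (inv_lt_one_of_one_lt₀ hp'))).mpr
      (sub_le_self _ (by positivity))
  exact prod_le_prod_of_subset_of_one_le (Nat.primeFactors_mono hmn hn)
    (fun p hp ↦ zero_le_one.trans (hfactor p (Nat.prime_of_mem_primeFactors hp)))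
    fun p hp _ ↦ hfactor p (Nat.prime_of_mem_primeFactors hp)

lemma hasSum_inv_factoredNumbers {n : ℕ} (hn : n ≠ 0) :
    HasSum (fun t : Nat.factoredNumbers n.primeFactors ↦ ((t : ℕ) : ℝ)⁻¹) (n / φ n) := by
  let f : ℕ →* ℝ := ⟨⟨fun t ↦ (t : ℝ)⁻¹, by simp⟩, fun a b ↦ by simp [mul_comm]⟩
  have hf : ∀ {p : ℕ}, p.Prime → ‖f p‖ < 1 := fun {p} hp ↦ by
    change ‖(p : ℝ)⁻¹‖ < 1
    rw [norm_inv, Real.norm_natCast]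
    exact inv_lt_one_of_one_lt₀ (mod_cast hp.one_lt)
  have hprod := (EulerProduct.summable_and_hasSum_factoredNumbers_prod_filter_prime_geometric hf
    n.primeFactors).2
  rw [filter_true_of_mem fun _ ↦ Nat.prime_of_mem_primeFactors] at hprod
  rwa [div_totient_eq_prod hn]

lemma sum_inv_le_div_totient {n : ℕ} (hn : n ≠ 0) {T : Finset ℕ}
    (hT : ∀ t ∈ T, t ∈ Nat.factoredNumbers n.primeFactors) :
    ∑ t ∈ T, (t : ℝ)⁻¹ ≤ n / φ n := by
  rw [← sum_subtype_of_mem (fun t : ℕ ↦ (t : ℝ)⁻¹) hT]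
  exact sum_le_hasSum _ (fun _ _ ↦ by positivity) (hasSum_inv_factoredNumbers hn)

/-- The largest squarefree divisor of `n` coprime to `d` (for `n, d ≠ 0`), used to sort the terms of
a harmonic sum. -/
def radicalAwayFrom (d n : ℕ) : ℕ := ∏ p ∈ n.primeFactors \ d.primeFactors, p

lemma prime_of_mem_primeFactors_sdiff {d n p : ℕ} (hp : p ∈ n.primeFactors \ d.primeFactors) :
    p.Prime :=
  Nat.prime_of_mem_primeFactors (mem_sdiff.mp hp).1

lemma radicalAwayFrom_dvd (d n : ℕ) : radicalAwayFrom d n ∣ n :=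
  (prod_dvd_prod_of_subset _ _ _ sdiff_subset).trans n.prod_primeFactors_dvd

lemma primeFactors_radicalAwayFrom (d n : ℕ) :
    (radicalAwayFrom d n).primeFactors = n.primeFactors \ d.primeFactors :=
  Nat.primeFactors_prod fun _ ↦ prime_of_mem_primeFactors_sdiff

lemma squarefree_radicalAwayFrom (d n : ℕ) : Squarefree (radicalAwayFrom d n) :=
  squarefree_prod_of_pairwise_isCoprime
    (fun _ hp _ hq hpq ↦ Nat.coprime_iff_isRelPrime.mp ((Nat.coprime_primes
      (prime_of_mem_primeFactors_sdiff hp) (prime_of_mem_primeFactors_sdiff hq)).mpr hpq))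
    fun _ hp ↦ (prime_of_mem_primeFactors_sdiff hp).prime.squarefree

lemma coprime_radicalAwayFrom {d : ℕ} (hd : d ≠ 0) (n : ℕ) : (radicalAwayFrom d n).Coprime d := by
  rw [← Nat.disjoint_primeFactors (squarefree_radicalAwayFrom d n).ne_zero hd,
    primeFactors_radicalAwayFrom]
  exact sdiff_disjoint

lemma div_radicalAwayFrom_mem_factoredNumbers {d n : ℕ} (hd : d ≠ 0) (hn : n ≠ 0) :
    n / radicalAwayFrom d n ∈ Nat.factoredNumbers (radicalAwayFrom d n * d).primeFactors := by
  refine Nat.mem_factoredNumbers_of_primeFactors_subset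
    (Nat.div_ne_zero_iff_of_dvd (radicalAwayFrom_dvd d n) |>.mpr
      ⟨hn, (squarefree_radicalAwayFrom d n).ne_zero⟩) ?_
  rw [Nat.primeFactors_mul (squarefree_radicalAwayFrom d n).ne_zero hd,
    primeFactors_radicalAwayFrom, sdiff_union_self_eq_union]
  exact (Nat.primeFactors_mono (Nat.div_dvd_of_dvd (radicalAwayFrom_dvd d n)) hn).trans
    subset_union_left

lemma sum_inv_radicalAwayFrom_eq_le {d q : ℕ} (hd : d ≠ 0) (hq : q ≠ 0) (hqd : q.Coprime d)
    {T : Finset ℕ} (hT : ∀ n ∈ T, n ≠ 0 ∧ radicalAwayFrom d n = q) :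
    ∑ n ∈ T, (n : ℝ)⁻¹ ≤ d / φ d * (φ q : ℝ)⁻¹ := by
  have hdvd : ∀ n ∈ T, q ∣ n := fun n hn ↦ (hT n hn).2 ▸ radicalAwayFrom_dvd d n
  have hinj : Set.InjOn (· / q) (T : Set ℕ) := fun m hm n hn h ↦
    (Nat.div_left_inj (hdvd m hm) (hdvd n hn)).mp h
  have hcofactor : ∀ t ∈ T.image (· / q), t ∈ Nat.factoredNumbers (q * d).primeFactors := by
    simp only [mem_image]
    rintro _ ⟨n, hn, rfl⟩
    obtain ⟨hn₀, rfl⟩ := hT n hn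
    exact div_radicalAwayFrom_mem_factoredNumbers hd hn₀
  have hq' : (q : ℝ) ≠ 0 := Nat.cast_ne_zero.mpr hq
  calc ∑ n ∈ T, (n : ℝ)⁻¹
      = (q : ℝ)⁻¹ * ∑ t ∈ T.image (· / q), (t : ℝ)⁻¹ := by
        rw [sum_image hinj, mul_sum]
        refine sum_congr rfl fun n hn ↦ ?_
        rw [Nat.cast_div (hdvd n hn) hq', inv_div, inv_mul_eq_div, div_div_cancel_left' hq']
    _ ≤ (q : ℝ)⁻¹ * ((q * d : ℕ) / φ (q * d)) := by
        gcongr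
        exact sum_inv_le_div_totient (mul_ne_zero hq hd) hcofactor
    _ = d / φ d * (φ q : ℝ)⁻¹ := by
        rw [Nat.totient_mul hqd]
        push_cast
        field_simp

lemma sum_inv_le_div_totient_mul_sum_inv_totient {d : ℕ} (hd : d ≠ 0) (Q : ℕ) :
    ∑ n ∈ Icc 1 Q, (n : ℝ)⁻¹ ≤
      d / φ d * ∑ q ∈ Icc 1 Q with Squarefree q ∧ q.Coprime d, (φ q : ℝ)⁻¹ := by
  have hmaps : ∀ n ∈ Icc 1 Q,
      radicalAwayFrom d n ∈ {q ∈ Icc 1 Q | Squarefree q ∧ q.Coprime d} := by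
    simp only [mem_filter, mem_Icc]
    exact fun n hn ↦ ⟨⟨Nat.pos_of_ne_zero (squarefree_radicalAwayFrom d n).ne_zero,
      (Nat.le_of_dvd hn.1 (radicalAwayFrom_dvd d n)).trans hn.2⟩,
      squarefree_radicalAwayFrom d n, coprime_radicalAwayFrom hd n⟩
  rw [← sum_fiberwise_of_maps_to hmaps, mul_sum]
  refine sum_le_sum fun q hq ↦ ?_
  obtain ⟨-, hsquarefree, hcoprime⟩ := mem_filter.mp hq
  refine sum_inv_radicalAwayFrom_eq_le hd hsquarefree.ne_zero hcoprime fun n hn ↦ ?_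
  obtain ⟨hn, hrad⟩ := mem_filter.mp hn
  exact ⟨Nat.one_le_iff_ne_zero.mp (mem_Icc.mp hn).1, hrad⟩

end TotientSums

section PrimeMultipliers

open Finset Real BoundingSieve
open scoped Nat

/-- The sum of `1 / k` over the `A < k ≤ B` for which `k * d + 1` is prime: up to the factor `d`,
the sum of the reciprocals of the primes `≡ 1 mod d` between `A * d` and `B * d`. -/
noncomputable def primeMultiplierSum (d : ℕ) (A B : ℝ) : ℝ :=
  ∑ k ∈ Ioc ⌊A⌋₊ ⌊B⌋₊ with (k * d + 1).Prime, (1 : ℝ) / k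

lemma primeMultiplierSum_add (d : ℕ) {A B C : ℝ} (hAB : A ≤ B) (hBC : B ≤ C) :
    primeMultiplierSum d A B + primeMultiplierSum d B C = primeMultiplierSum d A C := by
  have hA := Nat.floor_le_floor hAB
  have hB := Nat.floor_le_floor hBC
  rw [primeMultiplierSum, primeMultiplierSum, primeMultiplierSum, ← Ioc_union_Ioc_eq_Ioc hA hB,
    filter_union, sum_union (disjoint_filter_filter (Ioc_disjoint_Ioc_of_le le_rfl))]

lemma primeMultiplierSum_nonneg (d : ℕ) (A B : ℝ) : 0 ≤ primeMultiplierSum d A B :=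
  sum_nonneg fun _ _ ↦ by positivity

lemma primeMultiplierSum_mono_right (d : ℕ) {A B C : ℝ} (hAB : A ≤ B) (hBC : B ≤ C) :
    primeMultiplierSum d A B ≤ primeMultiplierSum d A C := by
  rw [← primeMultiplierSum_add d hAB hBC]
  exact le_add_of_nonneg_right (primeMultiplierSum_nonneg d B C)

lemma exists_forall_dvd_mul_add_one_iff {q d : ℕ} (hq : q ≠ 0) (hqd : q.Coprime d) :
    ∃ r : ℕ, ∀ k : ℕ, q ∣ k * d + 1 ↔ k ≡ r [MOD q] := by
  have : NeZero q := ⟨hq⟩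
  have hunit : (d : ZMod q) * (d : ZMod q)⁻¹ = 1 := ZMod.coe_mul_inv_eq_one d hqd.symm
  refine ⟨(-(d : ZMod q)⁻¹).val, fun k ↦ ?_⟩
  rw [← ZMod.natCast_eq_natCast_iff, ZMod.natCast_zmod_val, ← ZMod.natCast_eq_zero_iff]
  push_cast
  constructor <;> intro hk
  · linear_combination (d : ZMod q)⁻¹ * hk - k * hunit
  · linear_combination (d : ZMod q) * hk - hunit

/-- Selberg's sieve for the numbers `k * d + 1` with `A < k ≤ B`, weighted by `1 / k`, sifted by
the primes up to `Q` not dividing `d`, at level `Q ^ 2`. -/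
noncomputable def progressionSieve (d : ℕ) {Q : ℕ} (hQ : 1 ≤ Q) (A B : ℝ) : SelbergSieve where
  support := (Ioc ⌊A⌋₊ ⌊B⌋₊).image (· * d + 1)
  prodPrimes := ∏ p ∈ Nat.primesLE Q \ d.primeFactors, p
  prodPrimes_squarefree :=
    squarefree_prod_of_pairwise_isCoprime
      (fun _ hp _ hq hpq ↦ Nat.coprime_iff_isRelPrime.mp
        ((Nat.coprime_primes (Nat.mem_primesLE.mp (mem_sdiff.mp hp).1).2
          (Nat.mem_primesLE.mp (mem_sdiff.mp hq).1).2).mpr hpq))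
      fun _ hp ↦ (Nat.mem_primesLE.mp (mem_sdiff.mp hp).1).2.prime.squarefree
  weights n := 1 / ((n - 1) / d : ℕ)
  weights_nonneg _ := by positivity
  totalMass := log (B / A)
  nu := ⟨fun q ↦ (q : ℝ)⁻¹, by simp⟩
  nu_mult := ⟨by simp, fun {m n} _ ↦ by simp [mul_comm]⟩
  nu_pos_of_prime p hp _ := inv_pos.mpr (mod_cast hp.pos)
  nu_lt_one_of_prime p hp _ := inv_lt_one_of_one_lt₀ (mod_cast hp.one_lt)
  level := Q ^ 2
  one_le_level := one_le_pow₀ (mod_cast hQ)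

section

variable {d Q : ℕ} {hQ : 1 ≤ Q} {A B : ℝ}

lemma sum_support_progressionSieve (hd : d ≠ 0) (P : ℕ → Prop) [DecidablePred P] :
    (∑ n ∈ (progressionSieve d hQ A B).support,
      if P n then (progressionSieve d hQ A B).weights n else 0) =
      ∑ k ∈ Ioc ⌊A⌋₊ ⌊B⌋₊ with P (k * d + 1), (1 : ℝ) / k := by
  have hinj : Function.Injective (· * d + 1) := fun k l h ↦
    Nat.eq_of_mul_eq_mul_right (Nat.pos_of_ne_zero hd) (Nat.add_right_cancel h)
  simp only [progressionSieve, sum_image hinj.injOn, sum_filter, add_tsub_cancel_right,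
    Nat.mul_div_cancel _ (Nat.pos_of_ne_zero hd)]

variable (hQ A B) in
lemma primeFactors_prodPrimes_progressionSieve (d : ℕ) :
    (progressionSieve d hQ A B).prodPrimes.primeFactors = Nat.primesLE Q \ d.primeFactors :=
  Nat.primeFactors_prod (s := Nat.primesLE Q \ d.primeFactors)
    fun _ hp ↦ (Nat.mem_primesLE.mp (mem_sdiff.mp hp).1).2

lemma coprime_of_dvd_prodPrimes_progressionSieve (hd : d ≠ 0) {q : ℕ}
    (hq : q ∣ (progressionSieve d hQ A B).prodPrimes) : q.Coprime d := by
  refine Nat.Coprime.coprime_dvd_left hq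
    ((Nat.disjoint_primeFactors prodPrimes_ne_zero hd).mp ?_)
  rw [primeFactors_prodPrimes_progressionSieve]
  exact sdiff_disjoint

lemma selbergSupport_progressionSieve (hd : d ≠ 0) :
    selbergSupport (progressionSieve d hQ A B) =
      {q ∈ Icc 1 Q | Squarefree q ∧ q.Coprime d} := by
  ext q
  have hlevel : (q : ℝ) ^ 2 ≤ (progressionSieve d hQ A B).level ↔ q ≤ Q := by
    change (q : ℝ) ^ 2 ≤ (Q : ℝ) ^ 2 ↔ _
    rw [pow_le_pow_iff_left₀ (by positivity) (by positivity) two_ne_zero, Nat.cast_le]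
  simp only [selbergSupport, mem_filter, Nat.mem_divisors, hlevel, mem_Icc]
  constructor
  · rintro ⟨⟨hdvd, hne⟩, hqQ⟩
    exact ⟨⟨Nat.pos_of_dvd_of_pos hdvd (Nat.pos_of_ne_zero hne), hqQ⟩,
      squarefree_of_dvd_prodPrimes hdvd, coprime_of_dvd_prodPrimes_progressionSieve hd hdvd⟩
  · rintro ⟨⟨-, hqQ⟩, hsquarefree, hcoprime⟩
    refine ⟨⟨?_, prodPrimes_ne_zero⟩, hqQ⟩
    rw [← Nat.prod_primeFactors_of_squarefree hsquarefree]
    refine prod_dvd_prod_of_subset _ (Nat.primesLE Q \ d.primeFactors) _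
      fun p hp ↦ mem_sdiff.mpr ⟨?_, ?_⟩
    · exact Nat.mem_primesLE.mpr
        ⟨(Nat.le_of_mem_primeFactors hp).trans hqQ, Nat.prime_of_mem_primeFactors hp⟩
    · exact disjoint_left.mp hcoprime.disjoint_primeFactors hp

lemma selbergTerms_progressionSieve (q : ℕ) :
    (progressionSieve d hQ A B).selbergTerms q = (φ q : ℝ)⁻¹ := by
  rcases eq_or_ne q 0 with rfl | hq
  · simp
  have hnu (n : ℕ) : (progressionSieve d hQ A B).nu n = (n : ℝ)⁻¹ := rfl
  simp only [selbergTerms_apply, hnu, ← div_totient_eq_prod hq]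
  field_simp

lemma selbergMass_progressionSieve (hd : d ≠ 0) :
    selbergMass (progressionSieve d hQ A B) =
      ∑ q ∈ Icc 1 Q with Squarefree q ∧ q.Coprime d, (φ q : ℝ)⁻¹ := by
  simp only [selbergMass, selbergSupport_progressionSieve hd, selbergTerms_progressionSieve]

lemma abs_rem_progressionSieve_le (hd : d ≠ 0) (hA : 0 < A) (hAB : A ≤ B) {q : ℕ}
    (hq : q ∣ (progressionSieve d hQ A B).prodPrimes) :
    |(progressionSieve d hQ A B).rem q| ≤ 1 / A := by
  have hq₀ : q ≠ 0 := ne_zero_of_dvd_ne_zero prodPrimes_ne_zero hq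
  obtain ⟨r, hr⟩ := exists_forall_dvd_mul_add_one_iff hq₀
    (coprime_of_dvd_prodPrimes_progressionSieve hd hq)
  have hmult : (progressionSieve d hQ A B).multSum q =
      ∑ k ∈ Ioc ⌊A⌋₊ ⌊B⌋₊ with k ≡ r [MOD q], (1 : ℝ) / k := by
    simp only [multSum, sum_support_progressionSieve hd, hr]
  have hmain : (progressionSieve d hQ A B).nu q * (progressionSieve d hQ A B).totalMass =
      log (B / A) / q := inv_mul_eq_div _ _
  rw [rem, hmult, hmain]
  exact abs_sum_inv_modEq_sub_le (Nat.pos_of_ne_zero hq₀) r hA hAB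

variable (hQ) in
lemma primeMultiplierSum_le_siftedSum (hd : d ≠ 0) (hA : 0 ≤ A) (hQA : (Q : ℝ) ≤ A) :
    primeMultiplierSum d A B ≤ (progressionSieve d hQ A B).siftedSum := by
  rw [primeMultiplierSum, siftedSum, sum_support_progressionSieve hd]
  refine sum_le_sum_of_subset_of_nonneg ?_ fun _ _ _ ↦ by positivity
  simp only [subset_iff, mem_filter, mem_Ioc]
  rintro k ⟨hk, hprime⟩
  refine ⟨hk, Nat.coprime_comm.mp (hprime.coprime_iff_not_dvd.mpr fun hdvd ↦ ?_)⟩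
  have hmem := Nat.mem_primeFactors.mpr ⟨hprime, hdvd, prodPrimes_ne_zero⟩
  rw [primeFactors_prodPrimes_progressionSieve, mem_sdiff, Nat.mem_primesLE] at hmem
  have hQk : Q < k := mod_cast hQA.trans_lt ((Nat.floor_lt hA).mp hk.1)
  exact absurd (Nat.le_mul_of_pos_right k (Nat.pos_of_ne_zero hd)) (by lia)

end

lemma log_add_half_le_sum_inv {Q : ℕ} (hQ : 6 ≤ Q) :
    log (Q + 1) + 1 / 2 ≤ ∑ n ∈ Icc 1 Q, (n : ℝ)⁻¹ := by
  have hseq : 1 / 2 < eulerMascheroniSeq Q :=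
    one_half_lt_eulerMascheroniSeq_six.trans_le (strictMono_eulerMascheroniSeq.monotone hQ)
  have hharmonic : (harmonic Q : ℝ) = ∑ n ∈ Icc 1 Q, (n : ℝ)⁻¹ := by
    rw [harmonic_eq_sum_Icc]
    push_cast
    rfl
  rw [eulerMascheroniSeq, hharmonic] at hseq
  linarith

theorem primeMultiplierSum_le_selberg {d Q : ℕ} {A B : ℝ} (hd : d ≠ 0) (hQ : 6 ≤ Q)
    (hQA : (Q : ℝ) ≤ A) (hAB : A ≤ B) :
    primeMultiplierSum d A B ≤ d / φ d * (log (B / A) / (log (Q + 1) + 1 / 2) + Q ^ 2 / A) := by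
  have hQ₁ : 1 ≤ Q := by lia
  have hA : 0 < A := lt_of_lt_of_le (mod_cast hQ₁) hQA
  have hR : 1 ≤ (d : ℝ) / φ d := by simpa using div_totient_le_of_dvd (one_dvd d) hd
  have hmass : log (Q + 1) + 1 / 2 ≤ d / φ d * selbergMass (progressionSieve d hQ₁ A B) := by
    rw [selbergMass_progressionSieve hd]
    exact (log_add_half_le_sum_inv hQ).trans (sum_inv_le_div_totient_mul_sum_inv_totient hd Q)
  have hcard : #(selbergSupport (progressionSieve d hQ₁ A B)) ≤ Q := by
    rw [selbergSupport_progressionSieve hd]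
    simpa using card_filter_le (Icc 1 Q) fun q ↦ Squarefree q ∧ q.Coprime d
  have hlog : 0 ≤ log (B / A) := log_nonneg ((one_le_div hA).mpr hAB)
  have hmain : log (B / A) / selbergMass (progressionSieve d hQ₁ A B) ≤
      d / φ d * (log (B / A) / (log (Q + 1) + 1 / 2)) := by
    have hlogQ : 0 < log ((Q : ℝ) + 1) + 1 / 2 := by
      linarith [log_nonneg (show (1 : ℝ) ≤ Q + 1 by simp)]
    rw [mul_div_assoc', div_le_div_iff₀ (selbergMass_pos _) hlogQ]
    calc _ ≤ log (B / A) * (d / φ d * selbergMass (progressionSieve d hQ₁ A B)) := by gcongr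
      _ = _ := by ring
  have herror : 1 / A * (#(selbergSupport (progressionSieve d hQ₁ A B)) : ℝ) ^ 2 ≤
      d / φ d * (Q ^ 2 / A) := by
    calc _ ≤ 1 / A * (Q : ℝ) ^ 2 := by gcongr
      _ = 1 * (Q ^ 2 / A) := by ring
      _ ≤ d / φ d * (Q ^ 2 / A) := by gcongr
  calc primeMultiplierSum d A B
      ≤ (progressionSieve d hQ₁ A B).siftedSum := primeMultiplierSum_le_siftedSum hQ₁ hd hA.le hQA
    _ ≤ log (B / A) / selbergMass (progressionSieve d hQ₁ A B) +
          1 / A * (#(selbergSupport (progressionSieve d hQ₁ A B)) : ℝ) ^ 2 :=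
        siftedSum_le_totalMass_div_selbergMass fun _ ↦ abs_rem_progressionSieve_le hd hA hAB
    _ ≤ d / φ d * (log (B / A) / (log (Q + 1) + 1 / 2) + Q ^ 2 / A) := by
        rw [mul_add]
        exact add_le_add hmain herror

end PrimeMultipliers

section Wheel

open Finset Real
open scoped Nat

lemma sum_inv_coprime_le {M d : ℕ} (hM : 0 < M) {A B : ℝ} (hA : 0 < A) (hAB : A ≤ B) :
    ∑ k ∈ Ioc ⌊A⌋₊ ⌊B⌋₊ with (k * d + 1).Coprime M, (1 : ℝ) / k ≤
      #{r ∈ range M | (r * d + 1).Coprime M} * (log (B / A) / M + 1 / A) := by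
  have hcoprime (k : ℕ) : (k % M * d + 1).Coprime M ↔ (k * d + 1).Coprime M := by
    rw [Nat.coprime_iff_gcd_eq_one, Nat.coprime_iff_gcd_eq_one,
      (((Nat.mod_modEq k M).mul_right d).add_right 1).gcd_eq]
  have hmaps : ∀ k ∈ {k ∈ Ioc ⌊A⌋₊ ⌊B⌋₊ | (k * d + 1).Coprime M},
      k % M ∈ {r ∈ range M | (r * d + 1).Coprime M} := fun k hk ↦
    mem_filter.mpr ⟨mem_range.mpr (Nat.mod_lt k hM), (hcoprime k).mpr (mem_filter.mp hk).2⟩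
  rw [← sum_fiberwise_of_maps_to hmaps, ← nsmul_eq_mul]
  refine sum_le_card_nsmul _ _ _ fun r hr ↦ ?_
  have hmod : r % M = r := Nat.mod_eq_of_lt (mem_range.mp (mem_filter.mp hr).1)
  calc _ ≤ ∑ k ∈ Ioc ⌊A⌋₊ ⌊B⌋₊ with k ≡ r [MOD M], (1 : ℝ) / k := by
        refine sum_le_sum_of_subset_of_nonneg ?_ fun _ _ _ ↦ by positivity
        simp only [subset_iff, mem_filter]
        exact fun k ⟨⟨hk, _⟩, hkr⟩ ↦ ⟨hk, hkr.trans hmod.symm⟩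
    _ ≤ log (B / A) / M + 1 / A := by
        linarith [(abs_le.mp (abs_sum_inv_modEq_sub_le hM r hA hAB)).2]

/-- The proportion of the residues `r` mod `210 = 2 * 3 * 5 * 7` with `r * e + 1` coprime to `210`
is the product of `1 - 1 / p` over the primes `p ≤ 7` not dividing `e`. -/
lemma totient_gcd_mul_card_coprime_210 : ∀ e < 210,
    φ (e.gcd 210) * #{r ∈ range 210 | (r * e + 1).Coprime 210} ≤ 48 * e.gcd 210 := by
  decide +kernel

lemma totient_gcd_mul_sum_inv_coprime_210 : ∀ e < 210,
    φ (e.gcd 210) * ∑ k ∈ Ioc 0 403 with (k * e + 1).Coprime 210, (10 ^ 6 / k + 1) ≤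
      1793000 * e.gcd 210 := by
  decide +kernel

lemma coprime_mod_mul_add_one_iff (M d k : ℕ) :
    (k * (d % M) + 1).Coprime M ↔ (k * d + 1).Coprime M := by
  rw [Nat.coprime_iff_gcd_eq_one, Nat.coprime_iff_gcd_eq_one,
    (((Nat.mod_modEq d M).mul_left k).add_right 1).gcd_eq]

lemma coprime_210_of_prime {p : ℕ} (hp : p.Prime) (hp7 : 7 < p) : p.Coprime 210 := by
  have h210 : primorial 7 = 210 := by decide
  rw [← h210, hp.coprime_iff_not_dvd, hp.dvd_primorial_iff]
  exact hp7.not_ge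

lemma le_div_totient_mul {d M c n : ℕ} (hd : d ≠ 0) (h : φ (d.gcd M) * n ≤ c * d.gcd M) :
    (n : ℝ) ≤ d / φ d * c := by
  have hgcd : d.gcd M ≠ 0 := Nat.gcd_ne_zero_left hd
  have hφ : (0 : ℝ) < φ (d.gcd M) := mod_cast Nat.totient_pos.mpr (Nat.pos_of_ne_zero hgcd)
  calc (n : ℝ) ≤ (d.gcd M : ℝ) / φ (d.gcd M) * c := by
        rw [div_mul_eq_mul_div, le_div_iff₀' hφ, mul_comm (d.gcd M : ℝ)]
        exact_mod_cast h
    _ ≤ d / φ d * c := by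
        gcongr ?_ * _
        exact div_totient_le_of_dvd (Nat.gcd_dvd_left d M) hd

variable {d : ℕ}

lemma primeMultiplierSum_le_sum_coprime_210 (hd : 7 ≤ d) (A B : ℝ) :
    primeMultiplierSum d A B ≤
      ∑ k ∈ Ioc ⌊A⌋₊ ⌊B⌋₊ with (k * (d % 210) + 1).Coprime 210, (1 : ℝ) / k := by
  refine sum_le_sum_of_subset_of_nonneg ?_ fun _ _ _ ↦ by positivity
  simp only [subset_iff, mem_filter, mem_Ioc, coprime_mod_mul_add_one_iff]
  exact fun k ⟨hk, hprime⟩ ↦ ⟨hk, coprime_210_of_prime hprime (by nlinarith)⟩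

theorem primeMultiplierSum_le_wheel (hd : 7 ≤ d) {A B : ℝ} (hA : 0 < A) (hAB : A ≤ B) :
    primeMultiplierSum d A B ≤ d / φ d * (48 * (log (B / A) / 210 + 1 / A)) := by
  have hlog : 0 ≤ log (B / A) := log_nonneg ((one_le_div hA).mpr hAB)
  have hcard : (#{r ∈ range 210 | (r * (d % 210) + 1).Coprime 210} : ℝ) ≤ d / φ d * (48 : ℕ) := by
    refine le_div_totient_mul (M := 210) (by lia) ?_
    rw [← (Nat.mod_modEq d 210).gcd_eq]
    exact totient_gcd_mul_card_coprime_210 _ (Nat.mod_lt d (by norm_num))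
  calc primeMultiplierSum d A B
      ≤ #{r ∈ range 210 | (r * (d % 210) + 1).Coprime 210} *
          (log (B / A) / (210 : ℕ) + 1 / A) :=
        (primeMultiplierSum_le_sum_coprime_210 hd A B).trans
          (sum_inv_coprime_le (by norm_num) hA hAB)
    _ ≤ d / φ d * (48 : ℕ) * (log (B / A) / (210 : ℕ) + 1 / A) := by gcongr
    _ = d / φ d * (48 * (log (B / A) / 210 + 1 / A)) := by
        push_cast
        ring

lemma inv_le_div_add_one_div {N k : ℕ} (hN : 0 < N) (hk : 0 < k) :
    (1 : ℝ) / k ≤ ((N / k + 1 : ℕ) : ℝ) / N := by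
  rw [div_le_div_iff₀ (by positivity) (by positivity), one_mul, mul_comm]
  exact_mod_cast (Nat.lt_mul_div_succ N hk).le

lemma primeMultiplierSum_zero_403_le (hd : 7 ≤ d) :
    primeMultiplierSum d 0 403 ≤ d / φ d * 1.793 := by
  have hsum : ((∑ k ∈ Ioc 0 403 with (k * (d % 210) + 1).Coprime 210, (10 ^ 6 / k + 1) : ℕ) : ℝ) ≤
      d / φ d * (1793000 : ℕ) := by
    refine le_div_totient_mul (M := 210) (by lia) ?_
    rw [← (Nat.mod_modEq d 210).gcd_eq]
    exact totient_gcd_mul_sum_inv_coprime_210 _ (Nat.mod_lt d (by norm_num))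
  calc primeMultiplierSum d 0 403
      ≤ ∑ k ∈ Ioc 0 403 with (k * (d % 210) + 1).Coprime 210, (1 : ℝ) / k := by
        simpa using primeMultiplierSum_le_sum_coprime_210 hd 0 403
    _ ≤ ∑ k ∈ Ioc 0 403 with (k * (d % 210) + 1).Coprime 210,
          ((10 ^ 6 / k + 1 : ℕ) : ℝ) / (10 ^ 6 : ℕ) :=
        sum_le_sum fun k hk ↦ inv_le_div_add_one_div (by norm_num)
          (mem_Ioc.mp (mem_filter.mp hk).1).1
    _ ≤ d / φ d * 1.793 := by
        rw [← sum_div, ← Nat.cast_sum, div_le_iff₀ (by positivity)]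
        refine hsum.trans_eq ?_
        push_cast
        ring

end Wheel

section LogLogBound

open Finset Real
open scoped Nat

lemma log_ge_of_pos {c x : ℝ} (hc : 0 < c) (hx : 0 < x) : log c + 1 - c / x ≤ log x := by
  have h := one_sub_inv_le_log_of_pos (div_pos hx hc)
  rw [log_div hx.ne' hc.ne', inv_div] at h
  linarith

lemma exp_six_mem_Ioo : exp 6 ∈ Set.Ioo 403 404 := by
  have hexp : exp 6 = exp 1 ^ 6 := by rw [← exp_nat_mul]; norm_num
  rw [hexp]
  constructor
  · calc (403 : ℝ) < 2.7182818283 ^ 6 := by norm_num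
      _ < exp 1 ^ 6 := by gcongr; exact exp_one_gt_d9
  · calc exp 1 ^ 6 < (2.7182818286 : ℝ) ^ 6 := by gcongr; exact exp_one_lt_d9
      _ < 404 := by norm_num

variable {d : ℕ}

lemma primeMultiplierSum_zero_exp_six_le (hd : 7 ≤ d) :
    primeMultiplierSum d 0 (exp 6) ≤ d / φ d * 1.793 := by
  have hfloor : ⌊exp 6⌋₊ = 403 := by
    rw [Nat.floor_eq_iff (exp_pos 6).le]
    norm_num [exp_six_mem_Ioo.1.le, exp_six_mem_Ioo.2]
  have h403 : primeMultiplierSum d 0 (exp 6) = primeMultiplierSum d 0 403 := by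
    rw [primeMultiplierSum, primeMultiplierSum, hfloor, Nat.floor_ofNat]
  exact h403.trans_le (primeMultiplierSum_zero_403_le hd)

lemma primeMultiplierSum_exp_le_linear (hd : 7 ≤ d) {L : ℝ} (hL : 6 ≤ L) :
    primeMultiplierSum d 0 (exp L) ≤ d / φ d * (0.542 + 8 / 35 * L) := by
  have hle : exp 6 ≤ exp L := exp_le_exp.mpr hL
  have hinv : 1 / exp 6 ≤ 1 / 403 := by
    gcongr
    exact exp_six_mem_Ioo.1.le
  calc primeMultiplierSum d 0 (exp L)
      = primeMultiplierSum d 0 (exp 6) + primeMultiplierSum d (exp 6) (exp L) :=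
        (primeMultiplierSum_add d (exp_pos 6).le hle).symm
    _ ≤ d / φ d * 1.793 + d / φ d * (48 * (log (exp L / exp 6) / 210 + 1 / exp 6)) :=
        add_le_add (primeMultiplierSum_zero_exp_six_le hd)
          (primeMultiplierSum_le_wheel hd (exp_pos 6) hle)
    _ ≤ d / φ d * (0.542 + 8 / 35 * L) := by
        rw [← exp_sub, log_exp, ← mul_add]
        refine mul_le_mul_of_nonneg_left ?_ (by positivity)
        linarith

lemma linear_le_log_sqrt {L : ℝ} (h12 : 12 ≤ L) (h14 : L ≤ 14) :
    0.542 + 8 / 35 * L ≤ 4 * log (√L - 1.18) := by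
  set b := √L
  have hsq : b ^ 2 = L := sq_sqrt (by linarith)
  have hb₁ : 3.464 ≤ b := le_sqrt_of_sq_le (by norm_num; linarith)
  have hb₂ : b ≤ 3.742 := sqrt_le_iff.mpr ⟨by norm_num, by norm_num; linarith⟩
  have hc : 0 < b - 1.18 := by linarith
  have hlog : 0.8749 ≤ log 2.4 := by
    have hlog12 := le_log_one_add_of_nonneg (show (0 : ℝ) ≤ 0.2 by norm_num)
    have hmul : log 2.4 = log 2 + log (1 + 0.2) := by
      rw [← log_mul (by norm_num) (by norm_num)]
      norm_num
    norm_num at hlog12 hmul ⊢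
    linarith [log_two_gt_d9]
  have htangent := log_ge_of_pos (show (0 : ℝ) < 2.4 by norm_num) hc
  have hquot : 2.4 / (b - 1.18) ≤ 1.8749 - (0.542 + 8 / 35 * b ^ 2) / 4 := by
    rw [div_le_iff₀ hc]
    nlinarith [mul_nonneg (sub_nonneg.mpr hb₁) (sub_nonneg.mpr hb₂),
      mul_nonneg (mul_nonneg (sub_nonneg.mpr hb₁) (sub_nonneg.mpr hb₂)) hc.le]
  rw [hsq] at hquot
  linarith

lemma three_mul_le_exp_half {a : ℝ} (ha : 12 ≤ a) : 3 * a ≤ exp (a / 2) := by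
  calc 3 * a ≤ 403 * (a / 2 - 6 + 1) := by linarith
    _ ≤ exp 6 * exp (a / 2 - 6) :=
        mul_le_mul exp_six_mem_Ioo.1.le (add_one_le_exp _) (by linarith) (exp_pos 6).le
    _ = exp (a / 2) := by rw [← exp_add, add_sub_cancel]

lemma log_two_mul_exp_half_div {a : ℝ} (ha : 0 < a) :
    log (2 * exp (a / 2) / a) = a / 2 + log 2 - log a := by
  rw [log_div (by positivity) ha.ne', log_mul two_ne_zero (exp_pos _).ne', log_exp]
  ring

/-- Sifting up to `Q ≈ 2 * exp (a / 2) / a` balances the main term, of order `4 / a`, against the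
error `Q ^ 2 / exp a ≈ 4 / a ^ 2`. -/
lemma primeMultiplierSum_exp_exp_add_two_le (hd : d ≠ 0) {a : ℝ} (ha : 12 ≤ a) :
    primeMultiplierSum d (exp a) (exp (a + 2)) ≤
      d / φ d * (2 / (a / 2 + log 2 - log a + 1 / 2) + 4 / a ^ 2) := by
  have ha₀ : 0 < a := by linarith
  set v := 2 * exp (a / 2) / a with hv
  have hexp : exp a = exp (a / 2) ^ 2 := by rw [← exp_nat_mul]; push_cast; ring_nf
  have hv₆ : 6 ≤ v := by
    rw [hv, le_div_iff₀ ha₀]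
    linarith [three_mul_le_exp_half ha]
  have hfloor : (⌊v⌋₊ : ℝ) ≤ v := Nat.floor_le (by linarith)
  have hva : v ≤ exp a := by
    rw [hv, div_le_iff₀ ha₀, hexp]
    nlinarith [three_mul_le_exp_half ha]
  have hlogv : 0 ≤ log v := log_nonneg (by linarith)
  have hsieve := primeMultiplierSum_le_selberg hd (Nat.le_floor (mod_cast hv₆))
    (hfloor.trans hva) (exp_le_exp.mpr (show a ≤ a + 2 by linarith))
  rw [← exp_sub, log_exp, add_sub_cancel_left] at hsieve
  refine hsieve.trans ?_
  rw [← log_two_mul_exp_half_div ha₀, ← hv]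
  gcongr ?_ * (2 / (?_ + _) + ?_)
  · exact log_le_log (by linarith) (Nat.lt_floor_add_one v).le
  · calc (⌊v⌋₊ : ℝ) ^ 2 / exp a ≤ v ^ 2 / exp a := by gcongr
      _ = 4 / a ^ 2 := by
        rw [hexp, hv]
        field_simp
        norm_num

lemma sieve_increment_le_rational {b : ℝ} (hb : 3.46 ≤ b) :
    4 / (b ^ 2 - b + 0.84) + 4 / b ^ 4 ≤
      16 / ((2 * b + 1 / b) * (2 * b + 1 / b - 2.36)) := by
  have hb₀ : 0 < b := by linarith
  have hq : 0 < b ^ 2 - b + 0.84 := by nlinarith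
  have hr : 0 < 2 * b ^ 2 - 2.36 * b + 1 := by nlinarith
  have hright : 16 / ((2 * b + 1 / b) * (2 * b + 1 / b - 2.36)) =
      16 * b ^ 2 / ((2 * b ^ 2 + 1) * (2 * b ^ 2 - 2.36 * b + 1)) := by
    have hfactor : (2 * b + 1 / b) * (2 * b + 1 / b - 2.36) =
        (2 * b ^ 2 + 1) * (2 * b ^ 2 - 2.36 * b + 1) / b ^ 2 := by
      field_simp
      ring
    rw [hfactor, div_div_eq_mul_div]
  rw [hright, div_add_div _ _ hq.ne' (by positivity),
    div_le_div_iff₀ (by positivity) (by positivity)]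
  obtain ⟨t, ht, rfl⟩ : ∃ t, 0 ≤ t ∧ b = 3.46 + t := ⟨b - 3.46, by linarith, by ring⟩
  rw [← sub_nonneg]
  ring_nf
  positivity

lemma rational_le_log_sqrt_increment {a : ℝ} (ha : 12 ≤ a) :
    16 / ((2 * √a + 1 / √a) * (2 * √a + 1 / √a - 2.36)) ≤
      4 * log (√(a + 2) - 1.18) - 4 * log (√a - 1.18) := by
  set b := √a
  set c := √(a + 2)
  have hb₁ : 3.46 ≤ b := le_sqrt_of_sq_le (by norm_num; linarith)
  have hbc : b ≤ c := sqrt_le_sqrt (by linarith)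
  have hsq : (c - b) * (c + b) = 2 := by
    linear_combination sq_sqrt (show 0 ≤ a + 2 by linarith) - sq_sqrt (show 0 ≤ a by linarith)
  have hcb : c + b ≤ 2 * b + 1 / b := by
    have : c - b ≤ 1 / b := by
      rw [le_div_iff₀ (by linarith)]
      nlinarith
    linarith
  have hu : 0 < b - 1.18 := by linarith
  have hlog := le_log_one_add_of_nonneg (div_nonneg (sub_nonneg.mpr hbc) hu.le)
  have hratio : 1 + (c - b) / (b - 1.18) = (c - 1.18) / (b - 1.18) := by
    field_simp
    ring
  rw [hratio, log_div (by linarith) hu.ne'] at hlog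
  have hquot : 2 * ((c - b) / (b - 1.18)) / ((c - b) / (b - 1.18) + 2) =
      4 / ((c + b) * (c + b - 2.36)) := by
    have h₁ : 0 < c + b - 2.36 := by linarith
    have h₂ : (c - b) / (b - 1.18) + 2 = (c + b - 2.36) / (b - 1.18) := by
      field_simp
      ring
    have h₃ : 0 < c + b := by linarith
    rw [h₂]
    field_simp
    linear_combination 2 * hsq
  have hmono : 16 / ((2 * b + 1 / b) * (2 * b + 1 / b - 2.36)) ≤
      16 / ((c + b) * (c + b - 2.36)) := by
    gcongr
    · exact mul_pos (by linarith) (by linarith)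
    · linarith
  have hsplit : 16 / ((c + b) * (c + b - 2.36)) = 4 * (4 / ((c + b) * (c + b - 2.36))) := by ring
  linarith

lemma sieve_increment_le_log_sqrt_increment {a : ℝ} (ha : 12 ≤ a) :
    2 / (a / 2 + log 2 - log a + 1 / 2) + 4 / a ^ 2 ≤
      4 * log (√(a + 2) - 1.18) - 4 * log (√a - 1.18) := by
  set b := √a
  have hsq : a = b ^ 2 := (sq_sqrt (by linarith)).symm
  have hb₁ : 3.46 ≤ b := le_sqrt_of_sq_le (by norm_num; linarith)
  have hlog : log a ≤ 4 * log 2 - 2 + b / 2 := by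
    have htangent := log_le_sub_one_of_pos (show 0 < b / 4 by linarith)
    rw [log_div (by linarith) (by norm_num), show (4 : ℝ) = 2 ^ 2 by norm_num, log_pow] at htangent
    rw [hsq, log_pow]
    push_cast at htangent ⊢
    linarith
  have hden : (b ^ 2 - b + 0.84) / 2 ≤ a / 2 + log 2 - log a + 1 / 2 := by
    linarith [log_two_lt_d9]
  calc 2 / (a / 2 + log 2 - log a + 1 / 2) + 4 / a ^ 2
      ≤ 2 / ((b ^ 2 - b + 0.84) / 2) + 4 / a ^ 2 := by
        gcongr
        nlinarith
    _ = 4 / (b ^ 2 - b + 0.84) + 4 / b ^ 4 := by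
        rw [hsq, div_div_eq_mul_div]
        ring
    _ ≤ 16 / ((2 * b + 1 / b) * (2 * b + 1 / b - 2.36)) := sieve_increment_le_rational hb₁
    _ ≤ 4 * log (√(a + 2) - 1.18) - 4 * log (b - 1.18) := rational_le_log_sqrt_increment ha

/-- Induction on `L` in steps of `2` needs a bound sharper than `2 * log L`: the shift `1.18` makes
room for the lower-order terms of Selberg's sieve. -/
lemma primeMultiplierSum_exp_le_log_sqrt (hd : 7 ≤ d) {L : ℝ} (hL : 12 ≤ L) :
    primeMultiplierSum d 0 (exp L) ≤ d / φ d * (4 * log (√L - 1.18)) := by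
  obtain ⟨n, hn⟩ : ∃ n : ℕ, L ≤ 14 + 2 * n := by
    obtain ⟨n, hn⟩ := exists_nat_ge L
    exact ⟨n, by linarith [n.cast_nonneg (α := ℝ)]⟩
  induction n generalizing L with
  | zero =>
    grw [primeMultiplierSum_exp_le_linear hd (by linarith),
      linear_le_log_sqrt hL (by simpa using hn)]
  | succ n ih =>
    rcases le_or_gt L 14 with h14 | h14
    · grw [primeMultiplierSum_exp_le_linear hd (by linarith), linear_le_log_sqrt hL h14]
    obtain ⟨a, rfl⟩ : ∃ a, L = a + 2 := ⟨L - 2, by ring⟩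
    have ha : 12 ≤ a := by linarith
    push_cast at hn
    rw [← primeMultiplierSum_add d (exp_pos a).le (exp_le_exp.mpr (by linarith))]
    grw [ih ha (by linarith), primeMultiplierSum_exp_exp_add_two_le (by lia) ha,
      sieve_increment_le_log_sqrt_increment ha, ← mul_add, add_sub_cancel]

lemma linear_le_two_mul_log {L : ℝ} (h6 : 6 ≤ L) (h12 : L ≤ 12) :
    0.542 + 8 / 35 * L ≤ 2 * log L := by
  have htangent := log_ge_of_pos (show (0 : ℝ) < 8 by norm_num) (show 0 < L by linarith)
  have hlog8 : log 8 = 3 * log 2 := by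
    rw [show (8 : ℝ) = 2 ^ 3 by norm_num, log_pow]
    norm_num
  have hquot : 8 / L ≤ 8 / 6 := by gcongr
  linarith [log_two_gt_d9]

lemma four_mul_log_sqrt_sub_le {L : ℝ} (hL : 12 ≤ L) : 4 * log (√L - 1.18) ≤ 2 * log L := by
  have hsqrt : 3 ≤ √L := le_sqrt_of_sq_le (by linarith)
  have hlog : log (√L - 1.18) ≤ log (√L) := log_le_log (by linarith) (by linarith)
  rw [log_sqrt (by linarith)] at hlog
  linarith

lemma le_log_log_of_twelve_le {K : ℝ} (hK : 12 ≤ K) : 0.8965 ≤ log (log K) := by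
  have hlog12 : 2.48 ≤ log 12 := by
    have hsq : 2 * log 12 = 7 * log 2 + log (1 + 0.125) := by
      have h := Real.log_pow 12 2
      rw [show (12 : ℝ) ^ 2 = 2 ^ 7 * (1 + 0.125) by norm_num,
        log_mul (by norm_num) (by norm_num), log_pow] at h
      exact_mod_cast h.symm
    have htangent := le_log_one_add_of_nonneg (show (0 : ℝ) ≤ 0.125 by norm_num)
    norm_num at hsq htangent ⊢
    linarith [log_two_gt_d9]
  have hlogK : 2.48 ≤ log K := hlog12.trans (log_le_log (by norm_num) hK)
  have htangent := log_ge_of_pos (exp_pos 1) (show 0 < log K by linarith)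
  have hquot : exp 1 / log K ≤ 2.7182818286 / 2.48 := by
    gcongr
    exact exp_one_lt_d9.le
  rw [log_exp] at htangent
  norm_num at hquot ⊢
  linarith

theorem primeMultiplierSum_le_log_log (hd : 7 ≤ d) {K : ℝ} (hK : 12 ≤ K) :
    primeMultiplierSum d 0 K ≤ d / φ d * (2 * log (log K)) := by
  obtain ⟨L, rfl⟩ : ∃ L, K = exp L := ⟨log K, (exp_log (by linarith)).symm⟩
  have hloglog := le_log_log_of_twelve_le hK
  rw [log_exp] at hloglog ⊢
  rcases le_total L 6 with h6 | h6
  · calc primeMultiplierSum d 0 (exp L)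
        ≤ primeMultiplierSum d 0 (exp 6) :=
          primeMultiplierSum_mono_right d (exp_pos L).le (exp_le_exp.mpr h6)
      _ ≤ d / φ d * 1.793 := primeMultiplierSum_zero_exp_six_le hd
      _ ≤ d / φ d * (2 * log L) := by gcongr; linarith
  rcases le_total L 12 with h12 | h12
  · grw [primeMultiplierSum_exp_le_linear hd h6, linear_le_two_mul_log h6 h12]
  · grw [primeMultiplierSum_exp_le_log_sqrt hd h12, four_mul_log_sqrt_sub_le h12]

end LogLogBound

section PrimesInProgression

open Finset Real
open scoped Nat

lemma sum_inv_primes_le_primeMultiplierSum {d : ℕ} (hd : 0 < d) (K : ℝ) (S : Finset ℕ)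
    (hprime : ∀ p ∈ S, p.Prime) (hdvd : ∀ p ∈ S, d ∣ p - 1)
    (hle : ∀ p ∈ S, p ≤ d * ⌊K⌋₊ + 1) :
    ∑ p ∈ S, (1 : ℝ) / p ≤ 1 / d * primeMultiplierSum d 0 K := by
  have hsub : S ⊆ {k ∈ Ioc ⌊(0 : ℝ)⌋₊ ⌊K⌋₊ | (k * d + 1).Prime}.image (fun k ↦ k * d + 1) := by
    intro p hp
    obtain ⟨k, hk⟩ := hdvd p hp
    have hpk : k * d + 1 = p := by
      have := (hprime p hp).one_lt
      lia
    have hk₀ : k ≠ 0 := by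
      rintro rfl
      exact Nat.not_prime_one (by simpa [← hpk] using hprime p hp)
    have hkK : k ≤ ⌊K⌋₊ := Nat.le_of_mul_le_mul_left (by have := hle p hp; lia) hd
    refine mem_image.mpr ⟨k, mem_filter.mpr ⟨?_, hpk ▸ hprime p hp⟩, hpk⟩
    rw [mem_Ioc, Nat.floor_zero]
    exact ⟨hk₀.bot_lt, hkK⟩
  calc ∑ p ∈ S, (1 : ℝ) / p
      ≤ ∑ p ∈ {k ∈ Ioc ⌊(0 : ℝ)⌋₊ ⌊K⌋₊ | (k * d + 1).Prime}.image (fun k ↦ k * d + 1),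
          (1 : ℝ) / p :=
        sum_le_sum_of_subset_of_nonneg hsub fun _ _ _ ↦ by positivity
    _ = ∑ k ∈ Ioc ⌊(0 : ℝ)⌋₊ ⌊K⌋₊ with (k * d + 1).Prime, (1 : ℝ) / (k * d + 1 : ℕ) :=
        sum_image fun k _ l _ h ↦ Nat.eq_of_mul_eq_mul_right hd (Nat.succ_injective h)
    _ ≤ ∑ k ∈ Ioc ⌊(0 : ℝ)⌋₊ ⌊K⌋₊ with (k * d + 1).Prime, 1 / d * ((1 : ℝ) / k) := by
        refine sum_le_sum fun k hk ↦ ?_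
        have hk₀ : 0 < k := (Nat.zero_le _).trans_lt (mem_Ioc.mp (mem_filter.mp hk).1).1
        rw [one_div_mul_one_div]
        gcongr
        push_cast
        linarith
    _ = 1 / d * primeMultiplierSum d 0 K := by rw [primeMultiplierSum, mul_sum]

lemma card_mul_log_le_log {N M : ℕ} (hN : N ≠ 0) (hM : 0 < M) (S : Finset ℕ)
    (hS : ∀ p ∈ S, p.Prime ∧ p ∣ N ∧ M ≤ p) : #S * log M ≤ log N := by
  have hprod : ∏ p ∈ S, p ∣ N :=
    prod_primes_dvd N (fun p hp ↦ (hS p hp).1.prime) fun p hp ↦ (hS p hp).2.1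
  have hpow : M ^ #S ≤ N :=
    (pow_card_le_prod _ _ _ fun p hp ↦ (hS p hp).2.2).trans (Nat.le_of_dvd hN.bot_lt hprod)
  rw [← log_pow]
  exact log_le_log (by positivity) (mod_cast hpow)

/-- `N` has at most `log N / log (d + 1)` prime factors exceeding `d`, each contributing at most
`1 / (d * K)`. -/
lemma sum_inv_primes_le_of_lt {d N : ℕ} (hd : 0 < d) {K : ℝ} (hK : 0 < K) (hN : N ≠ 0)
    (hNK : log N ≤ K) (S : Finset ℕ) (hprime : ∀ p ∈ S, p.Prime ∧ p ∣ N)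
    (hdvd : ∀ p ∈ S, d ∣ p - 1) (hlt : ∀ p ∈ S, d * K < p) :
    ∑ p ∈ S, (1 : ℝ) / p ≤ 1 / (d * log (d + 1)) := by
  have hlog : 0 < log ((d : ℝ) + 1) := log_pos (by simpa using hd)
  have hcard : #S * log ((d : ℝ) + 1) ≤ K := by
    refine le_trans ?_ hNK
    rw [← Nat.cast_add_one]
    refine card_mul_log_le_log hN d.succ_pos S fun p hp ↦ ⟨(hprime p hp).1, (hprime p hp).2, ?_⟩
    have hp₁ := (hprime p hp).1.one_lt
    have := Nat.le_of_dvd (by lia) (hdvd p hp)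
    lia
  calc ∑ p ∈ S, (1 : ℝ) / p ≤ #S • (1 / (d * K)) :=
        sum_le_card_nsmul _ _ _ fun p hp ↦
          one_div_le_one_div_of_le (by positivity) (hlt p hp).le
    _ = #S * (1 / (d * K)) := nsmul_eq_mul _ _
    _ ≤ K / log (d + 1) * (1 / (d * K)) := by
        gcongr
        exact (le_div_iff₀ hlog).mpr hcard
    _ = 1 / (d * log (d + 1)) := by field_simp

theorem sum_inv_primes_modEq_one_le {d N : ℕ} (hd : 7 ≤ d) {K : ℝ} (hK : 12 ≤ K) (hN : N ≠ 0)
    (hNK : log N ≤ K) (S : Finset ℕ) (hprime : ∀ p ∈ S, p.Prime ∧ p ∣ N)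
    (hdvd : ∀ p ∈ S, d ∣ p - 1) :
    ∑ p ∈ S, (1 : ℝ) / p ≤ 2 * log (log K) / φ d + 1 / (d * log (d + 1)) := by
  have hsmall : ∑ p ∈ S with p ≤ d * ⌊K⌋₊ + 1, (1 : ℝ) / p ≤ 2 * log (log K) / φ d :=
    calc ∑ p ∈ S with p ≤ d * ⌊K⌋₊ + 1, (1 : ℝ) / p
        ≤ 1 / d * primeMultiplierSum d 0 K :=
          sum_inv_primes_le_primeMultiplierSum (by lia) K _
            (fun p hp ↦ (hprime p (mem_filter.mp hp).1).1)
            (fun p hp ↦ hdvd p (mem_filter.mp hp).1) fun p hp ↦ (mem_filter.mp hp).2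
      _ ≤ 1 / d * (d / φ d * (2 * log (log K))) := by
          gcongr
          exact primeMultiplierSum_le_log_log hd hK
      _ = 2 * log (log K) / φ d := by field_simp
  have hlarge : ∑ p ∈ S with ¬ p ≤ d * ⌊K⌋₊ + 1, (1 : ℝ) / p ≤ 1 / (d * log (d + 1)) := by
    refine sum_inv_primes_le_of_lt (by lia) (by linarith) hN hNK _
      (fun p hp ↦ hprime p (mem_filter.mp hp).1) (fun p hp ↦ hdvd p (mem_filter.mp hp).1) ?_
    intro p hp
    obtain ⟨hpS, hpK⟩ := mem_filter.mp hp
    obtain ⟨k, hk⟩ := hdvd p hpS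
    have hkK : ⌊K⌋₊ < k := Nat.lt_of_mul_lt_mul_left (a := d) (by lia)
    calc d * K < d * k := by gcongr; exact (Nat.floor_lt (by linarith)).mp hkK
      _ = ((p - 1 : ℕ) : ℝ) := by rw [hk, Nat.cast_mul]
      _ ≤ p := mod_cast p.sub_le 1
  rw [← sum_filter_add_sum_filter_not S (· ≤ d * ⌊K⌋₊ + 1)]
  exact add_le_add hsmall hlarge

end PrimesInProgression

section Ellp

variable {a b p : ℕ} [hp : Fact p.Prime]

lemma dvd_pow_sub_pow_iff (hba : b ≤ a) (hb : ¬ p ∣ b) (l : ℕ) :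
    p ∣ a ^ l - b ^ l ↔ ((a : ZMod p) / (b : ZMod p)) ^ l = 1 := by
  have hb₀ : (b : ZMod p) ≠ 0 := by rwa [Ne, ZMod.natCast_eq_zero_iff]
  rw [← ZMod.natCast_eq_zero_iff, Nat.cast_sub (Nat.pow_le_pow_left hba l), sub_eq_zero, div_pow,
    div_eq_one_iff_eq (pow_ne_zero _ hb₀), Nat.cast_pow, Nat.cast_pow]

lemma natCast_div_natCast_pow_sub_one (hab : ¬ p ∣ a * b) :
    ((a : ZMod p) / (b : ZMod p)) ^ (p - 1) = 1 := by
  apply ZMod.pow_card_sub_one_eq_one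
  rwa [Ne, div_eq_zero_iff, ZMod.natCast_eq_zero_iff, ZMod.natCast_eq_zero_iff, ← hp.out.dvd_mul]

lemma ellp_eq_orderOf (hba : b ≤ a) (hab : ¬ p ∣ a * b) :
    ellp a b p = orderOf ((a : ZMod p) / (b : ZMod p)) := by
  have hb : ¬ p ∣ b := fun h ↦ hab (h.mul_left a)
  have hfinite : IsOfFinOrder ((a : ZMod p) / (b : ZMod p)) :=
    isOfFinOrder_iff_pow_eq_one.mpr
      ⟨p - 1, Nat.sub_pos_of_lt hp.out.one_lt, natCast_div_natCast_pow_sub_one hab⟩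
  have hleast : IsLeast {l : ℕ | 0 < l ∧ p ∣ a ^ l - b ^ l}
      (orderOf ((a : ZMod p) / (b : ZMod p))) :=
    ⟨⟨hfinite.orderOf_pos, (dvd_pow_sub_pow_iff hba hb _).mpr (pow_orderOf_eq_one _)⟩,
      fun l hl ↦ orderOf_le_of_pow_eq_one hl.1 ((dvd_pow_sub_pow_iff hba hb l).mp hl.2)⟩
  exact hleast.csInf_eq

lemma ellp_dvd_sub_one (hba : b ≤ a) (hab : ¬ p ∣ a * b) : ellp a b p ∣ p - 1 := by
  rw [ellp_eq_orderOf hba hab]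
  exact orderOf_dvd_of_pow_eq_one (natCast_div_natCast_pow_sub_one hab)

lemma dvd_pow_ellp_sub_pow_ellp (hba : b ≤ a) (hab : ¬ p ∣ a * b) :
    p ∣ a ^ ellp a b p - b ^ ellp a b p := by
  have hb : ¬ p ∣ b := fun h ↦ hab (h.mul_left a)
  rw [ellp_eq_orderOf hba hab, dvd_pow_sub_pow_iff hba hb]
  exact pow_orderOf_eq_one _

end Ellp

section MainTheorem

open Real
open scoped Nat

/-- The concavity of `log` at `log d`, applied to `log (d * log a) = log d + log (log a)`. -/
lemma log_log_mul_log_le {a d : ℝ} (ha : 1 < a) (hd : 1 < d) (h : 1 < d * log a) :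
    log (log (d * log a)) ≤ log (log d) + log (log a) / log d := by
  have hlogd : 0 < log d := log_pos hd
  have hlogK : 0 < log (d * log a) := log_pos h
  have htangent := log_le_sub_one_of_pos (div_pos hlogK hlogd)
  have hratio : log (d * log a) / log d = 1 + log (log a) / log d := by
    rw [log_mul (by linarith) (log_pos ha).ne', add_div, div_self hlogd.ne']
  rw [log_div hlogK.ne' hlogd.ne', hratio] at htangent
  linarith

theorem sum_inv_primes_ellp_eq_le {a b d : ℕ} (hb : 0 < b) (hba : b < a) (hd : 18 ≤ d)
    (S : Finset ℕ) (hS : ∀ p ∈ S, p.Prime ∧ ¬ p ∣ a * b ∧ ellp a b p = d) :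
    ∑ p ∈ S, (1 : ℝ) / p ≤
      1 / (d * log (d + 1)) + 2 * log (log d) / φ d + 2 * log (log a) / (φ d * log d) := by
  have ha : (2 : ℝ) ≤ a := mod_cast (by lia : 2 ≤ a)
  have hd' : (18 : ℝ) ≤ d := mod_cast hd
  have hK : 12 ≤ d * log a := by
    nlinarith [log_two_gt_d9, log_le_log two_pos ha]
  have hN : log ((a ^ d - b ^ d : ℕ) : ℝ) ≤ d * log a := by
    rw [← log_pow]
    exact log_le_log (mod_cast Nat.sub_pos_of_lt (Nat.pow_lt_pow_left hba (by lia)))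
      (mod_cast Nat.sub_le _ _)
  have hprime : ∀ p ∈ S, p.Prime ∧ p ∣ a ^ d - b ^ d := fun p hp ↦ by
    obtain ⟨hpp, hab, rfl⟩ := hS p hp
    have := Fact.mk hpp
    exact ⟨hpp, dvd_pow_ellp_sub_pow_ellp hba.le hab⟩
  have hdvd : ∀ p ∈ S, d ∣ p - 1 := fun p hp ↦ by
    obtain ⟨hpp, hab, rfl⟩ := hS p hp
    have := Fact.mk hpp
    exact ellp_dvd_sub_one hba.le hab
  have hsum := sum_inv_primes_modEq_one_le (by lia) hK
    (Nat.sub_pos_of_lt (Nat.pow_lt_pow_left hba (by lia))).ne' hN S hprime hdvd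
  have hloglog := log_log_mul_log_le (by linarith) (by linarith) (by linarith : 1 < d * log a)
  calc ∑ p ∈ S, (1 : ℝ) / p
      ≤ 2 * log (log (d * log a)) / φ d + 1 / (d * log (d + 1)) := hsum
    _ ≤ 2 * (log (log d) + log (log a) / log d) / φ d + 1 / (d * log (d + 1)) := by gcongr
    _ = _ := by ring

theorem sum_reciprocal_primes_bound_general {x y d : ℕ} (hy : 0 < y) (hxy : y < x) (hd : 18 ≤ d)
    (S : Finset ℕ) (hS : ∀ p ∈ S, p.Prime ∧ ¬ p ∣ x / x.gcd y * (y / x.gcd y) ∧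
      ellp (x / x.gcd y) (y / x.gcd y) p = d) :
    ∑ p ∈ S, (1 : ℝ) / p ≤
      1 / (d * log (d + 1)) + 2 * log (log d) / φ d + 2 * log (log x) / (φ d * log d) := by
  have hlt : y / x.gcd y < x / x.gcd y := Nat.div_lt_div_of_lt_of_dvd (x.gcd_dvd_left y) hxy
  have hpos : 0 < y / x.gcd y := Nat.div_pos (Nat.gcd_le_right x hy) (Nat.gcd_pos_of_pos_right x hy)
  have hle : x / x.gcd y ≤ x := Nat.div_le_self _ _
  have hlog : 0 < log (x / x.gcd y : ℕ) := log_pos (mod_cast (by lia : 1 < x / x.gcd y))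
  have hlogd : 0 < log d := log_pos (mod_cast (by lia : 1 < d))
  grw [sum_inv_primes_ellp_eq_le hpos hlt hd S hS]
  gcongr
  exact mod_cast hpos.trans hlt

end MainTheorem

theorem sum_reciprocal_primes_bound (x y z m n : ℕ) (hx : 0 < x) (hy : 0 < y) (hz : 0 < z)
    (hm : 0 < m) (hn : 0 < n) (hxy : y < x) (hzxy : z ≤ x - y)
    (hgcd : Nat.gcd m n = 1) (hmn : n < m)
    (heq : Nat.totient (z * ((x ^ m - y ^ m) / (x - y))) =
      z * ((x ^ n - y ^ n) / (x - y)))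
    (d₁ x₁ y₁ : ℕ) (hd₁ : d₁ = Nat.gcd x y) (hx₁ : x₁ = x / d₁) (hy₁ : y₁ = y / d₁)
    (d : ℕ) (hd : d ∣ m) (hd40 : 40 ≤ d) :
    ∑ p ∈ (Finset.range (x₁ ^ d - y₁ ^ d + 1)).filter
        (fun p => p.Prime ∧ Odd p ∧ ¬ p ∣ x₁ * y₁ ∧ ellp x₁ y₁ p = d),
      (1 : ℝ) / p <
      1 / (4 * d) + 1 / (d * Real.log (d + 1)) +
        2 * Real.log (Real.log d) / (Nat.totient d) +
        2 * Real.log (Real.log x) / (Nat.totient d * Real.log d) := by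
  subst hx₁ hy₁ hd₁
  have hslack : (0 : ℝ) < 1 / (4 * d) := by positivity
  refine (sum_reciprocal_primes_bound_general hy hxy (by lia : 18 ≤ d) _ fun p hp ↦ ?_).trans_lt
    (by linarith)
  obtain ⟨-, hprime, -, hndvd, hord⟩ := Finset.mem_filter.mp hp
  exact ⟨hprime, hndvd, hord⟩
end

section
/- For all real numbers x₁, x₂ with x₁ ≥ 78 and x₂ ≥ 78, one has log log(x₁·x₂) ≤ (log log x₁)·(log log x₂); that is, the function log log is sub-multiplicative on [78, ∞). -/
/-!
Put `a = log x₁` and `b = log x₂`, say with `a ≤ b`. Then `log (a + b) ≤ log 2 + log b`, and this is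
at most `log a * log b` as soon as `log 2 ≤ (log a - 1) * log b`, for which a common lower bound on
`a` and `b` suffices. For `a = b` this sufficient condition is also necessary, so the condition on
the threshold `x₀` says precisely that the inequality holds at `(x₀, x₀)`. This is the case for
`x₀ = 78` but not for `x₀ = 77`.
-/

open Real

lemma log_add_le_log_two_add_log {a b : ℝ} (hab : a ≤ b) (hpos : 0 < a + b) :
    log (a + b) ≤ log 2 + log b := by
  rw [← log_mul two_ne_zero (by linarith)]
  exact log_le_log hpos (by linarith)

lemma log_add_le_log_mul_log {a b c : ℝ} (hc : 1 ≤ c) (hlog : log 2 ≤ (log c - 1) * log c)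
    (ha : c ≤ a) (hb : c ≤ b) : log (a + b) ≤ log a * log b := by
  wlog hab : a ≤ b generalizing a b
  · rw [add_comm, mul_comm]
    exact this hb ha (le_of_not_ge hab)
  have log_c_nonneg : 0 ≤ log c := log_nonneg hc
  have one_lt_log_c : 1 < log c :=
    sub_pos.1 (pos_of_mul_pos_left ((log_pos one_lt_two).trans_le hlog) log_c_nonneg)
  have log_c_le_log_a : log c ≤ log a := log_le_log (by linarith) ha
  have log_c_le_log_b : log c ≤ log b := log_le_log (by linarith) hb
  calc log (a + b) ≤ log 2 + log b := log_add_le_log_two_add_log hab (by linarith)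
    _ ≤ (log c - 1) * log c + log b := by gcongr
    _ ≤ (log a - 1) * log b + log b := by gcongr; linarith
    _ = log a * log b := by ring

theorem loglog_submultiplicative_general {x₀ x₁ x₂ : ℝ} (h₀ : exp 1 ≤ x₀)
    (hlog : log 2 ≤ (log (log x₀) - 1) * log (log x₀)) (h₁ : x₀ ≤ x₁) (h₂ : x₀ ≤ x₂) :
    log (log (x₁ * x₂)) ≤ log (log x₁) * log (log x₂) := by
  have x₀_pos : 0 < x₀ := (exp_pos 1).trans_le h₀
  rw [log_mul (x₀_pos.trans_le h₁).ne' (x₀_pos.trans_le h₂).ne']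
  exact log_add_le_log_mul_log ((le_log_iff_exp_le x₀_pos).2 h₀) hlog
    (log_le_log x₀_pos h₁) (log_le_log x₀_pos h₂)

lemma mul_log_two_add_le_log_two_pow_mul (n : ℕ) {t : ℝ} (ht : 0 ≤ t) :
    n * log 2 + 2 * t / (t + 2) ≤ log (2 ^ n * (1 + t)) := by
  rw [log_mul (by positivity) (by positivity), log_pow]
  gcongr
  exact le_log_one_add_of_nonneg ht

lemma log_seventyEight_gt : 4.356 < log 78 :=
  calc 4.356 < (6 : ℕ) * log 2 + 2 * (7 / 32) / (7 / 32 + 2) := by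
        push_cast
        linarith [log_two_gt_d9]
    _ ≤ log (2 ^ 6 * (1 + 7 / 32)) := mul_log_two_add_le_log_two_pow_mul 6 (by norm_num)
    _ = log 78 := by norm_num

-- The margin is thin: `c * (c - 1) = log 2` at `c ≈ 1.47116`, while `log (log 78) ≈ 1.47172`.
lemma log_log_seventyEight_gt : 1.4714 < log (log 78) :=
  calc 1.4714 < (2 : ℕ) * log 2 + 2 * 0.089 / (0.089 + 2) := by
        push_cast
        linarith [log_two_gt_d9]
    _ ≤ log (2 ^ 2 * (1 + 0.089)) := mul_log_two_add_le_log_two_pow_mul 2 (by norm_num)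
    _ = log 4.356 := by norm_num
    _ ≤ log (log 78) := log_le_log (by norm_num) log_seventyEight_gt.le

lemma log_two_le_log_log_seventyEight_sub_one_mul : log 2 ≤ (log (log 78) - 1) * log (log 78) :=
  calc log 2 ≤ (1.4714 - 1) * 1.4714 := by linarith [log_two_lt_d9]
    _ ≤ (log (log 78) - 1) * log (log 78) := by gcongr <;> linarith [log_log_seventyEight_gt]

theorem loglog_submultiplicative (x₁ x₂ : ℝ) (h1 : 78 ≤ x₁) (h2 : 78 ≤ x₂) :
    Real.log (Real.log (x₁ * x₂)) ≤
      Real.log (Real.log x₁) * Real.log (Real.log x₂) :=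
  loglog_submultiplicative_general (by linarith [exp_one_lt_three])
    log_two_le_log_log_seventyEight_sub_one_mul h1 h2
end
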